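/- Let H > 0, let Ω ⊆ ℝ² be an open connected set, and let (u_n) be a sequence of solutions of (CMC) on Ω. If P ∈ Ω does not belong to the convergence domain B(u_n), then there exists a unit vector N ∈ ℝ² such that, with z₀ = P + N/(2H), the connected component C of {Q : |Q − z₀| = 1/(2H)} ∩ Ω containing P is a divergence line of (u_n). In particular, the complement Ω \ B(u_n) is a union of arcs of circles of radius 1/(2H). -/

import Mathlib

/-!
Write `W = √(1 + |∇u|²)` and `X = ∇u / W`, so that the equation reads `div X = 2H` and the
horizontal part of the upward normal is `-X`. Two estimates hold uniformly in the solution `u`. Both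
come from one system of coordinates.

**Coordinates.** With `a = 1 + 2H (u - u(P))`, the equation says that the rows of
`m = (a + 1/W) I + ∇u ⊗ ∇u / W` are closed, so `m` is the Jacobian of a map `T`. Integrating
`x' = m(x)⁻¹ ζ` from `P` inverts `T` on a disc whose radius depends only on `H` and on the distance
from `P` to the boundary. In this chart the components of `∇u`, paired with those of
`Y = X - 2H (x - P)` turned by a right angle, are quasi-conformal pairs with weight `W`.

**Modulus of continuity.** In logarithmic polar coordinates `(s, θ)`, the integral `∮ f dG` has
derivative `∮ {f, G}` in `s`, which dominates the square of `∮ |∇f| / W` and hence that of `∮ f dG`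
itself. By a Riccati comparison, `∮ |∇f| / W` is small on some circle of radius bounded below, as in
the Courant–Lebesgue lemma. A maximum principle carries the oscillation bound inside: near the
centre of the chart, `∇u` oscillates by at most `ε W(P)` and `Y` by at most `ε / W(P)`.

**Two uniform estimates.** First, `W(Q) ≤ m` implies `W ≤ 2m` on a ball about `Q` of controlled
radius. Secondly, if `W(P)` is large, a curve of controlled length passes through `P`, almost
orthogonal to `∇u(P)`, on which `W ≥ W(P) / 2` and `X - 2H (x - P)` is within `O(1 / W(P))` of
`X(P)`. Since `|X|² = 1 - 1/W²`, this curve, the sheet through `P`, is close to the circle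
`|X(P) + 2H (x - P)| = 1`.

**Propagation.** Let `W(P)` be large, let `E` be a unit vector close to `X(P)`, and let `Q` be a
point of the circle `|E + 2H (x - P)| = 1` near `P`. Then `W(Q)` is large, because the sheet through
`P`, where the graph is steep, passes near `Q`. If `X(Q)` were at distance exactly `δ` from
`E + 2H (Q - P)`, the sheets through `P` and `Q` would cross, and the two expressions of `X` at the
crossing would give `X(Q) ≈ E + 2H (Q - P)`. By the intermediate value theorem along the arc from
`P` to `Q`, convergence of `X` to `E` at `P` thus entails convergence to `E + 2H (Q - P)` at `Q`.
Finally, `X(P)` converges to a unit vector along a subsequence, and the points of the component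
where convergence holds form a relatively clopen set.
-/

open Real MeasureTheory Filter Set

noncomputable section

/-- Euclidean norm on `ℝ × ℝ`. -/
def enorm2 (p : ℝ × ℝ) : ℝ := Real.sqrt (p.1 ^ 2 + p.2 ^ 2)

/-- Partial derivative in the `x` direction. -/
def pdx (u : ℝ × ℝ → ℝ) (p : ℝ × ℝ) : ℝ := fderiv ℝ u p (1, 0)

/-- Partial derivative in the `y` direction. -/
def pdy (u : ℝ × ℝ → ℝ) (p : ℝ × ℝ) : ℝ := fderiv ℝ u p (0, 1)

/-- The area element `W_u = √(1 + |∇u|²)`. -/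
def Wgraph (u : ℝ × ℝ → ℝ) (p : ℝ × ℝ) : ℝ :=
  Real.sqrt (1 + (pdx u p) ^ 2 + (pdy u p) ^ 2)

/-- Upward unit normal of the graph of `u`. -/
def normalVec (u : ℝ × ℝ → ℝ) (p : ℝ × ℝ) : ℝ × ℝ × ℝ :=
  (-pdx u p / Wgraph u p, -pdy u p / Wgraph u p, 1 / Wgraph u p)

/-- `u` is a (C²) solution of the constant mean curvature `H` equation on `Ω`. -/
def IsCMCSolution (H : ℝ) (Ω : Set (ℝ × ℝ)) (u : ℝ × ℝ → ℝ) : Prop :=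
  ContDiffOn ℝ 2 u Ω ∧ ∀ p ∈ Ω,
    (1 + (pdy u p) ^ 2) * pdx (fun q => pdx u q) p
      - 2 * (pdx u p) * (pdy u p) * pdy (fun q => pdx u q) p
      + (1 + (pdx u p) ^ 2) * pdy (fun q => pdy u q) p
    = 2 * H * (1 + (pdx u p) ^ 2 + (pdy u p) ^ 2) ^ ((3 : ℝ) / 2)

/-- `C` is a divergence line of the sequence `u` on `Ω`. -/
def IsDivergenceLine (H : ℝ) (Ω : Set (ℝ × ℝ)) (u : ℕ → ℝ × ℝ → ℝ)
    (C : Set (ℝ × ℝ)) : Prop :=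
  ∃ z₁ : ℝ × ℝ, C ⊆ Ω ∧ (∀ q ∈ C, enorm2 (q - z₁) = 1 / (2 * H)) ∧
    IsConnected C ∧ C.Nontrivial ∧
    ∃ φ : ℕ → ℕ, StrictMono φ ∧ ∀ Q ∈ C,
      Tendsto (fun n => normalVec (u (φ n)) Q) atTop
        (nhds (2 * H * (z₁.1 - Q.1), 2 * H * (z₁.2 - Q.2), 0))

/-! ### Partial derivatives in the plane -/

/-- The linear form `(x, y) ↦ a x + b y`, used to write differentials in coordinates. -/
def linForm (a b : ℝ) : ℝ × ℝ →L[ℝ] ℝ :=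
  a • ContinuousLinearMap.fst ℝ ℝ ℝ + b • ContinuousLinearMap.snd ℝ ℝ ℝ

@[simp] lemma linForm_apply (a b : ℝ) (v : ℝ × ℝ) : linForm a b v = a * v.1 + b * v.2 := by
  simp [linForm]

/-- `f` is differentiable at `x` with gradient `(a, b)`. -/
abbrev HasGrad (f : ℝ × ℝ → ℝ) (a b : ℝ) (x : ℝ × ℝ) : Prop := HasFDerivAt f (linForm a b) x

section HasGrad

variable {f g : ℝ × ℝ → ℝ} {a b c d : ℝ} {x : ℝ × ℝ}

lemma hasGrad_of_differentiableAt (h : DifferentiableAt ℝ f x) :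
    HasGrad f (pdx f x) (pdy f x) x :=
  h.hasFDerivAt.congr_fderiv (by ext <;> simp [pdx, pdy])

lemma HasGrad.pdx_eq (h : HasGrad f a b x) : pdx f x = a := by simp [pdx, h.fderiv]

lemma HasGrad.pdy_eq (h : HasGrad f a b x) : pdy f x = b := by simp [pdy, h.fderiv]

lemma HasGrad.congr_grad {a' b' : ℝ} (h : HasGrad f a b x) (ha : a = a') (hb : b = b') :
    HasGrad f a' b' x := ha ▸ hb ▸ h

lemma hasGrad_const (k : ℝ) (x : ℝ × ℝ) : HasGrad (fun _ => k) 0 0 x :=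
  (hasFDerivAt_const k x).congr_fderiv (by ext <;> simp)

lemma hasGrad_fst (x : ℝ × ℝ) : HasGrad (fun y => y.1) 1 0 x :=
  (hasFDerivAt_fst (𝕜 := ℝ) (p := x)).congr_fderiv (by ext <;> simp)

lemma hasGrad_snd (x : ℝ × ℝ) : HasGrad (fun y => y.2) 0 1 x :=
  (hasFDerivAt_snd (𝕜 := ℝ) (p := x)).congr_fderiv (by ext <;> simp)

lemma HasGrad.add (hf : HasGrad f a b x) (hg : HasGrad g c d x) :
    HasGrad (fun y => f y + g y) (a + c) (b + d) x :=
  (HasFDerivAt.add hf hg).congr_fderiv (by ext <;> simp)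

lemma HasGrad.sub (hf : HasGrad f a b x) (hg : HasGrad g c d x) :
    HasGrad (fun y => f y - g y) (a - c) (b - d) x :=
  (HasFDerivAt.sub hf hg).congr_fderiv (by ext <;> simp)

lemma HasGrad.const_mul (k : ℝ) (hf : HasGrad f a b x) :
    HasGrad (fun y => k * f y) (k * a) (k * b) x :=
  (HasFDerivAt.const_mul hf k).congr_fderiv (by ext <;> simp)

lemma HasGrad.mul (hf : HasGrad f a b x) (hg : HasGrad g c d x) :
    HasGrad (fun y => f y * g y) (f x * c + g x * a) (f x * d + g x * b) x :=
  (HasFDerivAt.mul hf hg).congr_fderiv (by ext <;> simp)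

lemma HasGrad.div (hf : HasGrad f a b x) (hg : HasGrad g c d x) (h0 : g x ≠ 0) :
    HasGrad (fun y => f y / g y)
      ((a * g x - f x * c) / g x ^ 2) ((b * g x - f x * d) / g x ^ 2) x := by
  simp only [div_eq_mul_inv]
  exact (HasFDerivAt.mul hf ((hasDerivAt_inv h0).comp_hasFDerivAt x hg)).congr_fderiv
    (by ext <;> simp <;> field)

lemma HasGrad.sqrt (hf : HasGrad f a b x) (h0 : f x ≠ 0) :
    HasGrad (fun y => √(f y)) (a / (2 * √(f x))) (b / (2 * √(f x))) x :=
  (HasFDerivAt.sqrt hf h0).congr_fderiv (by ext <;> simp <;> ring)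

lemma HasGrad.comp {S : ℝ × ℝ → ℝ × ℝ} {L : ℝ × ℝ →L[ℝ] ℝ × ℝ} (hf : HasGrad f a b (S x))
    (hS : HasFDerivAt S L x) :
    HasGrad (fun y => f (S y)) (linForm a b (L (1, 0))) (linForm a b (L (0, 1))) x :=
  (HasFDerivAt.comp x hf hS).congr_fderiv (by ext <;> simp)

end HasGrad

lemma exists_hasGrad_of_closed {s : Set (ℝ × ℝ)} (hs : Convex ℝ s) (hso : IsOpen s)
    {A B : ℝ × ℝ → ℝ} (h : ∀ x ∈ s, ∃ a k b : ℝ, HasGrad A a k x ∧ HasGrad B k b x) :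
    ∃ f : ℝ × ℝ → ℝ, ∀ x ∈ s, HasGrad f (A x) (B x) x := by
  have hform : ∀ x ∈ s, ∃ a k b : ℝ, HasFDerivAt (fun y => linForm (A y) (B y))
      ((linForm a k).smulRight (ContinuousLinearMap.fst ℝ ℝ ℝ)
        + (linForm k b).smulRight (ContinuousLinearMap.snd ℝ ℝ ℝ)) x := by
    intro x hx
    obtain ⟨a, k, b, hA, hB⟩ := h x hx
    exact ⟨a, k, b, (hA.smul_const (ContinuousLinearMap.fst ℝ ℝ ℝ)).add
      (hB.smul_const (ContinuousLinearMap.snd ℝ ℝ ℝ))⟩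
  refine hs.exists_forall_hasFDerivAt_of_fderiv_symmetric hso (fun x hx => ?_)
    fun x hx v w => ?_
  · obtain ⟨a, k, b, hω⟩ := hform x hx
    exact hω.differentiableAt.differentiableWithinAt
  · obtain ⟨a, k, b, hω⟩ := hform x hx
    rw [hω.fderiv]
    simp only [add_apply, ContinuousLinearMap.smulRight_apply, linForm_apply, smul_apply,
      ContinuousLinearMap.coe_fst', ContinuousLinearMap.coe_snd', smul_eq_mul]
    ring

section SecondDerivatives

variable {u : ℝ × ℝ → ℝ} {x : ℝ × ℝ}

lemma contDiffOn_pdx {Ω : Set (ℝ × ℝ)} (hΩ : IsOpen Ω) (hu : ContDiffOn ℝ 2 u Ω) :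
    ContDiffOn ℝ 1 (pdx u) Ω :=
  (hu.fderiv_of_isOpen (m := 1) hΩ (by norm_num)).clm_apply contDiffOn_const

lemma contDiffOn_pdy {Ω : Set (ℝ × ℝ)} (hΩ : IsOpen Ω) (hu : ContDiffOn ℝ 2 u Ω) :
    ContDiffOn ℝ 1 (pdy u) Ω :=
  (hu.fderiv_of_isOpen (m := 1) hΩ (by norm_num)).clm_apply contDiffOn_const

lemma hasGrad_fderiv_apply (h : ContDiffAt ℝ 2 u x) (v : ℝ × ℝ) :
    HasGrad (fun y => fderiv ℝ u y v) (fderiv ℝ (fderiv ℝ u) x (1, 0) v)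
      (fderiv ℝ (fderiv ℝ u) x (0, 1) v) x := by
  have hd : DifferentiableAt ℝ (fderiv ℝ u) x :=
    (h.fderiv_right (m := 1) (by norm_num)).differentiableAt one_ne_zero
  exact (hd.hasFDerivAt.clm_apply (hasFDerivAt_const v x)).congr_fderiv (by ext <;> simp)

lemma pdx_pdy_comm (h : ContDiffAt ℝ 2 u x) : pdx (pdy u) x = pdy (pdx u) x := by
  have hx : pdy (pdx u) x = _ := (hasGrad_fderiv_apply h (1, 0)).pdy_eq
  have hy : pdx (pdy u) x = _ := (hasGrad_fderiv_apply h (0, 1)).pdx_eq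
  rw [hx, hy]
  exact h.isSymmSndFDerivAt (by simp) _ _

lemma hasGrad_pdx (h : ContDiffAt ℝ 2 u x) :
    HasGrad (pdx u) (pdx (pdx u) x) (pdy (pdx u) x) x :=
  hasGrad_of_differentiableAt (hasGrad_fderiv_apply h (1, 0)).differentiableAt

lemma hasGrad_pdy (h : ContDiffAt ℝ 2 u x) :
    HasGrad (pdy u) (pdy (pdx u) x) (pdy (pdy u) x) x :=
  pdx_pdy_comm h ▸
    hasGrad_of_differentiableAt (hasGrad_fderiv_apply h (0, 1)).differentiableAt

end SecondDerivatives

/-! ### The area element and the mean curvature equation -/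

lemma Wgraph_sq (u : ℝ × ℝ → ℝ) (x : ℝ × ℝ) :
    Wgraph u x ^ 2 = 1 + pdx u x ^ 2 + pdy u x ^ 2 :=
  sq_sqrt (by positivity)

lemma one_le_Wgraph (u : ℝ × ℝ → ℝ) (x : ℝ × ℝ) : 1 ≤ Wgraph u x :=
  one_le_sqrt.2 (by nlinarith [sq_nonneg (pdx u x), sq_nonneg (pdy u x)])

lemma Wgraph_pos (u : ℝ × ℝ → ℝ) (x : ℝ × ℝ) : 0 < Wgraph u x :=
  one_pos.trans_le (one_le_Wgraph u x)

lemma contDiffOn_Wgraph {Ω : Set (ℝ × ℝ)} {u : ℝ × ℝ → ℝ} (hΩ : IsOpen Ω)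
    (hu : ContDiffOn ℝ 2 u Ω) : ContDiffOn ℝ 1 (Wgraph u) Ω := by
  have hp := contDiffOn_pdx hΩ hu
  have hq := contDiffOn_pdy hΩ hu
  exact ContDiffOn.sqrt (by fun_prop) fun x _ => by positivity

lemma hasGrad_Wgraph {u : ℝ × ℝ → ℝ} {x : ℝ × ℝ} {r s s' t : ℝ} (hp : HasGrad (pdx u) r s x)
    (hq : HasGrad (pdy u) s' t x) :
    HasGrad (Wgraph u) ((pdx u x * r + pdy u x * s') / Wgraph u x)
      ((pdx u x * s + pdy u x * t) / Wgraph u x) x := by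
  have hW : Wgraph u = fun y => √(1 + pdx u y * pdx u y + pdy u y * pdy u y) := by
    ext y
    simp only [Wgraph, sq]
  have hd := (((hasGrad_const 1 x).add (hp.mul hp)).add (hq.mul hq)).sqrt
    (by nlinarith [mul_self_nonneg (pdx u x), mul_self_nonneg (pdy u x)])
  rw [← congrFun hW x] at hd
  have := Wgraph_pos u x
  exact hW ▸ hd.congr_grad (by rw [← hW]; field_simp; ring) (by rw [← hW]; field_simp; ring)

namespace IsCMCSolution

variable {H : ℝ} {Ω : Set (ℝ × ℝ)} {u : ℝ × ℝ → ℝ} {x : ℝ × ℝ}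

lemma contDiffAt (hu : IsCMCSolution H Ω u) (hΩ : IsOpen Ω) (hx : x ∈ Ω) : ContDiffAt ℝ 2 u x :=
  hu.1.contDiffAt (hΩ.mem_nhds hx)

lemma hasGrad (hu : IsCMCSolution H Ω u) (hΩ : IsOpen Ω) (hx : x ∈ Ω) :
    HasGrad u (pdx u x) (pdy u x) x :=
  hasGrad_of_differentiableAt ((hu.contDiffAt hΩ hx).differentiableAt two_ne_zero)

lemma equation (hu : IsCMCSolution H Ω u) (hx : x ∈ Ω) :
    (1 + pdy u x ^ 2) * pdx (pdx u) x - 2 * pdx u x * pdy u x * pdy (pdx u) x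
      + (1 + pdx u x ^ 2) * pdy (pdy u) x = 2 * H * Wgraph u x ^ 3 := by
  have hW : (1 + pdx u x ^ 2 + pdy u x ^ 2) ^ ((3 : ℝ) / 2) = Wgraph u x ^ 3 := by
    rw [Wgraph, sqrt_eq_rpow, ← rpow_natCast _ 3, ← rpow_mul (by positivity)]
    norm_num
  exact hW ▸ hu.2 x hx

end IsCMCSolution

/-! ### Adapted coordinates -/

/-- The symmetric matrix `m = (a + 1/W) I + v ⊗ v / W` with `v = (p, q)` and `W² = 1 + |v|²`. It is
`a` times the flat metric plus `W⁻¹` times the metric induced on a graph of slope `v`. -/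
def adaptedMat (a p q W : ℝ) : ℝ × ℝ →L[ℝ] ℝ × ℝ :=
  (linForm (a + (1 + p ^ 2) / W) (p * q / W)).prod (linForm (p * q / W) (a + (1 + q ^ 2) / W))

/-- The inverse of `adaptedMat a p q W`, written with the determinant `(a + W) (a + 1/W)`. -/
def adaptedMatInv (a p q W : ℝ) : ℝ × ℝ →L[ℝ] ℝ × ℝ :=
  ((a + W) * (a + 1 / W))⁻¹ •
    (linForm (a + (1 + q ^ 2) / W) (-(p * q / W))).prod
      (linForm (-(p * q / W)) (a + (1 + p ^ 2) / W))

section AdaptedMat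

variable {a p q W : ℝ}

lemma adaptedMat_apply (a p q W : ℝ) (ζ : ℝ × ℝ) : adaptedMat a p q W ζ =
    ((a + (1 + p ^ 2) / W) * ζ.1 + p * q / W * ζ.2,
      p * q / W * ζ.1 + (a + (1 + q ^ 2) / W) * ζ.2) := by
  simp [adaptedMat]

lemma adaptedMatInv_apply (a p q W : ℝ) (ζ : ℝ × ℝ) : adaptedMatInv a p q W ζ =
    (((a + W) * (a + 1 / W))⁻¹ * ((a + (1 + q ^ 2) / W) * ζ.1 + -(p * q / W) * ζ.2),
      ((a + W) * (a + 1 / W))⁻¹ * (-(p * q / W) * ζ.1 + (a + (1 + p ^ 2) / W) * ζ.2)) := by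
  simp [adaptedMatInv]

lemma adaptedMat_det (hW : W ^ 2 = 1 + p ^ 2 + q ^ 2) (hW0 : 0 < W) :
    (a + (1 + p ^ 2) / W) * (a + (1 + q ^ 2) / W) - (p * q / W) * (p * q / W)
      = (a + W) * (a + 1 / W) := by
  field_simp
  linear_combination (-a * W - 1) * hW

lemma adaptedMat_adaptedMatInv (hW : W ^ 2 = 1 + p ^ 2 + q ^ 2) (hW0 : 0 < W) (ha : 0 < a)
    (ζ : ℝ × ℝ) : adaptedMat a p q W (adaptedMatInv a p q W ζ) = ζ := by
  have hdet : (a + W) * (a + 1 / W) ≠ 0 := by positivity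
  have hd := adaptedMat_det (a := a) hW hW0
  rw [adaptedMat_apply, adaptedMatInv_apply]
  ext <;> dsimp only <;> rw [← mul_right_inj' hdet]
  · linear_combination ζ.1 * hd + mul_inv_cancel₀ hdet *
      ((a + (1 + p ^ 2) / W) * (a + (1 + q ^ 2) / W) - (p * q / W) * (p * q / W)) * ζ.1
  · linear_combination ζ.2 * hd + mul_inv_cancel₀ hdet *
      ((a + (1 + p ^ 2) / W) * (a + (1 + q ^ 2) / W) - (p * q / W) * (p * q / W)) * ζ.2

lemma adaptedMatInv_adaptedMat (hW : W ^ 2 = 1 + p ^ 2 + q ^ 2) (hW0 : 0 < W) (ha : 0 < a)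
    (ζ : ℝ × ℝ) : adaptedMatInv a p q W (adaptedMat a p q W ζ) = ζ := by
  have hdet : (a + W) * (a + 1 / W) ≠ 0 := by positivity
  have hd := adaptedMat_det (a := a) hW hW0
  rw [adaptedMat_apply, adaptedMatInv_apply]
  ext <;> dsimp only <;> rw [inv_mul_eq_iff_eq_mul₀ hdet]
  · linear_combination ζ.1 * hd
  · linear_combination ζ.2 * hd

lemma adaptedMatInv_dot (hW0 : 0 < W) (ha : 0 < a) (ζ : ℝ × ℝ) :
    p * (adaptedMatInv a p q W ζ).1 + q * (adaptedMatInv a p q W ζ).2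
      = (p * ζ.1 + q * ζ.2) / (a + W) := by
  rw [adaptedMatInv_apply]
  field_simp
  ring

-- The eigenvalue `a + 1/W` of `m` belongs to `v^⊥`, the eigenvalue `a + W` to `v`.
lemma adaptedMatInv_eq (hW : W ^ 2 = 1 + p ^ 2 + q ^ 2) (hW0 : 0 < W) (ha : 0 < a) (ζ : ℝ × ℝ) :
    adaptedMatInv a p q W ζ =
      ((ζ.1 - p * ((p * ζ.1 + q * ζ.2) / (W * (a + W)))) / (a + 1 / W),
        (ζ.2 - q * ((p * ζ.1 + q * ζ.2) / (W * (a + W)))) / (a + 1 / W)) := by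
  rw [adaptedMatInv_apply]
  ext <;> dsimp only <;> field_simp
  · linear_combination (-ζ.1) * hW
  · linear_combination (-ζ.2) * hW

lemma adaptedMatInv_sq_le (hW : W ^ 2 = 1 + p ^ 2 + q ^ 2) (hW0 : 0 < W) (ha : 1 / 2 ≤ a)
    (ζ : ℝ × ℝ) :
    (adaptedMatInv a p q W ζ).1 ^ 2 + (adaptedMatInv a p q W ζ).2 ^ 2
      ≤ 4 * (ζ.1 ^ 2 + ζ.2 ^ 2) := by
  have ha0 : 0 < a := by linarith
  set k := 1 / (W * (a + W)) with hk
  set s := p * ζ.1 + q * ζ.2 with hs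
  have hkW : (p ^ 2 + q ^ 2) * k ≤ 1 := by
    rw [hk, mul_one_div, div_le_one (by positivity)]
    nlinarith
  have hα : 1 ≤ 4 * (a + 1 / W) ^ 2 := by nlinarith [one_div_pos.2 hW0]
  have hs2 : 0 ≤ s ^ 2 * k := by positivity
  rw [adaptedMatInv_eq hW hW0 ha0, ← hs, div_eq_mul_one_div s, ← hk, div_pow, div_pow, ← add_div,
    div_le_iff₀ (by positivity)]
  calc (ζ.1 - p * (s * k)) ^ 2 + (ζ.2 - q * (s * k)) ^ 2
      = ζ.1 ^ 2 + ζ.2 ^ 2 - s ^ 2 * k - s ^ 2 * k * (1 - (p ^ 2 + q ^ 2) * k) := by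
        rw [hs]; ring
    _ ≤ ζ.1 ^ 2 + ζ.2 ^ 2 := by nlinarith [mul_nonneg hs2 (sub_nonneg.2 hkW)]
    _ ≤ 4 * (ζ.1 ^ 2 + ζ.2 ^ 2) * (a + 1 / W) ^ 2 := by
        nlinarith [mul_nonneg (add_nonneg (sq_nonneg ζ.1) (sq_nonneg ζ.2)) (sub_nonneg.2 hα)]

lemma contDiffOn_adaptedMat {E : Type*} [NormedAddCommGroup E] [NormedSpace ℝ E]
    {n : WithTop ℕ∞} {s : Set E} {a p q W : E → ℝ} (ha : ContDiffOn ℝ n a s)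
    (hp : ContDiffOn ℝ n p s) (hq : ContDiffOn ℝ n q s) (hW : ContDiffOn ℝ n W s)
    (hW0 : ∀ x ∈ s, 0 < W x) :
    ContDiffOn ℝ n (fun x => adaptedMat (a x) (p x) (q x) (W x)) s := by
  have hW1 : ∀ x ∈ s, W x ≠ 0 := fun x hx => (hW0 x hx).ne'
  refine contDiffOn_clm_apply.2 fun ζ => ?_
  simp only [adaptedMat_apply]
  fun_prop (disch := assumption)

lemma contDiffOn_adaptedMatInv {E : Type*} [NormedAddCommGroup E] [NormedSpace ℝ E]
    {n : WithTop ℕ∞} {s : Set E} {a p q W : E → ℝ} (ha : ContDiffOn ℝ n a s)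
    (hp : ContDiffOn ℝ n p s) (hq : ContDiffOn ℝ n q s) (hW : ContDiffOn ℝ n W s)
    (ha0 : ∀ x ∈ s, 0 < a x) (hW0 : ∀ x ∈ s, 0 < W x) :
    ContDiffOn ℝ n (fun x => adaptedMatInv (a x) (p x) (q x) (W x)) s := by
  have hW1 : ∀ x ∈ s, W x ≠ 0 := fun x hx => (hW0 x hx).ne'
  have hdet : ∀ x ∈ s, (a x + W x) * (a x + 1 / W x) ≠ 0 := fun x hx => by
    have := ha0 x hx
    have := hW0 x hx
    positivity
  refine contDiffOn_clm_apply.2 fun ζ => ?_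
  simp only [adaptedMatInv_apply]
  fun_prop (disch := assumption)

end AdaptedMat

/-- The coefficient `a = 1 + 2H (u - u(P))` of the adapted coordinates centred at `P`. -/
def heightCoeff (H : ℝ) (u : ℝ × ℝ → ℝ) (P x : ℝ × ℝ) : ℝ := 1 + 2 * H * (u x - u P)

/-- The Jacobian matrix of the adapted coordinates of the graph of `u` centred at `P`. -/
def adaptedJac (H : ℝ) (u : ℝ × ℝ → ℝ) (P x : ℝ × ℝ) : ℝ × ℝ →L[ℝ] ℝ × ℝ :=
  adaptedMat (heightCoeff H u P x) (pdx u x) (pdy u x) (Wgraph u x)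

/-- The inverse of `adaptedJac`. -/
def adaptedJacInv (H : ℝ) (u : ℝ × ℝ → ℝ) (P x : ℝ × ℝ) : ℝ × ℝ →L[ℝ] ℝ × ℝ :=
  adaptedMatInv (heightCoeff H u P x) (pdx u x) (pdy u x) (Wgraph u x)

namespace IsCMCSolution

variable {H : ℝ} {Ω : Set (ℝ × ℝ)} {u : ℝ × ℝ → ℝ} {x : ℝ × ℝ}

lemma contDiffOn_heightCoeff (hu : IsCMCSolution H Ω u) (P : ℝ × ℝ) :
    ContDiffOn ℝ 1 (heightCoeff H u P) Ω := by
  have : ContDiffOn ℝ 1 u Ω := hu.1.of_le (by norm_num)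
  unfold heightCoeff
  fun_prop

lemma hasGrad_heightCoeff (hu : IsCMCSolution H Ω u) (hΩ : IsOpen Ω) (hx : x ∈ Ω) (P : ℝ × ℝ) :
    HasGrad (heightCoeff H u P) (2 * H * pdx u x) (2 * H * pdy u x) x :=
  ((hasGrad_const 1 x).add (((hu.hasGrad hΩ hx).sub (hasGrad_const (u P) x)).const_mul
    (2 * H))).congr_grad (by ring) (by ring)

-- The `y`-derivative of the first entry minus the `x`-derivative of the second is the equation
-- multiplied by `∂_y u`; for the second row the factor is `-∂_x u`.
lemma closed_adaptedJac_fst (hu : IsCMCSolution H Ω u) (hΩ : IsOpen Ω) (hx : x ∈ Ω) (P : ℝ × ℝ) :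
    ∃ a k b : ℝ,
      HasGrad (fun y => heightCoeff H u P y + (1 + pdx u y * pdx u y) / Wgraph u y) a k x ∧
        HasGrad (fun y => pdx u y * pdy u y / Wgraph u y) k b x := by
  have hp := hasGrad_pdx (hu.contDiffAt hΩ hx)
  have hq := hasGrad_pdy (hu.contDiffAt hΩ hx)
  have hW := hasGrad_Wgraph hp hq
  have hW0 := (Wgraph_pos u x).ne'
  refine ⟨_, _, _, (hu.hasGrad_heightCoeff hΩ hx P).add
    (((hasGrad_const 1 x).add (hp.mul hp)).div hW hW0),
    ((hp.mul hq).div hW hW0).congr_grad ?_ rfl⟩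
  field_simp
  linear_combination pdy u x * hu.equation hx -
    (pdx u x * pdy (pdx u) x - pdy u x * pdx (pdx u) x) * Wgraph_sq u x

lemma closed_adaptedJac_snd (hu : IsCMCSolution H Ω u) (hΩ : IsOpen Ω) (hx : x ∈ Ω) (P : ℝ × ℝ) :
    ∃ a k b : ℝ,
      HasGrad (fun y => pdx u y * pdy u y / Wgraph u y) a k x ∧
        HasGrad (fun y => heightCoeff H u P y + (1 + pdy u y * pdy u y) / Wgraph u y) k b x := by
  have hp := hasGrad_pdx (hu.contDiffAt hΩ hx)
  have hq := hasGrad_pdy (hu.contDiffAt hΩ hx)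
  have hW := hasGrad_Wgraph hp hq
  have hW0 := (Wgraph_pos u x).ne'
  refine ⟨_, _, _, (hp.mul hq).div hW hW0, ((hu.hasGrad_heightCoeff hΩ hx P).add
    (((hasGrad_const 1 x).add (hq.mul hq)).div hW hW0)).congr_grad ?_ rfl⟩
  field_simp
  linear_combination -pdx u x * hu.equation hx +
    (pdy u x * pdy (pdx u) x - pdx u x * pdy (pdy u) x) * Wgraph_sq u x

lemma exists_hasFDerivAt_adaptedJac (hu : IsCMCSolution H Ω u) (hΩ : IsOpen Ω)
    {s : Set (ℝ × ℝ)} (hs : Convex ℝ s) (hso : IsOpen s) (hsΩ : s ⊆ Ω) (P : ℝ × ℝ) :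
    ∃ T : ℝ × ℝ → ℝ × ℝ, ∀ x ∈ s, HasFDerivAt T (adaptedJac H u P x) x := by
  obtain ⟨T₁, hT₁⟩ := exists_hasGrad_of_closed hs hso
    fun x hx => hu.closed_adaptedJac_fst hΩ (hsΩ hx) P
  obtain ⟨T₂, hT₂⟩ := exists_hasGrad_of_closed hs hso
    fun x hx => hu.closed_adaptedJac_snd hΩ (hsΩ hx) P
  refine ⟨fun x => (T₁ x, T₂ x), fun x hx => ?_⟩
  simpa only [adaptedJac, adaptedMat, sq] using (hT₁ x hx).prodMk (hT₂ x hx)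

end IsCMCSolution

/-! ### Flows depending on a parameter -/

/-- `γ` is an integral curve of `V` on `[0, 1]` which starts at `x₀` and stays in the closed ball
of radius `R` about `x₀`. -/
structure IsFlowLine {E : Type*} [NormedAddCommGroup E] [NormedSpace ℝ E] (V : E → E) (x₀ : E)
    (R : ℝ) (γ : ℝ → E) : Prop where
  init : γ 0 = x₀
  mem : ∀ t ∈ Icc (0 : ℝ) 1, γ t ∈ Metric.closedBall x₀ R
  deriv : ∀ t ∈ Icc (0 : ℝ) 1, HasDerivWithinAt γ (V (γ t)) (Icc 0 1) t

section Flow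

variable {E F : Type*} [NormedAddCommGroup E] [NormedSpace ℝ E] [PseudoMetricSpace F]
  {x₀ : E} {R : ℝ} {K : NNReal} {V : E → F → E} {s : Set F} {ζ ζ' : F} {γ γ' : ℝ → E}

lemma IsFlowLine.continuousOn {V : E → E} (h : IsFlowLine V x₀ R γ) :
    ContinuousOn γ (Icc 0 1) := fun t ht => (h.deriv t ht).continuousWithinAt

lemma IsFlowLine.hasDerivWithinAt_Ici {V : E → E} (h : IsFlowLine V x₀ R γ) {t : ℝ}
    (ht : t ∈ Ico (0 : ℝ) 1) : HasDerivWithinAt γ (V (γ t)) (Ici t) t :=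
  (h.deriv t ⟨ht.1, ht.2.le⟩).mono_of_mem_nhdsWithin
    (mem_of_superset (Icc_mem_nhdsGE ht.2) (Icc_subset_Icc_left ht.1))

lemma exists_isFlowLine [CompleteSpace E] {V : E → E} (hR : 0 ≤ R)
    (hL : LipschitzOnWith K V (Metric.closedBall x₀ R))
    (hV : ∀ x ∈ Metric.closedBall x₀ R, ‖V x‖ ≤ R) : ∃ γ, IsFlowLine V x₀ R γ := by
  lift R to NNReal using hR
  have hf : IsPicardLindelof (fun _ => V) (⟨0, by simp⟩ : Icc (0 : ℝ) 1) x₀ R 0 R K :=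
    { lipschitzOnWith := fun _ _ => hL
      continuousOn := fun _ _ => continuousOn_const
      norm_le := fun _ _ x hx => hV x hx
      mul_max_le := by simp }
  obtain ⟨α, hα⟩ := ODE.FunSpace.exists_isFixedPt_next hf (Metric.mem_closedBall_self le_rfl)
  have hmem : ∀ t, α.compProj t ∈ Metric.closedBall x₀ R := fun t =>
    α.compProj_mem_closedBall hf.mul_max_le
  refine ⟨α.compProj, ?_, fun t _ => hmem t, fun t ht => ?_⟩
  · have h0 := α.compProj_val (t := (⟨0, by simp⟩ : Icc (0 : ℝ) 1))
    rw [← hα, ODE.FunSpace.next_apply₀, hα] at h0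
    exact h0
  · refine (ODE.hasDerivWithinAt_picard_Icc (t₀ := 0) (by simp) hf.continuousOn_uncurry
      α.continuous_compProj.continuousOn (fun t' _ => hmem t') x₀ ht).congr_of_mem
      (fun t' ht' => ?_) ht
    nth_rw 1 [← hα]
    rw [ODE.FunSpace.compProj_of_mem ht', ODE.FunSpace.next_apply]

lemma IsFlowLine.dist_le_gronwallBound
    (hK : LipschitzOnWith K (fun z : E × F => V z.1 z.2) (Metric.closedBall x₀ R ×ˢ s))
    (hζ : ζ ∈ s) (hζ' : ζ' ∈ s) (h : IsFlowLine (fun x => V x ζ) x₀ R γ)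
    (h' : IsFlowLine (fun x => V x ζ') x₀ R γ') :
    dist (γ' 1) (γ 1) ≤ gronwallBound 0 K (K * dist ζ' ζ) 1 := by
  have hx : LipschitzOnWith K (fun x => V x ζ) (Metric.closedBall x₀ R) :=
    LipschitzOnWith.of_dist_le_mul fun x hx y hy => by
      simpa [Prod.dist_eq] using hK.dist_le_mul (x, ζ) ⟨hx, hζ⟩ (y, ζ) ⟨hy, hζ⟩
  have hparam : ∀ x ∈ Metric.closedBall x₀ R, dist (V x ζ') (V x ζ) ≤ K * dist ζ' ζ :=
    fun x hx => by simpa [Prod.dist_eq] using hK.dist_le_mul (x, ζ') ⟨hx, hζ'⟩ (x, ζ) ⟨hx, hζ⟩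
  have hIco : ∀ t ∈ Ico (0 : ℝ) 1, t ∈ Icc (0 : ℝ) 1 := fun t ht => ⟨ht.1, ht.2.le⟩
  simpa using dist_le_of_approx_trajectories_ODE_of_mem (v := fun _ x => V x ζ)
    (s := fun _ => Metric.closedBall x₀ R) (δ := 0) (εg := 0) (fun _ _ => hx)
    h'.continuousOn (fun t => h'.hasDerivWithinAt_Ici)
    (fun t ht => hparam _ (h'.mem t (hIco t ht))) (fun t ht => h'.mem t (hIco t ht))
    h.continuousOn (fun t => h.hasDerivWithinAt_Ici) (fun t _ => (dist_self _).le)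
    (fun t ht => h.mem t (hIco t ht)) (by rw [h.init, h'.init, dist_self]) 1 (by simp)

lemma continuousOn_flow_time_one {X : F → ℝ → E}
    (hK : LipschitzOnWith K (fun z : E × F => V z.1 z.2) (Metric.closedBall x₀ R ×ˢ s))
    (hX : ∀ ζ ∈ s, IsFlowLine (fun x => V x ζ) x₀ R (X ζ)) :
    ContinuousOn (fun ζ => X ζ 1) s := by
  intro ζ hζ
  rw [ContinuousWithinAt, tendsto_iff_dist_tendsto_zero]
  have hlim : Tendsto (fun ζ' => gronwallBound 0 K (K * dist ζ' ζ) 1) (nhdsWithin ζ s)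
      (nhds 0) := by
    have hc : Continuous fun ζ' => gronwallBound 0 K (K * dist ζ' ζ) 1 :=
      (gronwallBound_continuous_ε 0 K 1).comp (by fun_prop)
    simpa [gronwallBound_ε0_δ0] using (hc.tendsto ζ).mono_left nhdsWithin_le_nhds
  refine squeeze_zero' (.of_forall fun _ => dist_nonneg) ?_ hlim
  filter_upwards [self_mem_nhdsWithin] with ζ' hζ'
  exact (hX ζ hζ).dist_le_gronwallBound hK hζ hζ' (hX ζ' hζ')

lemma exists_isFlowLine_param [CompleteSpace E] (hR : 0 ≤ R)
    (hK : LipschitzOnWith K (fun z : E × F => V z.1 z.2) (Metric.closedBall x₀ R ×ˢ s))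
    (hV : ∀ x ∈ Metric.closedBall x₀ R, ∀ ζ ∈ s, ‖V x ζ‖ ≤ R) :
    ∃ X : F → ℝ → E, (∀ ζ ∈ s, IsFlowLine (fun x => V x ζ) x₀ R (X ζ)) ∧
      ContinuousOn (fun ζ => X ζ 1) s := by
  have hex : ∀ ζ, ∃ γ, ζ ∈ s → IsFlowLine (fun x => V x ζ) x₀ R γ := by
    intro ζ
    by_cases hζ : ζ ∈ s
    · obtain ⟨γ, hγ⟩ := exists_isFlowLine (V := fun x => V x ζ) (K := K) hR
        (LipschitzOnWith.of_dist_le_mul fun x hx y hy => by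
          simpa [Prod.dist_eq] using hK.dist_le_mul (x, ζ) ⟨hx, hζ⟩ (y, ζ) ⟨hy, hζ⟩)
        fun x hx => hV x hx ζ hζ
      exact ⟨γ, fun _ => hγ⟩
    · exact ⟨0, fun h => absurd h hζ⟩
  choose X hX using hex
  exact ⟨X, hX, continuousOn_flow_time_one hK hX⟩

end Flow

/-! ### Charts -/

/-- Smooth truncation from below: equal to the identity on `[3/4, ∞)` and at least `1/2`. -/
def trunc (a : ℝ) : ℝ := 1 / 2 + (a - 1 / 2) * Real.smoothTransition (4 * a - 2)

lemma contDiff_trunc : ContDiff ℝ 1 trunc := by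
  have : ContDiff ℝ 1 Real.smoothTransition := Real.smoothTransition.contDiff
  unfold trunc
  fun_prop

lemma trunc_eq {a : ℝ} (h : 3 / 4 ≤ a) : trunc a = a := by
  rw [trunc, Real.smoothTransition.one_of_one_le (by linarith)]
  ring

lemma half_le_trunc (a : ℝ) : 1 / 2 ≤ trunc a := by
  rw [trunc]
  rcases le_total a (1 / 2) with h | h
  · rw [Real.smoothTransition.zero_of_nonpos (by linarith)]
    simp
  · have := mul_nonneg (sub_nonneg.2 h) (Real.smoothTransition.nonneg (4 * a - 2))
    linarith

lemma trunc_pos (a : ℝ) : 0 < trunc a := one_half_pos.trans_le (half_le_trunc a)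

lemma norm_le_of_sq_add_sq_le {v : ℝ × ℝ} {R : ℝ} (hR : 0 ≤ R) (h : v.1 ^ 2 + v.2 ^ 2 ≤ R ^ 2) :
    ‖v‖ ≤ R :=
  max_le (abs_le_of_sq_le_sq (by nlinarith [sq_nonneg v.2]) hR)
    (abs_le_of_sq_le_sq (by nlinarith [sq_nonneg v.1]) hR)

lemma sq_add_sq_le_of_norm_le {v : ℝ × ℝ} {R : ℝ} (h : ‖v‖ ≤ R) :
    v.1 ^ 2 + v.2 ^ 2 ≤ 2 * R ^ 2 := by
  have h₁ := sq_le_sq' (abs_le.1 ((norm_fst_le v).trans h)).1 (abs_le.1 ((norm_fst_le v).trans h)).2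
  have h₂ := sq_le_sq' (abs_le.1 ((norm_snd_le v).trans h)).1 (abs_le.1 ((norm_snd_le v).trans h)).2
  linarith

/-- A parametrization `S` of a neighbourhood of `P` by the ball of radius `ρ` (for the sup norm of
`ℝ × ℝ`), inverse to the adapted coordinates. The bound on the coefficient `a` keeps `m` uniformly
positive definite. -/
structure Chart (H : ℝ) (Ω : Set (ℝ × ℝ)) (u : ℝ × ℝ → ℝ) (P : ℝ × ℝ) (ρ : ℝ)
    (S : ℝ × ℝ → ℝ × ℝ) : Prop where
  zero : S 0 = P
  mem : ∀ ζ ∈ Metric.ball (0 : ℝ × ℝ) ρ, S ζ ∈ Ω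
  abs_le : ∀ ζ ∈ Metric.ball (0 : ℝ × ℝ) ρ, |heightCoeff H u P (S ζ) - 1| ≤ 1 / 4
  contDiffOn : ContDiffOn ℝ 1 S (Metric.ball 0 ρ)
  hasFDerivAt : ∀ ζ ∈ Metric.ball (0 : ℝ × ℝ) ρ, HasFDerivAt S (adaptedJacInv H u P (S ζ)) ζ

/-- The inverse Jacobian of the adapted coordinates with the coefficient `a` truncated from below,
so that it is defined on the whole of the domain of `u`. -/
def truncJacInv (H : ℝ) (u : ℝ × ℝ → ℝ) (P x : ℝ × ℝ) : ℝ × ℝ →L[ℝ] ℝ × ℝ :=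
  adaptedMatInv (trunc (heightCoeff H u P x)) (pdx u x) (pdy u x) (Wgraph u x)

section Chart

variable {H : ℝ} {Ω : Set (ℝ × ℝ)} {u : ℝ × ℝ → ℝ} {P x ζ : ℝ × ℝ} {ρ r : ℝ}
  {T : ℝ × ℝ → ℝ × ℝ} {γ : ℝ → ℝ × ℝ}

lemma three_quarters_le_of_abs_sub_one_le {a : ℝ} (ha : |a - 1| ≤ 1 / 4) : 3 / 4 ≤ a := by
  linarith [(abs_le.1 ha).1]

lemma truncJacInv_eq (h : |heightCoeff H u P x - 1| ≤ 1 / 4) :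
    truncJacInv H u P x = adaptedJacInv H u P x := by
  rw [truncJacInv, trunc_eq (three_quarters_le_of_abs_sub_one_le h), adaptedJacInv]

lemma IsCMCSolution.contDiffOn_truncJacInv (hu : IsCMCSolution H Ω u) (hΩ : IsOpen Ω)
    (P : ℝ × ℝ) : ContDiffOn ℝ 1 (truncJacInv H u P) Ω :=
  contDiffOn_adaptedMatInv (contDiff_trunc.comp_contDiffOn (hu.contDiffOn_heightCoeff P))
    (contDiffOn_pdx hΩ hu.1) (contDiffOn_pdy hΩ hu.1) (contDiffOn_Wgraph hΩ hu.1)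
    (fun _ _ => trunc_pos _) fun _ _ => Wgraph_pos u _

lemma norm_truncJacInv_apply_le (hρ : 0 ≤ ρ) (hζ : ‖ζ‖ ≤ ρ) :
    ‖truncJacInv H u P x ζ‖ ≤ 3 * ρ :=
  norm_le_of_sq_add_sq_le (by positivity) <|
    (adaptedMatInv_sq_le (Wgraph_sq u x) (Wgraph_pos u x) (half_le_trunc _) ζ).trans
      (by nlinarith [sq_add_sq_le_of_norm_le hζ, sq_nonneg ρ])

lemma abs_grad_dot_truncJacInv_le (hζ : ‖ζ‖ ≤ ρ) :
    |pdx u x * (truncJacInv H u P x ζ).1 + pdy u x * (truncJacInv H u P x ζ).2| ≤ 2 * ρ := by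
  have hW0 := Wgraph_pos u x
  have ha := trunc_pos (heightCoeff H u P x)
  have hpos := add_pos ha hW0
  have hWsq := Wgraph_sq u x
  have hp : |pdx u x| ≤ Wgraph u x := abs_le_of_sq_le_sq (by nlinarith [sq_nonneg (pdy u x)]) hW0.le
  have hq : |pdy u x| ≤ Wgraph u x := abs_le_of_sq_le_sq (by nlinarith [sq_nonneg (pdx u x)]) hW0.le
  rw [truncJacInv, adaptedMatInv_dot hW0 ha, abs_div, abs_of_pos hpos, div_le_iff₀ hpos]
  calc |pdx u x * ζ.1 + pdy u x * ζ.2|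
      ≤ |pdx u x| * |ζ.1| + |pdy u x| * |ζ.2| := by
        rw [← abs_mul, ← abs_mul]
        exact abs_add_le _ _
    _ ≤ Wgraph u x * ρ + Wgraph u x * ρ := by
        gcongr
        exacts [(norm_fst_le ζ).trans hζ, (norm_snd_le ζ).trans hζ]
    _ ≤ 2 * ρ * (trunc (heightCoeff H u P x) + Wgraph u x) := by
        nlinarith [mul_nonneg ((norm_nonneg ζ).trans hζ) ha.le]

-- Along the flow of `m⁻¹ ζ` the height varies at the rate `⟨∇u, ζ⟩ / (a + W) ≤ 2 |ζ|`.
lemma IsCMCSolution.abs_heightCoeff_flow_le (hu : IsCMCSolution H Ω u) (hH : 0 < H)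
    (hΩ : IsOpen Ω) (hρH : 16 * H * ρ ≤ 1) (hsub : Metric.closedBall P (3 * ρ) ⊆ Ω)
    (hζ : ‖ζ‖ ≤ ρ) (hγ : IsFlowLine (fun x => truncJacInv H u P x ζ) P (3 * ρ) γ)
    {t : ℝ} (ht : t ∈ Icc (0 : ℝ) 1) : |heightCoeff H u P (γ t) - 1| ≤ 1 / 4 := by
  have hderiv : ∀ t ∈ Icc (0 : ℝ) 1, HasDerivWithinAt (fun t => u (γ t))
      (pdx u (γ t) * (truncJacInv H u P (γ t) ζ).1
        + pdy u (γ t) * (truncJacInv H u P (γ t) ζ).2) (Icc 0 1) t := fun t ht =>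
    ((hu.hasGrad hΩ (hsub (hγ.mem t ht))).comp_hasDerivWithinAt t (hγ.deriv t ht)).congr_deriv
      (by simp)
  have hheight := norm_image_sub_le_of_norm_deriv_le_segment' hderiv
    (fun t _ => abs_grad_dot_truncJacInv_le hζ) t ht
  rw [hγ.init, Real.norm_eq_abs, sub_zero] at hheight
  have hρ : 0 ≤ ρ := (norm_nonneg ζ).trans hζ
  calc |heightCoeff H u P (γ t) - 1| = 2 * H * |u (γ t) - u P| := by
        rw [heightCoeff, add_sub_cancel_left, abs_mul, abs_of_pos (by positivity)]
    _ ≤ 2 * H * (2 * ρ) := by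
        gcongr
        exact hheight.trans (mul_le_of_le_one_right (by positivity) ht.2)
    _ ≤ 1 / 4 := by linarith

lemma adaptedJac_truncJacInv (h : |heightCoeff H u P x - 1| ≤ 1 / 4) (ζ : ℝ × ℝ) :
    adaptedJac H u P x (truncJacInv H u P x ζ) = ζ := by
  rw [truncJacInv_eq h]
  exact adaptedMat_adaptedMatInv (Wgraph_sq u x) (Wgraph_pos u x)
    (by linarith [three_quarters_le_of_abs_sub_one_le h]) ζ

lemma adaptedJacInv_adaptedJac (h : |heightCoeff H u P x - 1| ≤ 1 / 4) (ζ : ℝ × ℝ) :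
    adaptedJacInv H u P x (adaptedJac H u P x ζ) = ζ :=
  adaptedMatInv_adaptedMat (Wgraph_sq u x) (Wgraph_pos u x)
    (by linarith [three_quarters_le_of_abs_sub_one_le h]) ζ

lemma IsFlowLine.apply_one_sub_eq {R : ℝ}
    (hT : ∀ x ∈ Metric.closedBall P R, HasFDerivAt T (adaptedJac H u P x) x)
    (hγ : IsFlowLine (fun x => truncJacInv H u P x ζ) P R γ)
    (ha : ∀ t ∈ Icc (0 : ℝ) 1, |heightCoeff H u P (γ t) - 1| ≤ 1 / 4) :
    T (γ 1) - T P = ζ := by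
  have hderiv : ∀ t ∈ Icc (0 : ℝ) 1,
      HasDerivWithinAt (fun t => T (γ t) - t • ζ) 0 (Icc 0 1) t := fun t ht =>
    (((hT _ (hγ.mem t ht)).comp_hasDerivWithinAt t (hγ.deriv t ht)).sub
      ((hasDerivWithinAt_id t _).smul_const ζ)).congr_deriv
      (by rw [adaptedJac_truncJacInv (ha t ht), one_smul, sub_self])
  have hconst := norm_image_sub_le_of_norm_deriv_le_segment' hderiv (C := 0)
    (fun t _ => norm_zero.le) 1 (by simp)
  simp only [zero_mul, norm_le_zero_iff, hγ.init, one_smul, zero_smul, sub_zero] at hconst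
  linear_combination (exp := 1) hconst

lemma IsFlowLine.eq_of_apply_eq_zero {E : Type*} [NormedAddCommGroup E] [NormedSpace ℝ E]
    {V : E → E} {x₀ : E} {R : ℝ} {γ : ℝ → E} (hγ : IsFlowLine V x₀ R γ) (hV : ∀ x, V x = 0) :
    γ 1 = x₀ := by
  have hconst := norm_image_sub_le_of_norm_deriv_le_segment' hγ.deriv (C := 0)
    (fun t _ => by simp [hV]) 1 (by simp)
  simpa [hγ.init, sub_eq_zero] using hconst

-- The truncation is inactive along the time-one map `S` of the field `m⁻¹ ζ`, which inverts `T`.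
lemma chart_of_rightInverse {S : ℝ × ℝ → ℝ × ℝ} (hu : IsCMCSolution H Ω u) (hΩ : IsOpen Ω)
    (hS0 : S 0 = P) (hSc : ContinuousOn S (Metric.ball 0 ρ))
    (hSΩ : ∀ ζ ∈ Metric.ball (0 : ℝ × ℝ) ρ, S ζ ∈ Ω)
    (ha : ∀ ζ ∈ Metric.ball (0 : ℝ × ℝ) ρ, |heightCoeff H u P (S ζ) - 1| ≤ 1 / 4)
    (hT : ∀ ζ ∈ Metric.ball (0 : ℝ × ℝ) ρ, HasFDerivAt T (adaptedJac H u P (S ζ)) (S ζ))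
    (hTS : ∀ ζ ∈ Metric.ball (0 : ℝ × ℝ) ρ, T (S ζ) - T P = ζ) : Chart H Ω u P ρ S := by
  have hSd : ∀ ζ ∈ Metric.ball (0 : ℝ × ℝ) ρ, HasFDerivAt S (adaptedJacInv H u P (S ζ)) ζ := by
    intro ζ hζ
    have hnhds := Metric.isOpen_ball.mem_nhds hζ
    have hT' : HasFDerivAt (fun x => T x - T P) (adaptedJac H u P (S ζ)) (S ζ) :=
      (hT ζ hζ).sub_const (T P)
    have hcomp := hT'.of_comp_of_leftInverse (hSc.continuousAt hnhds) (hasFDerivAt_id ζ)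
      (by filter_upwards [hnhds] with ζ' hζ' using hTS ζ' hζ')
      (adaptedJacInv_adaptedJac (ha ζ hζ))
    exact hcomp.congr_fderiv (ContinuousLinearMap.comp_id _)
  refine ⟨hS0, hSΩ, ha, ?_, hSd⟩
  refine (contDiffOn_succ_iff_fderiv_of_isOpen (n := 0) Metric.isOpen_ball).2
    ⟨fun ζ hζ => (hSd ζ hζ).differentiableAt.differentiableWithinAt, by simp,
      contDiffOn_zero.2 ?_⟩
  refine ((hu.contDiffOn_truncJacInv hΩ P).continuousOn.comp hSc hSΩ).congr fun ζ hζ => ?_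
  rw [(hSd ζ hζ).fderiv, Function.comp_apply, truncJacInv_eq (ha ζ hζ)]

lemma IsCMCSolution.exists_chart (hu : IsCMCSolution H Ω u) (hH : 0 < H) (hΩ : IsOpen Ω)
    (hρ : 0 < ρ) (hρr : 4 * ρ ≤ r) (hρH : 16 * H * ρ ≤ 1) (hr : Metric.ball P r ⊆ Ω) :
    ∃ S, Chart H Ω u P ρ S := by
  have hsub : Metric.closedBall P (3 * ρ) ⊆ Metric.ball P r :=
    Metric.closedBall_subset_ball (by linarith)
  have hsubΩ := hsub.trans hr
  obtain ⟨T, hT⟩ := hu.exists_hasFDerivAt_adaptedJac hΩ (convex_ball P r) Metric.isOpen_ball hr P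
  have hV : ContDiffOn ℝ 1 (fun z : (ℝ × ℝ) × (ℝ × ℝ) => truncJacInv H u P z.1 z.2)
      (Metric.closedBall P (3 * ρ) ×ˢ Metric.closedBall 0 ρ) :=
    ((hu.contDiffOn_truncJacInv hΩ P).comp contDiffOn_fst fun z hz => hsubΩ hz.1).clm_apply
      contDiffOn_snd
  obtain ⟨K, hK⟩ := hV.exists_lipschitzOnWith one_ne_zero
    ((convex_closedBall P (3 * ρ)).prod (convex_closedBall 0 ρ))
    ((isCompact_closedBall P (3 * ρ)).prod (isCompact_closedBall 0 ρ))
  obtain ⟨X, hX, hXc⟩ := exists_isFlowLine_param (V := fun x ζ => truncJacInv H u P x ζ)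
    (by positivity) hK
    fun x _ ζ hζ => norm_truncJacInv_apply_le hρ.le (mem_closedBall_zero_iff.1 hζ)
  have hball : Metric.ball (0 : ℝ × ℝ) ρ ⊆ Metric.closedBall 0 ρ := Metric.ball_subset_closedBall
  have one_mem : (1 : ℝ) ∈ Icc (0 : ℝ) 1 := by simp
  have ha : ∀ ζ ∈ Metric.ball (0 : ℝ × ℝ) ρ, ∀ t ∈ Icc (0 : ℝ) 1,
      |heightCoeff H u P (X ζ t) - 1| ≤ 1 / 4 := fun ζ hζ t =>
    hu.abs_heightCoeff_flow_le hH hΩ hρH hsubΩ (mem_ball_zero_iff.1 hζ).le (hX ζ (hball hζ))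
  have hmem : ∀ ζ ∈ Metric.ball (0 : ℝ × ℝ) ρ, X ζ 1 ∈ Metric.closedBall P (3 * ρ) :=
    fun ζ hζ => (hX ζ (hball hζ)).mem 1 one_mem
  refine ⟨fun ζ => X ζ 1, chart_of_rightInverse hu hΩ ?_ (hXc.mono hball)
    (fun ζ hζ => hsubΩ (hmem ζ hζ)) (fun ζ hζ => ha ζ hζ 1 one_mem)
    (fun ζ hζ => hT _ (hsub (hmem ζ hζ)))
    fun ζ hζ => (hX ζ (hball hζ)).apply_one_sub_eq (fun x hx => hT x (hsub hx)) (ha ζ hζ)⟩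
  exact (hX 0 (Metric.mem_closedBall_self hρ.le)).eq_of_apply_eq_zero fun x => map_zero _

end Chart

/-! ### Weighted quasi-conformality -/

/-- The derivative of `v ↦ v / √(1 + |v|²)` at `v = (p, q)` in the direction `f`, where
`W² = 1 + |v|²`. -/
def fluxDeriv (p q W : ℝ) (f : ℝ × ℝ) : ℝ × ℝ :=
  (((1 + q ^ 2) * f.1 - p * q * f.2) / W ^ 3, ((1 + p ^ 2) * f.2 - p * q * f.1) / W ^ 3)

/-- Rotation by a right angle. -/
def rot (w : ℝ × ℝ) : ℝ × ℝ := (-w.2, w.1)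

section PullBack

variable {a p q W : ℝ}

lemma fluxDeriv_adaptedMat (hW : W ^ 2 = 1 + p ^ 2 + q ^ 2) (hW0 : 0 < W) (x : ℝ × ℝ) :
    fluxDeriv p q W (adaptedMat a p q W x) =
      (((a + 1 / W) * x.1 - a / W ^ 2 * p * (p * x.1 + q * x.2)) / W,
        ((a + 1 / W) * x.2 - a / W ^ 2 * q * (p * x.1 + q * x.2)) / W) := by
  rw [adaptedMat_apply, fluxDeriv]
  ext <;> dsimp only <;> field_simp
  · linear_combination (-(a * W * x.1 + x.1)) * hW
  · linear_combination (-(a * W * x.2 + x.2)) * hW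

lemma adaptedMat_fluxDeriv_adaptedMat (hW : W ^ 2 = 1 + p ^ 2 + q ^ 2) (hW0 : 0 < W) (x : ℝ × ℝ) :
    adaptedMat a p q W (fluxDeriv p q W (adaptedMat a p q W x)) =
      (((a + 1 / W) ^ 2 * x.1 + (1 - a ^ 2) / W ^ 2 * p * (p * x.1 + q * x.2)) / W,
        ((a + 1 / W) ^ 2 * x.2 + (1 - a ^ 2) / W ^ 2 * q * (p * x.1 + q * x.2)) / W) := by
  rw [fluxDeriv_adaptedMat hW hW0, adaptedMat_apply]
  ext <;> dsimp only <;> field_simp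
  · linear_combination (a * p * (p * x.1 + q * x.2)) * hW
  · linear_combination (a * q * (p * x.1 + q * x.2)) * hW

lemma adaptedMatInv_rot (a p q W : ℝ) (w : ℝ × ℝ) :
    adaptedMatInv a p q W (rot w) =
      ((a + W) * (a + 1 / W))⁻¹ • rot (adaptedMat a p q W w) := by
  rw [adaptedMatInv_apply, adaptedMat_apply, rot, rot]
  ext <;> simp only [Prod.smul_mk, smul_eq_mul] <;> ring

lemma sq_dot_div_sq_le (hW : W ^ 2 = 1 + p ^ 2 + q ^ 2) (hW0 : 0 < W) (x : ℝ × ℝ) :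
    (p * x.1 + q * x.2) ^ 2 / W ^ 2 ≤ x.1 ^ 2 + x.2 ^ 2 := by
  rw [div_le_iff₀ (by positivity), hW]
  nlinarith [sq_nonneg (p * x.2 - q * x.1), sq_nonneg x.1, sq_nonneg x.2]

lemma nine_div_sixteen_mul_le {α N k : ℝ} (ha : 3 / 4 ≤ a) (hα : a ≤ α) (hk : 0 ≤ k)
    (hkN : k ≤ N) : 9 / 16 * N ≤ α ^ 2 * N + (1 - a ^ 2) * k := by
  have hα2 : a ^ 2 * N ≤ α ^ 2 * N :=
    mul_le_mul_of_nonneg_right (pow_le_pow_left₀ (by linarith) hα 2) (hk.trans hkN)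
  have ha2 : 9 / 16 ≤ a ^ 2 := by nlinarith
  have := mul_nonneg (sub_nonneg.2 ha2) (sub_nonneg.2 hkN)
  linarith

lemma sq_le_adaptedMat_jacobian (hW : W ^ 2 = 1 + p ^ 2 + q ^ 2) (hW1 : 1 ≤ W)
    (ha : |a - 1| ≤ 1 / 4) {x y : ℝ × ℝ}
    (hy : y = adaptedMatInv a p q W (rot (fluxDeriv p q W (adaptedMat a p q W x)))) :
    x.1 ^ 2 + x.2 ^ 2 ≤ 9 * W ^ 2 * (x.1 * y.2 - x.2 * y.1) := by
  have hW0 : 0 < W := by linarith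
  obtain ⟨ha₁, ha₂⟩ := abs_le.1 ha
  have ha0 : 0 < a := by linarith
  have hiW : 1 / W ≤ 1 := (div_le_one hW0).2 hW1
  have hiW0 : 0 < 1 / W := by positivity
  have hdet : (a + W) * (a + 1 / W) ≤ 81 / 16 * W :=
    calc (a + W) * (a + 1 / W) ≤ (9 / 4 * W) * (9 / 4) := by gcongr <;> linarith
      _ = 81 / 16 * W := by ring
  have hjac : x.1 * y.2 - x.2 * y.1 = ((a + 1 / W) ^ 2 * (x.1 ^ 2 + x.2 ^ 2) +
      (1 - a ^ 2) * ((p * x.1 + q * x.2) ^ 2 / W ^ 2)) / (W * ((a + W) * (a + 1 / W))) := by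
    rw [hy, adaptedMatInv_rot, adaptedMat_fluxDeriv_adaptedMat hW hW0, rot]
    simp only [Prod.smul_mk, smul_eq_mul]
    field_simp
    ring
  have hlow := nine_div_sixteen_mul_le (a := a) (α := a + 1 / W) (by linarith) (by linarith)
    (by positivity) (sq_dot_div_sq_le hW hW0 x)
  rw [hjac, mul_div_assoc', le_div_iff₀ (by positivity)]
  calc (x.1 ^ 2 + x.2 ^ 2) * (W * ((a + W) * (a + 1 / W)))
      ≤ (x.1 ^ 2 + x.2 ^ 2) * (W * (81 / 16 * W)) := by gcongr
    _ = 9 * W ^ 2 * (9 / 16 * (x.1 ^ 2 + x.2 ^ 2)) := by ring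
    _ ≤ _ := by gcongr

lemma sq_add_sq_le_of_abs_sub_one_le {α k e N : ℝ} (ha : |a - 1| ≤ 1 / 4) (hα0 : 0 ≤ α)
    (hα : α ≤ 9 / 4) (hk : 0 ≤ k) (hkN : k ≤ N) (he : e ≤ 1) :
    α ^ 4 * N + 2 * α ^ 2 * (1 - a ^ 2) * k + (1 - a ^ 2) ^ 2 * (k * e) ≤ 2025 / 64 * N := by
  obtain ⟨ha₁, ha₂⟩ := abs_le.1 ha
  have hN : 0 ≤ N := hk.trans hkN
  have hα2 : α ^ 2 ≤ 81 / 16 := by nlinarith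
  have hα4 : α ^ 4 ≤ (81 / 16) ^ 2 := by
    rw [show α ^ 4 = (α ^ 2) ^ 2 by ring]
    gcongr
  have ha2 : |1 - a ^ 2| ≤ 9 / 16 := abs_le.2 ⟨by nlinarith, by nlinarith⟩
  have ha4 : (1 - a ^ 2) ^ 2 ≤ (9 / 16) ^ 2 := by
    rw [← sq_abs (1 - a ^ 2)]
    gcongr
  calc α ^ 4 * N + 2 * α ^ 2 * (1 - a ^ 2) * k + (1 - a ^ 2) ^ 2 * (k * e)
      ≤ α ^ 4 * N + 2 * α ^ 2 * (9 / 16) * k + (1 - a ^ 2) ^ 2 * (k * 1) := by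
        gcongr
        exact (le_abs_self _).trans ha2
    _ ≤ (81 / 16) ^ 2 * N + 2 * (81 / 16) * (9 / 16) * N + (9 / 16) ^ 2 * (N * 1) := by gcongr
    _ = 2025 / 64 * N := by ring

lemma adaptedMat_conjugate_sq_le (hW : W ^ 2 = 1 + p ^ 2 + q ^ 2) (hW1 : 1 ≤ W)
    (ha : |a - 1| ≤ 1 / 4) {x y : ℝ × ℝ}
    (hy : y = adaptedMatInv a p q W (rot (fluxDeriv p q W (adaptedMat a p q W x)))) :
    W ^ 4 * (y.1 ^ 2 + y.2 ^ 2) ≤ 60 * (x.1 ^ 2 + x.2 ^ 2) := by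
  have hW0 : 0 < W := by linarith
  obtain ⟨ha₁, ha₂⟩ := abs_le.1 ha
  have ha0 : 0 < a := by linarith
  have hiW : 1 / W ≤ 1 := (div_le_one hW0).2 hW1
  have hdet : 3 / 4 * W ≤ (a + W) * (a + 1 / W) := by nlinarith [one_div_pos.2 hW0]
  have hsq : y.1 ^ 2 + y.2 ^ 2 = ((a + 1 / W) ^ 4 * (x.1 ^ 2 + x.2 ^ 2) +
      2 * (a + 1 / W) ^ 2 * (1 - a ^ 2) * ((p * x.1 + q * x.2) ^ 2 / W ^ 2) +
      (1 - a ^ 2) ^ 2 * ((p * x.1 + q * x.2) ^ 2 / W ^ 2 * ((p ^ 2 + q ^ 2) / W ^ 2))) /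
        (W ^ 2 * ((a + W) * (a + 1 / W)) ^ 2) := by
    rw [hy, adaptedMatInv_rot, adaptedMat_fluxDeriv_adaptedMat hW hW0, rot]
    simp only [Prod.smul_mk, smul_eq_mul]
    field_simp
    ring
  have hup := sq_add_sq_le_of_abs_sub_one_le (α := a + 1 / W) (e := (p ^ 2 + q ^ 2) / W ^ 2) ha
    (by positivity) (by linarith) (by positivity) (sq_dot_div_sq_le hW hW0 x)
    ((div_le_one (by positivity)).2 (by linarith))
  rw [hsq, mul_div_assoc', div_le_iff₀ (by positivity)]
  calc W ^ 4 * _ ≤ W ^ 4 * (2025 / 64 * (x.1 ^ 2 + x.2 ^ 2)) := by gcongr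
    _ ≤ 60 * (x.1 ^ 2 + x.2 ^ 2) * (W ^ 2 * (3 / 4 * W) ^ 2) := by
        have : 0 ≤ W ^ 4 * (x.1 ^ 2 + x.2 ^ 2) := by positivity
        linarith
    _ ≤ _ := by gcongr

end PullBack

/-- Quasi-conformality of the map `(f, g)` at `ζ` with weight `W`: `|∇f|² ≤ 9 W² det ∂(f, g)` and
`W⁴ |∇g|² ≤ 60 |∇f|²`. -/
def IsQuasiconformalPair (f g : ℝ × ℝ → ℝ) (W : ℝ) (ζ : ℝ × ℝ) : Prop :=
  ∃ a b c d : ℝ, HasGrad f a b ζ ∧ HasGrad g c d ζ ∧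
    a ^ 2 + b ^ 2 ≤ 9 * W ^ 2 * (a * d - b * c) ∧ W ^ 4 * (c ^ 2 + d ^ 2) ≤ 60 * (a ^ 2 + b ^ 2)

/-- The first component of `∇u / W - 2H (x - P)`. Where both components are constant along a curve,
`∇u / W` varies like the normal of a circle of radius `1 / (2H)`. -/
def relFluxX (H : ℝ) (u : ℝ × ℝ → ℝ) (P x : ℝ × ℝ) : ℝ :=
  pdx u x / Wgraph u x - 2 * H * (x.1 - P.1)

/-- The second component of `∇u / W - 2H (x - P)`. -/
def relFluxY (H : ℝ) (u : ℝ × ℝ → ℝ) (P x : ℝ × ℝ) : ℝ :=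
  pdy u x / Wgraph u x - 2 * H * (x.2 - P.2)

namespace IsCMCSolution

variable {H : ℝ} {Ω : Set (ℝ × ℝ)} {u : ℝ × ℝ → ℝ} {x : ℝ × ℝ}

-- By the equation, the gradient of `relFluxX` depends on the second derivatives of `u` only through
-- the gradient of `pdy u`.
lemma hasGrad_relFluxX (hu : IsCMCSolution H Ω u) (hΩ : IsOpen Ω) (hx : x ∈ Ω) (P : ℝ × ℝ)
    {w : ℝ × ℝ}
    (hw : w = fluxDeriv (pdx u x) (pdy u x) (Wgraph u x) (pdy (pdx u) x, pdy (pdy u) x)) :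
    HasGrad (relFluxX H u P) (rot w).1 (rot w).2 x := by
  have hp := hasGrad_pdx (hu.contDiffAt hΩ hx)
  have hW := hasGrad_Wgraph hp (hasGrad_pdy (hu.contDiffAt hΩ hx))
  have hW0 := (Wgraph_pos u x).ne'
  refine ((hp.div hW hW0).sub (((hasGrad_fst x).sub (hasGrad_const P.1 x)).const_mul
    (2 * H))).congr_grad ?_ ?_ <;> rw [hw] <;> simp only [rot, fluxDeriv] <;> field_simp
  · linear_combination pdx (pdx u) x * Wgraph_sq u x + hu.equation hx
  · linear_combination pdy (pdx u) x * Wgraph_sq u x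

lemma hasGrad_neg_relFluxY (hu : IsCMCSolution H Ω u) (hΩ : IsOpen Ω) (hx : x ∈ Ω) (P : ℝ × ℝ)
    {w : ℝ × ℝ}
    (hw : w = fluxDeriv (pdx u x) (pdy u x) (Wgraph u x) (pdx (pdx u) x, pdy (pdx u) x)) :
    HasGrad (fun y => -relFluxY H u P y) (rot w).1 (rot w).2 x := by
  have hq := hasGrad_pdy (hu.contDiffAt hΩ hx)
  have hW := hasGrad_Wgraph (hasGrad_pdx (hu.contDiffAt hΩ hx)) hq
  have hW0 := (Wgraph_pos u x).ne'
  simp only [relFluxY, neg_eq_neg_one_mul (_ - _)]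
  refine (((hq.div hW hW0).sub (((hasGrad_snd x).sub (hasGrad_const P.2 x)).const_mul
    (2 * H))).const_mul (-1)).congr_grad ?_ ?_ <;> rw [hw] <;> simp only [rot, fluxDeriv] <;>
    field_simp
  · linear_combination -pdy (pdx u) x * Wgraph_sq u x
  · linear_combination -pdy (pdy u) x * Wgraph_sq u x - hu.equation hx

end IsCMCSolution

namespace Chart

variable {H : ℝ} {Ω : Set (ℝ × ℝ)} {u : ℝ × ℝ → ℝ} {P : ℝ × ℝ} {ρ : ℝ} {S : ℝ × ℝ → ℝ × ℝ}
  {ζ : ℝ × ℝ}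

lemma hasGrad_comp (hS : Chart H Ω u P ρ S) (hζ : ζ ∈ Metric.ball 0 ρ) {f : ℝ × ℝ → ℝ}
    {a b : ℝ} (hf : HasGrad f a b (S ζ)) :
    HasGrad (fun ζ => f (S ζ)) (adaptedJacInv H u P (S ζ) (a, b)).1
      (adaptedJacInv H u P (S ζ) (a, b)).2 ζ := by
  refine (hf.comp (hS.hasFDerivAt ζ hζ)).congr_grad ?_ ?_ <;>
    simp only [adaptedJacInv, adaptedMatInv_apply, linForm_apply] <;> ring

lemma isQuasiconformalPair_of_hasGrad (hS : Chart H Ω u P ρ S) (hζ : ζ ∈ Metric.ball 0 ρ)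
    {f g : ℝ × ℝ → ℝ} {b w : ℝ × ℝ} (hf : HasGrad f b.1 b.2 (S ζ))
    (hw : w = fluxDeriv (pdx u (S ζ)) (pdy u (S ζ)) (Wgraph u (S ζ)) b)
    (hg : HasGrad g (rot w).1 (rot w).2 (S ζ)) :
    IsQuasiconformalPair (fun ζ => f (S ζ)) (fun ζ => g (S ζ)) (Wgraph u (S ζ)) ζ := by
  have hW := Wgraph_sq u (S ζ)
  have ha := hS.abs_le ζ hζ
  have hb : adaptedMat (heightCoeff H u P (S ζ)) (pdx u (S ζ)) (pdy u (S ζ)) (Wgraph u (S ζ))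
      (adaptedJacInv H u P (S ζ) b) = b :=
    adaptedMat_adaptedMatInv hW (Wgraph_pos u _)
      (by linarith [three_quarters_le_of_abs_sub_one_le ha]) b
  have hy : adaptedJacInv H u P (S ζ) (rot w) = adaptedJacInv H u P (S ζ) (rot (fluxDeriv
      (pdx u (S ζ)) (pdy u (S ζ)) (Wgraph u (S ζ)) (adaptedMat (heightCoeff H u P (S ζ))
        (pdx u (S ζ)) (pdy u (S ζ)) (Wgraph u (S ζ)) (adaptedJacInv H u P (S ζ) b)))) := by
    rw [hb, ← hw]
  exact ⟨_, _, _, _, hS.hasGrad_comp hζ hf, hS.hasGrad_comp hζ hg,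
    sq_le_adaptedMat_jacobian hW (one_le_Wgraph u _) ha hy,
    adaptedMat_conjugate_sq_le hW (one_le_Wgraph u _) ha hy⟩

lemma isQuasiconformalPair_pdy_relFluxX (hS : Chart H Ω u P ρ S) (hΩ : IsOpen Ω)
    (hu : IsCMCSolution H Ω u) (hζ : ζ ∈ Metric.ball 0 ρ) :
    IsQuasiconformalPair (fun ζ => pdy u (S ζ)) (fun ζ => relFluxX H u P (S ζ))
      (Wgraph u (S ζ)) ζ :=
  have hx := hS.mem ζ hζ
  hS.isQuasiconformalPair_of_hasGrad hζ (b := (_, _)) (hasGrad_pdy (hu.contDiffAt hΩ hx)) rfl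
    (hu.hasGrad_relFluxX hΩ hx P rfl)

lemma isQuasiconformalPair_pdx_neg_relFluxY (hS : Chart H Ω u P ρ S) (hΩ : IsOpen Ω)
    (hu : IsCMCSolution H Ω u) (hζ : ζ ∈ Metric.ball 0 ρ) :
    IsQuasiconformalPair (fun ζ => pdx u (S ζ)) (fun ζ => -relFluxY H u P (S ζ))
      (Wgraph u (S ζ)) ζ :=
  have hx := hS.mem ζ hζ
  hS.isQuasiconformalPair_of_hasGrad hζ (b := (_, _)) (hasGrad_pdx (hu.contDiffAt hΩ hx)) rfl
    (hu.hasGrad_neg_relFluxY hΩ hx P rfl)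

end Chart

/-! ### The null Lagrangian identity -/

/-- The Jacobian determinant `{F, G} = F_x G_y - F_y G_x`. -/
def jacobianDet (F G : ℝ × ℝ → ℝ) (z : ℝ × ℝ) : ℝ := pdx F z * pdy G z - pdy F z * pdx G z

lemma HasGrad.hasDerivAt_fst {F : ℝ × ℝ → ℝ} {a b s θ : ℝ} (h : HasGrad F a b (s, θ)) :
    HasDerivAt (fun s => F (s, θ)) a s :=
  (h.comp_hasDerivAt s ((hasDerivAt_id s).prodMk (hasDerivAt_const s θ))).congr_deriv (by simp)

lemma HasGrad.hasDerivAt_snd {F : ℝ × ℝ → ℝ} {a b s θ : ℝ} (h : HasGrad F a b (s, θ)) :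
    HasDerivAt (fun θ => F (s, θ)) b θ :=
  (h.comp_hasDerivAt θ ((hasDerivAt_const θ s).prodMk (hasDerivAt_id θ))).congr_deriv (by simp)

section Plane

variable {F G : ℝ × ℝ → ℝ}

lemma continuous_pdx (hF : ContDiff ℝ 1 F) : Continuous (pdx F) :=
  (hF.continuous_fderiv one_ne_zero).clm_apply continuous_const

lemma continuous_pdy (hF : ContDiff ℝ 1 F) : Continuous (pdy F) :=
  (hF.continuous_fderiv one_ne_zero).clm_apply continuous_const

lemma hasGrad_of_contDiff (hF : ContDiff ℝ 1 F) (z : ℝ × ℝ) : HasGrad F (pdx F z) (pdy F z) z :=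
  hasGrad_of_differentiableAt (hF.differentiable one_ne_zero z)

lemma continuous_jacobianDet (hF : ContDiff ℝ 1 F) (hG : ContDiff ℝ 1 G) :
    Continuous (jacobianDet F G) :=
  ((continuous_pdx hF).mul (continuous_pdy hG)).sub ((continuous_pdy hF).mul (continuous_pdx hG))

lemma hasDerivAt_integral_fst {k k' : ℝ × ℝ → ℝ} (hk : Continuous k) (hk' : Continuous k')
    (h : ∀ s θ, HasDerivAt (fun s => k (s, θ)) (k' (s, θ)) s) {a b : ℝ} (s : ℝ) :
    HasDerivAt (fun s => ∫ θ in a..b, k (s, θ)) (∫ θ in a..b, k' (s, θ)) s := by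
  obtain ⟨C, hC⟩ := ((isCompact_closedBall s 1).prod
    (isCompact_uIcc (a := a) (b := b))).exists_bound_of_continuousOn hk'.continuousOn
  have hslice (x : ℝ) : Continuous fun θ : ℝ => (x, θ) := by fun_prop
  exact (intervalIntegral.hasDerivAt_integral_of_dominated_loc_of_deriv_le (bound := fun _ => C)
    (F := fun s θ => k (s, θ)) (F' := fun s θ => k' (s, θ))
    (Metric.closedBall_mem_nhds s one_pos)
    (.of_forall fun x => (hk.comp (hslice x)).aestronglyMeasurable)
    ((hk.comp (hslice s)).intervalIntegrable _ _) (hk'.comp (hslice s)).aestronglyMeasurable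
    (.of_forall fun t ht x hx => hC (x, t) ⟨hx, uIoc_subset_uIcc ht⟩)
    intervalIntegrable_const (.of_forall fun t _ x _ => h x t)).2

lemma integral_mul_comp_add_right {f g : ℝ → ℝ} {T : ℝ} (hf : Function.Periodic f T)
    (hg : Function.Periodic g T) (h : ℝ) :
    ∫ θ in (0)..T, f θ * g (θ + h) = ∫ θ in (0)..T, f (θ - h) * g θ := by
  have hfg : Function.Periodic (fun θ => f (θ - h) * g θ) T := (hf.sub_const h).mul hg
  have hshift := intervalIntegral.integral_comp_add_right (a := 0) (b := T)
    (fun θ => f (θ - h) * g θ) h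
  simp only [add_sub_cancel_right, zero_add] at hshift
  rw [hshift, add_comm T h, hfg.intervalIntegral_add_eq h 0, zero_add]

/-- The mean of `D` over the segment from `(s, θ)` to `(s, θ + h)`. If `D = ∂_θ G`, then this is a
difference quotient of `G` for `h ≠ 0` and equals `∂_θ G` for `h = 0`. -/
def segmentMean (D : ℝ × ℝ → ℝ) (h s θ : ℝ) : ℝ := ∫ t in (0 : ℝ)..1, D (s, θ + h * t)

@[fun_prop]
lemma continuous_segmentMean {X : Type*} [TopologicalSpace X] {D : ℝ × ℝ → ℝ} {h s θ : X → ℝ}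
    (hD : Continuous D) (hh : Continuous h) (hs : Continuous s) (hθ : Continuous θ) :
    Continuous fun x => segmentMean D (h x) (s x) (θ x) :=
  intervalIntegral.continuous_parametric_intervalIntegral_of_continuous' (by fun_prop) 0 1

lemma segmentMean_zero (D : ℝ × ℝ → ℝ) (s θ : ℝ) : segmentMean D 0 s θ = D (s, θ) := by
  simp [segmentMean]

lemma mul_segmentMean_pdy (hG : ContDiff ℝ 1 G) (h s θ : ℝ) :
    h * segmentMean (pdy G) h s θ = G (s, θ + h) - G (s, θ) := by
  have hGy := continuous_pdy hG
  have hderiv : ∀ t ∈ uIcc (0 : ℝ) 1, HasDerivAt (fun t => G (s, θ + h * t))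
      (pdy G (s, θ + h * t) * h) t := fun t _ =>
    HasDerivAt.comp (h := fun t => θ + h * t) t
      (hasGrad_of_contDiff hG (s, θ + h * t)).hasDerivAt_snd
      (by simpa using ((hasDerivAt_id t).const_mul h).const_add θ)
  have hint := intervalIntegral.integral_eq_sub_of_hasDerivAt hderiv
    ((by fun_prop : Continuous fun t => pdy G (s, θ + h * t) * h).intervalIntegrable _ _)
  rw [intervalIntegral.integral_mul_const] at hint
  simpa [segmentMean, mul_comm] using hint

lemma periodic_pdx {T : ℝ} (hG : ContDiff ℝ 1 G) (pG : ∀ s, Function.Periodic (fun θ => G (s, θ)) T)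
    (s : ℝ) : Function.Periodic (fun θ => pdx G (s, θ)) T := fun θ => by
  have hshift := (hasGrad_of_contDiff hG (s, θ + T)).hasDerivAt_fst
  rw [funext fun s => pG s θ] at hshift
  exact hshift.unique (hasGrad_of_contDiff hG (s, θ)).hasDerivAt_fst

variable {T : ℝ}

lemma integral_deriv_mul_sub (hF : ContDiff ℝ 1 F) (hG : ContDiff ℝ 1 G)
    (pF : ∀ s, Function.Periodic (fun θ => F (s, θ)) T)
    (pG : ∀ s, Function.Periodic (fun θ => G (s, θ)) T) (h s : ℝ) :
    ∫ θ in (0)..T, (pdx F (s, θ) * (G (s, θ + h) - G (s, θ)) +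
        F (s, θ) * (pdx G (s, θ + h) - pdx G (s, θ))) =
      h * ∫ θ in (0)..T, (pdx F (s, θ) * segmentMean (pdy G) h s θ -
        segmentMean (pdy F) (-h) s θ * pdx G (s, θ)) := by
  have cF := hF.continuous
  have cG := hG.continuous
  have cFx := continuous_pdx hF
  have cGx := continuous_pdx hG
  have hint {f : ℝ → ℝ} (hf : Continuous f) : IntervalIntegrable f volume 0 T :=
    hf.intervalIntegrable 0 T
  calc ∫ θ in (0)..T, (pdx F (s, θ) * (G (s, θ + h) - G (s, θ)) +
        F (s, θ) * (pdx G (s, θ + h) - pdx G (s, θ)))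
      = (∫ θ in (0)..T, pdx F (s, θ) * (G (s, θ + h) - G (s, θ))) +
          ((∫ θ in (0)..T, F (s, θ) * pdx G (s, θ + h)) -
            ∫ θ in (0)..T, F (s, θ) * pdx G (s, θ)) := by
        simp only [mul_sub (F _)]
        rw [intervalIntegral.integral_add (hint (by fun_prop)) (hint (by fun_prop)),
          intervalIntegral.integral_sub (hint (by fun_prop)) (hint (by fun_prop))]
    _ = (∫ θ in (0)..T, pdx F (s, θ) * (G (s, θ + h) - G (s, θ))) +
          ((∫ θ in (0)..T, F (s, θ - h) * pdx G (s, θ)) -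
            ∫ θ in (0)..T, F (s, θ) * pdx G (s, θ)) := by
        rw [integral_mul_comp_add_right (pF s) (periodic_pdx hG pG s) h]
    _ = ∫ θ in (0)..T, (h * (pdx F (s, θ) * segmentMean (pdy G) h s θ -
          segmentMean (pdy F) (-h) s θ * pdx G (s, θ))) := by
        rw [← intervalIntegral.integral_sub (hint (by fun_prop)) (hint (by fun_prop)),
          ← intervalIntegral.integral_add (hint (by fun_prop)) (hint (by fun_prop))]
        congr 1 with θ
        rw [← mul_segmentMean_pdy hG h s θ, sub_eq_add_neg θ h]
        linear_combination -pdx G (s, θ) * mul_segmentMean_pdy hF (-h) s θ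
    _ = _ := intervalIntegral.integral_const_mul _ _

lemma hasDerivAt_integral_mul_segmentMean (hF : ContDiff ℝ 1 F) (hG : ContDiff ℝ 1 G)
    (pF : ∀ s, Function.Periodic (fun θ => F (s, θ)) T)
    (pG : ∀ s, Function.Periodic (fun θ => G (s, θ)) T) {h : ℝ} (hh : h ≠ 0) (s : ℝ) :
    HasDerivAt (fun s => ∫ θ in (0)..T, F (s, θ) * segmentMean (pdy G) h s θ)
      (∫ θ in (0)..T, (pdx F (s, θ) * segmentMean (pdy G) h s θ -
        segmentMean (pdy F) (-h) s θ * pdx G (s, θ))) s := by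
  have cF := hF.continuous
  have cG := hG.continuous
  have cFx := continuous_pdx hF
  have cGx := continuous_pdx hG
  have hderiv := hasDerivAt_integral_fst (k := fun z => F z * (G (z.1, z.2 + h) - G z))
    (k' := fun z => pdx F z * (G (z.1, z.2 + h) - G z) +
      F z * (pdx G (z.1, z.2 + h) - pdx G z))
    (by fun_prop) (by fun_prop)
    (fun s θ => (hasGrad_of_contDiff hF (s, θ)).hasDerivAt_fst.mul
      ((hasGrad_of_contDiff hG (s, θ + h)).hasDerivAt_fst.sub
        (hasGrad_of_contDiff hG (s, θ)).hasDerivAt_fst)) (a := 0) (b := T) s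
  simp only [← mul_segmentMean_pdy hG, mul_left_comm _ h,
    intervalIntegral.integral_const_mul] at hderiv
  refine ((hderiv.const_mul h⁻¹).congr_deriv ?_).congr_of_eventuallyEq (.of_forall fun s => ?_)
  · simp only [← mul_left_comm _ h, mul_segmentMean_pdy hG]
    rw [integral_deriv_mul_sub hF hG pF pG, inv_mul_cancel_left₀ hh]
  · simp only [inv_mul_cancel_left₀ hh]

-- For `C²` functions this is an integration by parts in `θ`. As `F` and `G` are only `C¹`, the
-- angular derivatives are replaced by difference quotients of step `h`, and `h` tends to `0`.
lemma hasDerivAt_integral_mul_pdy (hF : ContDiff ℝ 1 F) (hG : ContDiff ℝ 1 G)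
    (pF : ∀ s, Function.Periodic (fun θ => F (s, θ)) T)
    (pG : ∀ s, Function.Periodic (fun θ => G (s, θ)) T) (s : ℝ) :
    HasDerivAt (fun s => ∫ θ in (0)..T, F (s, θ) * pdy G (s, θ))
      (∫ θ in (0)..T, jacobianDet F G (s, θ)) s := by
  have cF := hF.continuous
  have cFx := continuous_pdx hF
  have cFy := continuous_pdy hF
  have cGx := continuous_pdx hG
  have cGy := continuous_pdy hG
  set Φ : ℝ × ℝ → ℝ := fun z => ∫ θ in (0)..T, F (z.2, θ) * segmentMean (pdy G) z.1 z.2 θ with hΦ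
  set Ψ : ℝ × ℝ → ℝ := fun z => ∫ θ in (0)..T, (pdx F (z.2, θ) * segmentMean (pdy G) z.1 z.2 θ -
    segmentMean (pdy F) (-z.1) z.2 θ * pdx G (z.2, θ)) with hΨ
  have cΦ : Continuous Φ :=
    intervalIntegral.continuous_parametric_intervalIntegral_of_continuous' (by fun_prop) _ _
  have cΨ : Continuous Ψ :=
    intervalIntegral.continuous_parametric_intervalIntegral_of_continuous' (by fun_prop) _ _
  have cΨs (h : ℝ) : Continuous fun s => Ψ (h, s) := by fun_prop
  have hftc (t : ℝ) : Φ (0, t) - Φ (0, s) = ∫ r in s..t, Ψ (0, r) := by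
    have hne : EqOn (fun h => Φ (h, t) - Φ (h, s)) (fun h => ∫ r in s..t, Ψ (h, r)) {0}ᶜ :=
      fun h hh => (intervalIntegral.integral_eq_sub_of_hasDerivAt
        (fun s _ => hasDerivAt_integral_mul_segmentMean hF hG pF pG hh s)
        ((cΨs h).intervalIntegrable _ _)).symm
    exact congrFun (Continuous.ext_on (dense_compl_singleton 0) (by fun_prop)
      (intervalIntegral.continuous_parametric_intervalIntegral_of_continuous' (by fun_prop) _ _)
      hne) 0
  have hderiv : HasDerivAt (fun t => (∫ r in s..t, Ψ (0, r)) + Φ (0, s)) (Ψ (0, s)) s :=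
    ((cΨs 0).integral_hasStrictDerivAt s s).hasDerivAt.add_const _
  simp only [← hftc, sub_add_cancel] at hderiv
  simpa only [hΦ, hΨ, segmentMean_zero, neg_zero, jacobianDet] using hderiv

end Plane

/-! ### Maximum principle and Riccati comparison -/

section MaximumPrinciple

variable {F G : ℝ × ℝ → ℝ} {T s₀ C : ℝ}

lemma HasGrad.scomp {β : ℝ → ℝ} {β' a b : ℝ} {z : ℝ × ℝ} (hβ : HasDerivAt β β' (F z))
    (hF : HasGrad F a b z) : HasGrad (fun z => β (F z)) (β' * a) (β' * b) z :=
  (hβ.comp_hasFDerivAt z hF).congr_fderiv (by ext <;> simp)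

lemma eqOn_zero_of_monotoneOn_of_abs_le_exp {Φ : ℝ → ℝ} (hmono : MonotoneOn Φ (Iic s₀))
    (h0 : Φ s₀ = 0) (hexp : ∀ s ≤ s₀, |Φ s| ≤ C * exp s) : EqOn Φ 0 (Iic s₀) := by
  intro s hs
  refine le_antisymm ((hmono hs self_mem_Iic hs).trans_eq h0) ?_
  have hlim : Tendsto (fun t => -(C * exp t)) atBot (nhds (-(C * 0))) :=
    (tendsto_exp_atBot.const_mul C).neg
  rw [mul_zero, neg_zero] at hlim
  refine le_of_tendsto hlim ?_
  filter_upwards [eventually_le_atBot s] with t ht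
  have hts : t ≤ s₀ := ht.trans hs
  exact (abs_le.1 (hexp t hts)).1.trans (hmono hts hs ht)

-- The integral `∮ F dG` is monotone in `s`, vanishes at `s₀` and tends to `0` at `-∞`.
lemma jacobianDet_eq_zero_of_nonneg (hF : ContDiff ℝ 1 F) (hG : ContDiff ℝ 1 G)
    (pF : ∀ s, Function.Periodic (fun θ => F (s, θ)) T)
    (pG : ∀ s, Function.Periodic (fun θ => G (s, θ)) T) (hT : 0 < T)
    (hJ : ∀ s ≤ s₀, ∀ θ, 0 ≤ jacobianDet F G (s, θ)) {D : ℝ}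
    (hFD : ∀ s ≤ s₀, ∀ θ, |F (s, θ)| ≤ D) (hGy : ∀ s ≤ s₀, ∀ θ, |pdy G (s, θ)| ≤ C * exp s)
    (hF0 : ∀ θ ∈ Icc 0 T, F (s₀, θ) = 0) :
    ∀ s < s₀, ∀ θ ∈ Icc 0 T, jacobianDet F G (s, θ) = 0 := by
  have cJ := continuous_jacobianDet hF hG
  set Φ : ℝ → ℝ := fun s => ∫ θ in (0)..T, F (s, θ) * pdy G (s, θ) with hΦ
  have hder (s : ℝ) : HasDerivAt Φ (∫ θ in (0)..T, jacobianDet F G (s, θ)) s :=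
    hasDerivAt_integral_mul_pdy hF hG pF pG s
  have hmono : MonotoneOn Φ (Iic s₀) := by
    refine monotoneOn_of_deriv_nonneg (convex_Iic s₀)
      (fun s _ => (hder s).continuousAt.continuousWithinAt)
      (fun s _ => (hder s).differentiableAt.differentiableWithinAt) fun s hs => ?_
    have hs' : s ∈ Iic s₀ := interior_subset hs
    rw [(hder s).deriv]
    exact intervalIntegral.integral_nonneg hT.le fun θ _ => hJ s hs' θ
  have hΦ0 : Φ s₀ = 0 := by
    rw [hΦ]
    refine (intervalIntegral.integral_congr fun θ hθ => ?_).trans intervalIntegral.integral_zero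
    rw [uIcc_of_le hT.le] at hθ
    simp only [hF0 θ hθ, zero_mul]
  have hexp (s : ℝ) (hs : s ≤ s₀) : |Φ s| ≤ D * C * T * exp s := by
    have hbound := intervalIntegral.norm_integral_le_of_norm_le_const (a := 0) (b := T)
      (f := fun θ => F (s, θ) * pdy G (s, θ)) (C := D * (C * exp s)) fun θ _ => by
        rw [norm_mul]
        exact mul_le_mul (hFD s hs θ) (hGy s hs θ) (abs_nonneg _)
          ((abs_nonneg _).trans (hFD s hs θ))
    rw [sub_zero, abs_of_pos hT] at hbound
    exact hbound.trans_eq (by ring)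
  have hzero := eqOn_zero_of_monotoneOn_of_abs_le_exp hmono hΦ0 hexp
  intro s hs θ hθ
  have hint : ∫ θ in (0)..T, jacobianDet F G (s, θ) = 0 :=
    (hder s).unique ((hasDerivAt_const s (0 : ℝ)).congr_of_eventuallyEq
      (hzero.eventuallyEq_of_mem (Iic_mem_nhds hs)))
  by_contra hne
  exact (intervalIntegral.integral_pos hT (by fun_prop) (fun θ _ => hJ s hs.le θ)
    ⟨θ, hθ, (hJ s hs.le θ).lt_of_ne' hne⟩).ne' hint

-- Apply the previous lemma to `β (F - M)`, where `β ≥ 0` is smooth, nondecreasing and vanishes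
-- exactly on `(-∞, 0]`: this function does not depend on `s`, and it vanishes at `s₀`.
lemma le_of_jacobianDet_nonneg (hF : ContDiff ℝ 1 F) (hG : ContDiff ℝ 1 G)
    (pF : ∀ s, Function.Periodic (fun θ => F (s, θ)) T)
    (pG : ∀ s, Function.Periodic (fun θ => G (s, θ)) T) (hT : 0 < T) {M : ℝ}
    (hJ : ∀ s ≤ s₀, ∀ θ, 0 ≤ jacobianDet F G (s, θ))
    (hJ0 : ∀ s ≤ s₀, ∀ θ, jacobianDet F G (s, θ) = 0 → pdx F (s, θ) = 0)
    (hFC : ∀ s ≤ s₀, ∀ θ, |F (s, θ)| ≤ C) (hGy : ∀ s ≤ s₀, ∀ θ, |pdy G (s, θ)| ≤ C * exp s)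
    (hM : ∀ θ ∈ Icc 0 T, F (s₀, θ) ≤ M) :
    ∀ s ≤ s₀, ∀ θ ∈ Icc 0 T, F (s, θ) ≤ M := by
  have hβ : ContDiff ℝ 1 expNegInvGlue := expNegInvGlue.contDiff
  set B : ℝ × ℝ → ℝ := fun z => expNegInvGlue (F z - M) with hB
  have hBc : ContDiff ℝ 1 B := hβ.comp (hF.sub contDiff_const)
  have pB (s : ℝ) : Function.Periodic (fun θ => B (s, θ)) T := fun θ => by
    have := pF s θ
    simp only [hB] at this ⊢
    rw [this]
  have gB (z : ℝ × ℝ) := HasGrad.scomp (hβ.differentiable one_ne_zero (F z - M)).hasDerivAt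
    ((hasGrad_of_contDiff hF z).sub (hasGrad_const M z))
  have hJB (z : ℝ × ℝ) : jacobianDet B G z =
      deriv expNegInvGlue (F z - M) * jacobianDet F G z := by
    rw [jacobianDet, (gB z).pdx_eq, (gB z).pdy_eq, jacobianDet]
    ring
  have hB0 : ∀ θ ∈ Icc 0 T, B (s₀, θ) = 0 := fun θ hθ =>
    expNegInvGlue.zero_of_nonpos (sub_nonpos.2 (hM θ hθ))
  have hBC : ∀ s ≤ s₀, ∀ θ, |B (s, θ)| ≤ expNegInvGlue (C - M) := fun s hs θ => by
    rw [abs_of_nonneg (expNegInvGlue.nonneg _)]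
    exact expNegInvGlue.monotone (by linarith [(abs_le.1 (hFC s hs θ)).2])
  have hJB0 := jacobianDet_eq_zero_of_nonneg hBc hG pB pG hT
    (fun s hs θ => hJB _ ▸ mul_nonneg expNegInvGlue.monotone.deriv_nonneg (hJ s hs θ)) hBC hGy hB0
  intro s hs θ hθ
  have hconst : B (s₀, θ) = B (s, θ) := by
    refine constant_of_has_deriv_right_zero (f := fun s => B (s, θ))
      (by have := hBc.continuous; fun_prop) (fun t ht => ?_) s₀ ⟨hs, le_rfl⟩
    refine ((gB (t, θ)).hasDerivAt_fst.congr_deriv ?_).hasDerivWithinAt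
    rcases mul_eq_zero.1 ((hJB _).symm.trans (hJB0 t ht.2 θ hθ)) with h | h
    · rw [h, zero_mul]
    · rw [hJ0 t ht.2.le θ h, sub_zero, mul_zero]
  by_contra! hlt
  exact (expNegInvGlue.pos_of_pos (sub_pos.2 hlt)).ne' (hconst.symm.trans (hB0 θ hθ))

end MaximumPrinciple

lemma sq_integral_le_mul_integral_sq {k : ℝ → ℝ} (hk : Continuous k) {a b : ℝ} (hab : a < b) :
    (∫ θ in a..b, k θ) ^ 2 ≤ (b - a) * ∫ θ in a..b, k θ ^ 2 := by
  set I := ∫ θ in a..b, k θ with hI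
  have hvar : 0 ≤ ∫ θ in a..b, ((b - a) * k θ - I) ^ 2 :=
    intervalIntegral.integral_nonneg hab.le fun θ _ => sq_nonneg _
  have hexpand : ∫ θ in a..b, ((b - a) * k θ - I) ^ 2
      = (b - a) * ((b - a) * (∫ θ in a..b, k θ ^ 2) - I ^ 2) := by
    have (θ : ℝ) : ((b - a) * k θ - I) ^ 2 =
        (b - a) ^ 2 * k θ ^ 2 - (2 * (b - a) * I) * k θ + I ^ 2 := by ring
    simp only [this]
    rw [intervalIntegral.integral_add, intervalIntegral.integral_sub,
      intervalIntegral.integral_const_mul, intervalIntegral.integral_const_mul, ← hI,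
      intervalIntegral.integral_const, smul_eq_mul]
    · ring
    all_goals exact Continuous.intervalIntegrable (by fun_prop) _ _
  rw [hexpand] at hvar
  exact sub_nonneg.1 (nonneg_of_mul_nonneg_right hvar (sub_pos.2 hab))

section Riccati

variable {Φ e : ℝ → ℝ} {C a b : ℝ}

lemma monotoneOn_of_sq_le_mul_deriv (hC : 0 < C) (hd : ∀ s ∈ Icc a b, HasDerivAt Φ (e s) s)
    (h : ∀ s ∈ Icc a b, Φ s ^ 2 ≤ C * e s) : MonotoneOn Φ (Icc a b) := by
  refine monotoneOn_of_deriv_nonneg (convex_Icc a b)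
    (fun s hs => (hd s hs).continuousAt.continuousWithinAt)
    (fun s hs => (hd s (interior_subset hs)).differentiableAt.differentiableWithinAt) fun s hs => ?_
  rw [(hd s (interior_subset hs)).deriv]
  exact nonneg_of_mul_nonneg_right ((sq_nonneg _).trans (h s (interior_subset hs))) hC

lemma mul_lt_of_sq_le_mul_deriv_of_pos (hC : 0 < C) (hab : a ≤ b)
    (hd : ∀ s ∈ Icc a b, HasDerivAt Φ (e s) s) (h : ∀ s ∈ Icc a b, Φ s ^ 2 ≤ C * e s)
    (ha : 0 < Φ a) : (b - a) * Φ a < C := by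
  have hmono := monotoneOn_of_sq_le_mul_deriv hC hd h
  have hpos : ∀ s ∈ Icc a b, 0 < Φ s := fun s hs => ha.trans_le (hmono ⟨le_rfl, hab⟩ hs hs.1)
  have hd' : ∀ s ∈ Icc a b, HasDerivAt (fun s => -(Φ s)⁻¹) (e s / Φ s ^ 2) s := fun s hs =>
    ((hd s hs).inv (hpos s hs).ne').neg.congr_deriv (by ring)
  have hgrowth : 1 / C * (b - a) ≤ -(Φ b)⁻¹ - -(Φ a)⁻¹ := by
    refine (convex_Icc a b).mul_sub_le_image_sub_of_le_deriv (f := fun s => -(Φ s)⁻¹)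
      (fun s hs => (hd' s hs).continuousAt.continuousWithinAt)
      (fun s hs => (hd' s (interior_subset hs)).differentiableAt.differentiableWithinAt)
      (fun s hs => ?_) a ⟨le_rfl, hab⟩ b ⟨hab, le_rfl⟩ hab
    have hs' := interior_subset hs
    rw [(hd' s hs').deriv, div_le_div_iff₀ hC (pow_pos (hpos s hs') 2), one_mul, mul_comm (e s)]
    exact h s hs'
  have hlt : 1 / C * (b - a) < (Φ a)⁻¹ := by linarith [inv_pos.2 (hpos b ⟨hab, le_rfl⟩)]
  rw [one_div, inv_mul_eq_div, ← one_div, div_lt_div_iff₀ hC ha, one_mul] at hlt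
  exact hlt

lemma mul_neg_lt_of_sq_le_mul_deriv_of_neg (hC : 0 < C) (hab : a ≤ b)
    (hd : ∀ s ∈ Icc a b, HasDerivAt Φ (e s) s) (h : ∀ s ∈ Icc a b, Φ s ^ 2 ≤ C * e s)
    (hb : Φ b < 0) : (b - a) * -Φ b < C := by
  have hmem : ∀ s ∈ Icc (-b) (-a), -s ∈ Icc a b := fun s hs =>
    ⟨by linarith [hs.2], by linarith [hs.1]⟩
  have := mul_lt_of_sq_le_mul_deriv_of_pos (Φ := fun s => -Φ (-s)) (e := fun s => e (-s)) hC
    (neg_le_neg hab)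
    (fun s hs => ((hd (-s) (hmem s hs)).scomp s (hasDerivAt_neg s)).neg.congr_deriv (by simp))
    (fun s hs => (neg_sq _).trans_le (h (-s) (hmem s hs))) (by simpa using hb)
  simpa [neg_add_eq_sub] using this

lemma exists_le_of_sq_le_mul_deriv {L : ℝ} (hC : 0 < C) (hL : 0 < L)
    (hd : ∀ s ∈ Icc (-L) 0, HasDerivAt Φ (e s) s) (h : ∀ s ∈ Icc (-L) 0, Φ s ^ 2 ≤ C * e s) :
    ∃ s ∈ Icc (-L) 0, e s ≤ 18 * C / L ^ 2 := by
  by_contra! hlarge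
  have hmid : 18 * C / L ^ 2 * (-(L / 3) - -(2 * L / 3)) ≤ Φ (-(L / 3)) - Φ (-(2 * L / 3)) := by
    refine (convex_Icc (-L) 0).mul_sub_le_image_sub_of_le_deriv
      (fun s hs => (hd s hs).continuousAt.continuousWithinAt)
      (fun s hs => (hd s (interior_subset hs)).differentiableAt.differentiableWithinAt)
      (fun s hs => ?_) _ ⟨by linarith, by linarith⟩ _ ⟨by linarith, by linarith⟩ (by linarith)
    rw [(hd s (interior_subset hs)).deriv]
    exact (hlarge s (interior_subset hs)).le
  have hjump : 6 * C ≤ (Φ (-(L / 3)) - Φ (-(2 * L / 3))) * L := by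
    have := mul_le_mul_of_nonneg_right hmid hL.le
    refine le_trans (le_of_eq ?_) this
    field_simp
    ring
  have hright : L / 3 * Φ (-(L / 3)) < C := by
    rcases le_or_gt (Φ (-(L / 3))) 0 with h0 | h0
    · nlinarith
    have hsub : Icc (-(L / 3)) 0 ⊆ Icc (-L) 0 := Icc_subset_Icc_left (by linarith)
    simpa using mul_lt_of_sq_le_mul_deriv_of_pos hC (by linarith) (fun s hs => hd s (hsub hs))
      (fun s hs => h s (hsub hs)) h0
  have hleft : L / 3 * -Φ (-(2 * L / 3)) < C := by
    rcases le_or_gt 0 (Φ (-(2 * L / 3))) with h0 | h0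
    · nlinarith
    have hsub : Icc (-L) (-(2 * L / 3)) ⊆ Icc (-L) 0 := Icc_subset_Icc_right (by linarith)
    have := mul_neg_lt_of_sq_le_mul_deriv_of_neg hC (by linarith) (fun s hs => hd s (hsub hs))
      (fun s hs => h s (hsub hs)) h0
    rwa [show -(2 * L / 3) - -L = L / 3 by ring] at this
  linarith

end Riccati

/-! ### Courant–Lebesgue estimate -/

lemma IsQuasiconformalPair.gradient_sq_le {f g : ℝ × ℝ → ℝ} {W : ℝ} {z : ℝ × ℝ}
    (h : IsQuasiconformalPair f g W z) :
    pdx f z ^ 2 + pdy f z ^ 2 ≤ 9 * W ^ 2 * jacobianDet f g z := by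
  obtain ⟨a, b, c, d, hf, hg, hfg, -⟩ := h
  rwa [jacobianDet, hf.pdx_eq, hf.pdy_eq, hg.pdx_eq, hg.pdy_eq]

lemma IsQuasiconformalPair.conjugate_gradient_sq_le {f g : ℝ × ℝ → ℝ} {W : ℝ} {z : ℝ × ℝ}
    (h : IsQuasiconformalPair f g W z) :
    W ^ 4 * (pdx g z ^ 2 + pdy g z ^ 2) ≤ 60 * (pdx f z ^ 2 + pdy f z ^ 2) := by
  obtain ⟨a, b, c, d, hf, hg, -, hgf⟩ := h
  rwa [hf.pdx_eq, hf.pdy_eq, hg.pdx_eq, hg.pdy_eq]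

/-- The area element `√(1 + f₁² + f₂²)` of a pair standing for the two components of a gradient. -/
def areaElement (f₁ f₂ : ℝ × ℝ → ℝ) (z : ℝ × ℝ) : ℝ := √(1 + f₁ z ^ 2 + f₂ z ^ 2)

/-- The Dirichlet density `|∇f₁|² + |∇f₂|²`. -/
def dirichletDensity (f₁ f₂ : ℝ × ℝ → ℝ) (z : ℝ × ℝ) : ℝ :=
  pdx f₁ z ^ 2 + pdy f₁ z ^ 2 + (pdx f₂ z ^ 2 + pdy f₂ z ^ 2)

/-- The size of the derivative of `(f₁, f₂)` relative to the area element. It bounds the derivative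
of the logarithm of the area element. -/
def relGradient (f₁ f₂ : ℝ × ℝ → ℝ) (z : ℝ × ℝ) : ℝ :=
  √(dirichletDensity f₁ f₂ z) / areaElement f₁ f₂ z

/-- `(f₁, g₁)` and `(f₂, g₂)` are quasi-conformal pairs for the common weight `areaElement f₁ f₂`:
the structure satisfied by the gradient and the relative flux of a solution in a chart. -/
structure IsQuasiconformalSystem (f₁ f₂ g₁ g₂ : ℝ × ℝ → ℝ) (z : ℝ × ℝ) : Prop where
  fst : IsQuasiconformalPair f₁ g₁ (areaElement f₁ f₂ z) z
  snd : IsQuasiconformalPair f₂ g₂ (areaElement f₁ f₂ z) z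

section AreaElement

variable {f₁ f₂ g₁ g₂ : ℝ × ℝ → ℝ} {z : ℝ × ℝ}

lemma areaElement_sq (f₁ f₂ : ℝ × ℝ → ℝ) (z : ℝ × ℝ) :
    areaElement f₁ f₂ z ^ 2 = 1 + f₁ z ^ 2 + f₂ z ^ 2 :=
  sq_sqrt (by positivity)

lemma one_le_areaElement (f₁ f₂ : ℝ × ℝ → ℝ) (z : ℝ × ℝ) : 1 ≤ areaElement f₁ f₂ z :=
  one_le_sqrt.2 (by linarith [sq_nonneg (f₁ z), sq_nonneg (f₂ z)])

lemma areaElement_pos (f₁ f₂ : ℝ × ℝ → ℝ) (z : ℝ × ℝ) : 0 < areaElement f₁ f₂ z :=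
  zero_lt_one.trans_le (one_le_areaElement f₁ f₂ z)

lemma areaElement_comm (f₁ f₂ : ℝ × ℝ → ℝ) : areaElement f₁ f₂ = areaElement f₂ f₁ := by
  funext z
  rw [areaElement, areaElement, add_right_comm]

lemma relGradient_comm (f₁ f₂ : ℝ × ℝ → ℝ) : relGradient f₁ f₂ = relGradient f₂ f₁ := by
  funext z
  rw [relGradient, relGradient, dirichletDensity, dirichletDensity, areaElement_comm, add_comm]

lemma IsQuasiconformalSystem.swap (h : IsQuasiconformalSystem f₁ f₂ g₁ g₂ z) :
    IsQuasiconformalSystem f₂ f₁ g₂ g₁ z :=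
  ⟨areaElement_comm f₁ f₂ ▸ h.snd, areaElement_comm f₁ f₂ ▸ h.fst⟩

lemma areaElement_le_add (f₁ f₂ : ℝ × ℝ → ℝ) (z w : ℝ × ℝ) :
    areaElement f₁ f₂ z ≤ areaElement f₁ f₂ w + |f₁ z - f₁ w| + |f₂ z - f₂ w| := by
  have hw := areaElement_sq f₁ f₂ w
  have hw0 := (areaElement_pos f₁ f₂ w).le
  set A := areaElement f₁ f₂ w
  have h₁ : |f₁ w| ≤ A := abs_le_of_sq_le_sq (by linarith [sq_nonneg (f₂ w)]) hw0
  have h₂ : |f₂ w| ≤ A := abs_le_of_sq_le_sq (by linarith [sq_nonneg (f₁ w)]) hw0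
  have hcross₁ : f₁ w * (f₁ z - f₁ w) ≤ A * |f₁ z - f₁ w| :=
    (le_abs_self _).trans (by rw [abs_mul]; gcongr)
  have hcross₂ : f₂ w * (f₂ z - f₂ w) ≤ A * |f₂ z - f₂ w| :=
    (le_abs_self _).trans (by rw [abs_mul]; gcongr)
  have hprod : 0 ≤ |f₁ z - f₁ w| * |f₂ z - f₂ w| := by positivity
  refine sqrt_le_iff.2 ⟨by positivity, ?_⟩
  linear_combination 2 * hcross₁ + 2 * hcross₂ + 2 * hprod - hw - sq_abs (f₁ z - f₁ w)
    - sq_abs (f₂ z - f₂ w)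

lemma dirichletDensity_nonneg (f₁ f₂ : ℝ × ℝ → ℝ) (z : ℝ × ℝ) : 0 ≤ dirichletDensity f₁ f₂ z := by
  unfold dirichletDensity
  positivity

lemma abs_pdy_le_sqrt_dirichletDensity (f₁ f₂ : ℝ × ℝ → ℝ) (z : ℝ × ℝ) :
    |pdy f₁ z| ≤ √(dirichletDensity f₁ f₂ z) := by
  refine abs_le_sqrt ?_
  unfold dirichletDensity
  linarith [sq_nonneg (pdx f₁ z), sq_nonneg (pdx f₂ z), sq_nonneg (pdy f₂ z)]

lemma continuous_areaElement (hf₁ : Continuous f₁) (hf₂ : Continuous f₂) :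
    Continuous (areaElement f₁ f₂) := by
  unfold areaElement
  fun_prop

lemma continuous_relGradient (hf₁ : ContDiff ℝ 1 f₁) (hf₂ : ContDiff ℝ 1 f₂) :
    Continuous (relGradient f₁ f₂) := by
  have := continuous_pdx hf₁
  have := continuous_pdy hf₁
  have := continuous_pdx hf₂
  have := continuous_pdy hf₂
  have hD : Continuous (dirichletDensity f₁ f₂) := by
    unfold dirichletDensity
    fun_prop
  exact hD.sqrt.div (continuous_areaElement hf₁.continuous hf₂.continuous)
    fun z => (areaElement_pos f₁ f₂ z).ne'

namespace IsQuasiconformalSystem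

lemma relGradient_sq_le (h : IsQuasiconformalSystem f₁ f₂ g₁ g₂ z) :
    relGradient f₁ f₂ z ^ 2 ≤ 9 * (jacobianDet f₁ g₁ z + jacobianDet f₂ g₂ z) := by
  have hW := areaElement_pos f₁ f₂ z
  rw [relGradient, div_pow, sq_sqrt (dirichletDensity_nonneg f₁ f₂ z),
    div_le_iff₀ (by positivity), dirichletDensity]
  linarith [h.fst.gradient_sq_le, h.snd.gradient_sq_le]

lemma conjugate_sq_le (h : IsQuasiconformalSystem f₁ f₂ g₁ g₂ z) :
    (f₁ z * pdy g₁ z + f₂ z * pdy g₂ z) ^ 2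
      ≤ 540 * (jacobianDet f₁ g₁ z + jacobianDet f₂ g₂ z) := by
  have hW := areaElement_pos f₁ f₂ z
  have hWsq := areaElement_sq f₁ f₂ z
  obtain ⟨h₁, h₂⟩ := h
  have hf₁ := h₁.gradient_sq_le
  have hg₁ := h₁.conjugate_gradient_sq_le
  have hf₂ := h₂.gradient_sq_le
  have hg₂ := h₂.conjugate_gradient_sq_le
  set W := areaElement f₁ f₂ z
  have hcauchy : (f₁ z * pdy g₁ z + f₂ z * pdy g₂ z) ^ 2
      ≤ W ^ 2 * (pdy g₁ z ^ 2 + pdy g₂ z ^ 2) := by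
    rw [hWsq]
    linarith [sq_nonneg (f₁ z * pdy g₂ z - f₂ z * pdy g₁ z), sq_nonneg (pdy g₁ z),
      sq_nonneg (pdy g₂ z)]
  have hweight : W ^ 2 * (W ^ 2 * (pdy g₁ z ^ 2 + pdy g₂ z ^ 2)) ≤
      W ^ 2 * (540 * (jacobianDet f₁ g₁ z + jacobianDet f₂ g₂ z)) := by
    have : 0 ≤ W ^ 4 * (pdx g₁ z ^ 2 + pdx g₂ z ^ 2) := by positivity
    linarith
  exact hcauchy.trans (le_of_mul_le_mul_left hweight (by positivity))

end IsQuasiconformalSystem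

end AreaElement

section GoodCircle

variable {F₁ F₂ G₁ G₂ : ℝ × ℝ → ℝ} {s L : ℝ}

lemma sq_integral_conjugate_le (hF₁ : ContDiff ℝ 1 F₁) (hF₂ : ContDiff ℝ 1 F₂)
    (hG₁ : ContDiff ℝ 1 G₁) (hG₂ : ContDiff ℝ 1 G₂)
    (h : ∀ θ, IsQuasiconformalSystem F₁ F₂ G₁ G₂ (s, θ)) :
    ((∫ θ in (0)..(2 * π), F₁ (s, θ) * pdy G₁ (s, θ)) +
        ∫ θ in (0)..(2 * π), F₂ (s, θ) * pdy G₂ (s, θ)) ^ 2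
      ≤ 1080 * π * ((∫ θ in (0)..(2 * π), jacobianDet F₁ G₁ (s, θ)) +
        ∫ θ in (0)..(2 * π), jacobianDet F₂ G₂ (s, θ)) := by
  have := hF₁.continuous
  have := hF₂.continuous
  have := continuous_pdy hG₁
  have := continuous_pdy hG₂
  have := continuous_jacobianDet hF₁ hG₁
  have := continuous_jacobianDet hF₂ hG₂
  rw [← intervalIntegral.integral_add (Continuous.intervalIntegrable (by fun_prop) _ _)
      (Continuous.intervalIntegrable (by fun_prop) _ _),
    ← intervalIntegral.integral_add (Continuous.intervalIntegrable (by fun_prop) _ _)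
      (Continuous.intervalIntegrable (by fun_prop) _ _)]
  refine (sq_integral_le_mul_integral_sq (by fun_prop) two_pi_pos).trans ?_
  rw [sub_zero, show 1080 * π = 2 * π * 540 by ring, mul_assoc (2 * π),
    ← intervalIntegral.integral_const_mul 540]
  refine mul_le_mul_of_nonneg_left ?_ two_pi_pos.le
  exact intervalIntegral.integral_mono_on two_pi_pos.le
    (Continuous.intervalIntegrable (by fun_prop) _ _)
    (Continuous.intervalIntegrable (by fun_prop) _ _) fun θ _ => (h θ).conjugate_sq_le

lemma sq_integral_relGradient_le (hF₁ : ContDiff ℝ 1 F₁) (hF₂ : ContDiff ℝ 1 F₂)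
    (hG₁ : ContDiff ℝ 1 G₁) (hG₂ : ContDiff ℝ 1 G₂)
    (h : ∀ θ, IsQuasiconformalSystem F₁ F₂ G₁ G₂ (s, θ)) :
    (∫ θ in (0)..(2 * π), relGradient F₁ F₂ (s, θ)) ^ 2
      ≤ 18 * π * ((∫ θ in (0)..(2 * π), jacobianDet F₁ G₁ (s, θ)) +
        ∫ θ in (0)..(2 * π), jacobianDet F₂ G₂ (s, θ)) := by
  have := continuous_relGradient hF₁ hF₂
  have := continuous_jacobianDet hF₁ hG₁
  have := continuous_jacobianDet hF₂ hG₂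
  rw [← intervalIntegral.integral_add (Continuous.intervalIntegrable (by fun_prop) _ _)
    (Continuous.intervalIntegrable (by fun_prop) _ _)]
  refine (sq_integral_le_mul_integral_sq (by fun_prop) two_pi_pos).trans ?_
  rw [sub_zero, show 18 * π = 2 * π * 9 by ring, mul_assoc (2 * π),
    ← intervalIntegral.integral_const_mul 9]
  refine mul_le_mul_of_nonneg_left ?_ two_pi_pos.le
  exact intervalIntegral.integral_mono_on two_pi_pos.le
    (Continuous.intervalIntegrable (by fun_prop) _ _)
    (Continuous.intervalIntegrable (by fun_prop) _ _) fun θ _ => (h θ).relGradient_sq_le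

-- `Φ = ∮ F₁ dG₁ + ∮ F₂ dG₂` satisfies `Φ² ≤ C Φ'`, so that `Φ' = O(1 / L²)` on some circle.
lemma exists_integral_relGradient_le (hF₁ : ContDiff ℝ 1 F₁) (hF₂ : ContDiff ℝ 1 F₂)
    (hG₁ : ContDiff ℝ 1 G₁) (hG₂ : ContDiff ℝ 1 G₂)
    (pF₁ : ∀ s, Function.Periodic (fun θ => F₁ (s, θ)) (2 * π))
    (pF₂ : ∀ s, Function.Periodic (fun θ => F₂ (s, θ)) (2 * π))
    (pG₁ : ∀ s, Function.Periodic (fun θ => G₁ (s, θ)) (2 * π))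
    (pG₂ : ∀ s, Function.Periodic (fun θ => G₂ (s, θ)) (2 * π)) (hL : 0 < L)
    (h : ∀ s ≤ 0, ∀ θ, IsQuasiconformalSystem F₁ F₂ G₁ G₂ (s, θ)) :
    ∃ s ∈ Icc (-L) 0, ∫ θ in (0)..(2 * π), relGradient F₁ F₂ (s, θ) ≤ 2000 / L := by
  obtain ⟨s, hs, hes⟩ := exists_le_of_sq_le_mul_deriv (by positivity : 0 < 1080 * π) hL
    (fun s _ => (hasDerivAt_integral_mul_pdy hF₁ hG₁ pF₁ pG₁ s).add
      (hasDerivAt_integral_mul_pdy hF₂ hG₂ pF₂ pG₂ s))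
    fun s hs => sq_integral_conjugate_le hF₁ hF₂ hG₁ hG₂ (h s hs.2)
  refine ⟨s, hs, abs_le_of_sq_le_sq ?_ (by positivity) |> (le_abs_self _).trans⟩
  have hpi : π ^ 2 ≤ 10 := by nlinarith [pi_lt_d2, pi_pos]
  calc (∫ θ in (0)..(2 * π), relGradient F₁ F₂ (s, θ)) ^ 2
      ≤ 18 * π * ((∫ θ in (0)..(2 * π), jacobianDet F₁ G₁ (s, θ)) +
        ∫ θ in (0)..(2 * π), jacobianDet F₂ G₂ (s, θ)) :=
        sq_integral_relGradient_le hF₁ hF₂ hG₁ hG₂ (h s hs.2)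
    _ ≤ 18 * π * (18 * (1080 * π) / L ^ 2) := mul_le_mul_of_nonneg_left hes (by positivity)
    _ = 349920 * π ^ 2 / L ^ 2 := by ring
    _ ≤ 349920 * 10 / L ^ 2 := by gcongr
    _ ≤ (2000 / L) ^ 2 := by rw [div_pow]; gcongr; norm_num

end GoodCircle

/-! ### From circles to discs -/

section Conformal

variable {f g : ℝ × ℝ → ℝ} {W : ℝ} {z : ℝ × ℝ}

lemma IsQuasiconformalPair.comp_conformal {E : ℝ × ℝ → ℝ × ℝ} {L : ℝ × ℝ →L[ℝ] ℝ × ℝ} {p q : ℝ}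
    (h : IsQuasiconformalPair f g W (E z)) (hE : HasFDerivAt E L z) (hx : L (1, 0) = (p, q))
    (hy : L (0, 1) = (-q, p)) :
    IsQuasiconformalPair (fun z => f (E z)) (fun z => g (E z)) W z := by
  obtain ⟨a, b, c, d, hf, hg, hfg, hgf⟩ := h
  refine ⟨_, _, _, _, hf.comp hE, hg.comp hE, ?_, ?_⟩
  all_goals simp only [hx, hy, linForm_apply]
  · linear_combination (p ^ 2 + q ^ 2) * hfg
  · linear_combination (p ^ 2 + q ^ 2) * hgf

/-- Logarithmic polar coordinates. -/
def logPolar (z : ℝ × ℝ) : ℝ × ℝ := (exp z.1 * cos z.2, exp z.1 * sin z.2)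

lemma contDiff_logPolar : ContDiff ℝ 1 logPolar := by
  unfold logPolar
  fun_prop

lemma periodic_comp_logPolar (f : ℝ × ℝ → ℝ) (s : ℝ) :
    Function.Periodic (fun θ => f (logPolar (s, θ))) (2 * π) := fun θ => by
  simp only [logPolar, cos_add_two_pi, sin_add_two_pi]

lemma logPolar_sq (z : ℝ × ℝ) : (logPolar z).1 ^ 2 + (logPolar z).2 ^ 2 = exp z.1 ^ 2 := by
  simp only [logPolar]
  linear_combination exp z.1 ^ 2 * sin_sq_add_cos_sq z.2

lemma logPolar_sq_le {s₀ s : ℝ} (hs : s ≤ s₀) (θ : ℝ) :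
    (logPolar (s, θ)).1 ^ 2 + (logPolar (s, θ)).2 ^ 2 ≤ exp s₀ ^ 2 := by
  rw [logPolar_sq]
  gcongr

lemma hasFDerivAt_logPolar (z : ℝ × ℝ) :
    HasFDerivAt logPolar ((linForm (exp z.1 * cos z.2) (-(exp z.1 * sin z.2))).prod
      (linForm (exp z.1 * sin z.2) (exp z.1 * cos z.2))) z := by
  have hexp := HasGrad.scomp (hasDerivAt_exp z.1) (hasGrad_fst z)
  have hcos := HasGrad.scomp (hasDerivAt_cos z.2) (hasGrad_snd z)
  have hsin := HasGrad.scomp (hasDerivAt_sin z.2) (hasGrad_snd z)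
  exact HasFDerivAt.prodMk ((hexp.mul hcos).congr_grad (by ring) (by ring))
    ((hexp.mul hsin).congr_grad (by ring) (by ring))

lemma HasGrad.comp_logPolar {a b : ℝ} (hf : HasGrad f a b (logPolar z)) :
    HasGrad (fun z => f (logPolar z)) (exp z.1 * (a * cos z.2 + b * sin z.2))
      (exp z.1 * (b * cos z.2 - a * sin z.2)) z :=
  (hf.comp (hasFDerivAt_logPolar z)).congr_grad (by simp; ring) (by simp; ring)

lemma IsQuasiconformalSystem.comp_logPolar {f₁ f₂ g₁ g₂ : ℝ × ℝ → ℝ}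
    (h : IsQuasiconformalSystem f₁ f₂ g₁ g₂ (logPolar z)) :
    IsQuasiconformalSystem (fun z => f₁ (logPolar z)) (fun z => f₂ (logPolar z))
      (fun z => g₁ (logPolar z)) (fun z => g₂ (logPolar z)) z :=
  ⟨h.fst.comp_conformal (p := exp z.1 * cos z.2) (q := exp z.1 * sin z.2)
      (hasFDerivAt_logPolar z) (by simp) (by simp),
    h.snd.comp_conformal (p := exp z.1 * cos z.2) (q := exp z.1 * sin z.2)
      (hasFDerivAt_logPolar z) (by simp) (by simp)⟩

lemma jacobianDet_comp_logPolar (hf : ContDiff ℝ 1 f) (hg : ContDiff ℝ 1 g) (z : ℝ × ℝ) :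
    jacobianDet (fun z => f (logPolar z)) (fun z => g (logPolar z)) z =
      exp z.1 ^ 2 * jacobianDet f g (logPolar z) := by
  have hf' := (hasGrad_of_contDiff hf (logPolar z)).comp_logPolar
  have hg' := (hasGrad_of_contDiff hg (logPolar z)).comp_logPolar
  rw [jacobianDet, jacobianDet, hf'.pdx_eq, hf'.pdy_eq, hg'.pdx_eq, hg'.pdy_eq]
  linear_combination exp z.1 ^ 2 * (pdx f (logPolar z) * pdy g (logPolar z)
    - pdy f (logPolar z) * pdx g (logPolar z)) * sin_sq_add_cos_sq z.2

lemma exists_logPolar_eq {ζ : ℝ × ℝ} (h : ζ ≠ 0) :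
    ∃ s, ∃ θ ∈ Icc 0 (2 * π), logPolar (s, θ) = ζ := by
  set c : ℂ := ⟨ζ.1, ζ.2⟩
  have hc0 : 0 < ‖c‖ := norm_pos_iff.2 fun h0 =>
    h (Prod.ext (congrArg Complex.re h0) (congrArg Complex.im h0))
  have hcos : ‖c‖ * cos c.arg = ζ.1 := Complex.norm_mul_cos_arg c
  have hsin : ‖c‖ * sin c.arg = ζ.2 := Complex.norm_mul_sin_arg c
  have harg := Complex.arg_mem_Ioc c
  rcases le_or_gt 0 c.arg with h0 | h0
  · refine ⟨log ‖c‖, c.arg, ⟨h0, by linarith [harg.2, pi_pos]⟩, ?_⟩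
    simp only [logPolar, exp_log hc0, hcos, hsin]
  · refine ⟨log ‖c‖, c.arg + 2 * π, ⟨by linarith [harg.1, pi_pos], by linarith⟩, ?_⟩
    simp only [logPolar, exp_log hc0, cos_add_two_pi, sin_add_two_pi, hcos, hsin]

lemma tendsto_logPolar_atBot (θ : ℝ) : Tendsto (fun s : ℝ => logPolar (s, θ)) atBot (nhds 0) := by
  have h : Tendsto (fun s => (exp s * cos θ, exp s * sin θ)) atBot (nhds (0 * cos θ, 0 * sin θ)) :=
    (tendsto_exp_atBot.mul_const _).prodMk_nhds (tendsto_exp_atBot.mul_const _)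
  rwa [zero_mul, zero_mul] at h

lemma exists_bound_comp_logPolar (hf : ContDiff ℝ 1 f) (s₀ : ℝ) : ∃ C, ∀ s ≤ s₀, ∀ θ,
    |f (logPolar (s, θ))| ≤ C ∧ |pdy (fun z => f (logPolar z)) (s, θ)| ≤ C * exp s := by
  have := hf.continuous
  have := continuous_pdx hf
  have := continuous_pdy hf
  obtain ⟨C, hC⟩ := (isCompact_closedBall (0 : ℝ × ℝ) (exp s₀)).exists_bound_of_continuousOn
    (f := fun z => |f z| + |pdx f z| + |pdy f z|) (by fun_prop)
  refine ⟨C, fun s hs θ => ?_⟩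
  set z := logPolar (s, θ)
  have hsum := (le_abs_self _).trans (hC z (mem_closedBall_zero_iff.2
    (norm_le_of_sq_add_sq_le (exp_pos s₀).le (logPolar_sq_le hs θ))))
  refine ⟨by linarith [abs_nonneg (pdx f z), abs_nonneg (pdy f z)], ?_⟩
  rw [(hasGrad_of_contDiff hf z).comp_logPolar.pdy_eq, abs_mul, abs_of_pos (exp_pos _), mul_comm]
  refine mul_le_mul_of_nonneg_right ?_ (exp_pos _).le
  calc |pdy f z * cos θ - pdx f z * sin θ|
      ≤ |pdy f z| * |cos θ| + |pdx f z| * |sin θ| := by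
        rw [← abs_mul, ← abs_mul]
        exact abs_sub _ _
    _ ≤ |pdy f z| * 1 + |pdx f z| * 1 := by
        gcongr
        exacts [abs_cos_le_one θ, abs_sin_le_one θ]
    _ ≤ C := by linarith [abs_nonneg (f z)]

end Conformal

section DiscMaximum

variable {f g : ℝ × ℝ → ℝ} {s₀ m M : ℝ}

lemma le_on_disc_of_jacobianDet_nonneg (hf : ContDiff ℝ 1 f) (hg : ContDiff ℝ 1 g)
    (hJ : ∀ ζ : ℝ × ℝ, ζ.1 ^ 2 + ζ.2 ^ 2 ≤ exp s₀ ^ 2 → 0 ≤ jacobianDet f g ζ)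
    (hJ0 : ∀ ζ : ℝ × ℝ, ζ.1 ^ 2 + ζ.2 ^ 2 ≤ exp s₀ ^ 2 → jacobianDet f g ζ = 0 →
      pdx f ζ = 0 ∧ pdy f ζ = 0)
    (hM : ∀ θ ∈ Icc 0 (2 * π), f (logPolar (s₀, θ)) ≤ M) :
    ∀ ζ : ℝ × ℝ, ζ.1 ^ 2 + ζ.2 ^ 2 ≤ exp s₀ ^ 2 → f ζ ≤ M := by
  obtain ⟨C, hC⟩ := exists_bound_comp_logPolar hf s₀
  obtain ⟨D, hD⟩ := exists_bound_comp_logPolar hg s₀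
  have hpolar : ∀ s ≤ s₀, ∀ θ ∈ Icc 0 (2 * π), f (logPolar (s, θ)) ≤ M := by
    refine le_of_jacobianDet_nonneg (F := fun z => f (logPolar z))
      (G := fun z => g (logPolar z)) (C := max C D) (hf.comp contDiff_logPolar)
      (hg.comp contDiff_logPolar) (periodic_comp_logPolar f) (periodic_comp_logPolar g)
      two_pi_pos (fun s hs θ => ?_) (fun s hs θ h0 => ?_)
      (fun s hs θ => (hC s hs θ).1.trans (le_max_left _ _))
      (fun s hs θ => (hD s hs θ).2.trans (by gcongr; exact le_max_right _ _)) hM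
    · rw [jacobianDet_comp_logPolar hf hg]
      exact mul_nonneg (sq_nonneg _) (hJ _ (logPolar_sq_le hs θ))
    · rw [jacobianDet_comp_logPolar hf hg, mul_eq_zero_iff_left (by positivity)] at h0
      obtain ⟨hx, hy⟩ := hJ0 _ (logPolar_sq_le hs θ) h0
      rw [(hasGrad_of_contDiff hf _).comp_logPolar.pdx_eq, hx, hy]
      ring
  intro ζ hζ
  rcases eq_or_ne ζ 0 with rfl | h0
  · refine le_of_tendsto ((hf.continuous.tendsto 0).comp (tendsto_logPolar_atBot 0)) ?_
    filter_upwards [eventually_le_atBot s₀] with s hs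
    exact hpolar s hs 0 ⟨le_rfl, two_pi_pos.le⟩
  · obtain ⟨s, θ, hθ, rfl⟩ := exists_logPolar_eq h0
    rw [logPolar_sq, sq_le_sq₀ (exp_pos _).le (exp_pos _).le, exp_le_exp] at hζ
    exact hpolar s hζ θ hθ

lemma abs_sub_le_on_disc_of_jacobianDet_nonneg (hf : ContDiff ℝ 1 f) (hg : ContDiff ℝ 1 g)
    (hJ : ∀ ζ : ℝ × ℝ, ζ.1 ^ 2 + ζ.2 ^ 2 ≤ exp s₀ ^ 2 → 0 ≤ jacobianDet f g ζ)
    (hJ0 : ∀ ζ : ℝ × ℝ, ζ.1 ^ 2 + ζ.2 ^ 2 ≤ exp s₀ ^ 2 → jacobianDet f g ζ = 0 →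
      pdx f ζ = 0 ∧ pdy f ζ = 0)
    (hM : ∀ θ ∈ Icc 0 (2 * π), |f (logPolar (s₀, θ)) - m| ≤ M) :
    ∀ ζ : ℝ × ℝ, ζ.1 ^ 2 + ζ.2 ^ 2 ≤ exp s₀ ^ 2 → |f ζ - m| ≤ M := by
  have hneg {h : ℝ × ℝ → ℝ} (hh : ContDiff ℝ 1 h) (ζ : ℝ × ℝ) :
      HasGrad (fun z => -1 * h z) (-1 * pdx h ζ) (-1 * pdy h ζ) ζ :=
    (hasGrad_of_contDiff hh ζ).const_mul (-1)
  have hJneg (ζ : ℝ × ℝ) :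
      jacobianDet (fun z => -1 * f z) (fun z => -1 * g z) ζ = jacobianDet f g ζ := by
    simp only [jacobianDet, (hneg hf ζ).pdx_eq, (hneg hf ζ).pdy_eq, (hneg hg ζ).pdx_eq,
      (hneg hg ζ).pdy_eq]
    ring
  have hupper := le_on_disc_of_jacobianDet_nonneg (M := m + M) hf hg hJ hJ0
    fun θ hθ => by linarith [(abs_le.1 (hM θ hθ)).2]
  have hlower := le_on_disc_of_jacobianDet_nonneg (M := -m + M) (contDiff_const.mul hf)
    (contDiff_const.mul hg) (fun ζ hζ => (hJ ζ hζ).trans_eq (hJneg ζ).symm)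
    (fun ζ hζ h0 => by
      rw [(hneg hf ζ).pdx_eq, (hneg hf ζ).pdy_eq, (hJ0 ζ hζ ((hJneg ζ).symm.trans h0)).1,
        (hJ0 ζ hζ ((hJneg ζ).symm.trans h0)).2, mul_zero]
      exact ⟨rfl, rfl⟩)
    fun θ hθ => by linarith [(abs_le.1 (hM θ hθ)).1]
  exact fun ζ hζ => abs_le.2 ⟨by linarith [hlower ζ hζ], by linarith [hupper ζ hζ]⟩

namespace IsQuasiconformalPair

variable {W : ℝ} {z : ℝ × ℝ}

lemma jacobianDet_nonneg (h : IsQuasiconformalPair f g W z) (hW : 0 < W) :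
    0 ≤ jacobianDet f g z :=
  nonneg_of_mul_nonneg_right ((by positivity : 0 ≤ pdx f z ^ 2 + pdy f z ^ 2).trans
    h.gradient_sq_le) (by positivity)

lemma gradient_eq_zero (h : IsQuasiconformalPair f g W z) (hJ : jacobianDet f g z = 0) :
    pdx f z = 0 ∧ pdy f z = 0 := by
  have hle := h.gradient_sq_le
  rw [hJ, mul_zero] at hle
  exact ⟨pow_eq_zero_iff two_ne_zero |>.1 (by linarith [sq_nonneg (pdx f z), sq_nonneg (pdy f z)]),
    pow_eq_zero_iff two_ne_zero |>.1 (by linarith [sq_nonneg (pdx f z), sq_nonneg (pdy f z)])⟩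

lemma conjugate_gradient_eq_zero (h : IsQuasiconformalPair f g W z) (hW : 0 < W)
    (hJ : jacobianDet f g z = 0) : pdx g z = 0 ∧ pdy g z = 0 := by
  have hle := h.conjugate_gradient_sq_le
  rw [(h.gradient_eq_zero hJ).1, (h.gradient_eq_zero hJ).2] at hle
  have hsum : pdx g z ^ 2 + pdy g z ^ 2 ≤ 0 :=
    nonpos_of_mul_nonpos_right (hle.trans_eq (by ring)) (by positivity : 0 < W ^ 4)
  exact ⟨pow_eq_zero_iff two_ne_zero |>.1 (by linarith [sq_nonneg (pdx g z), sq_nonneg (pdy g z)]),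
    pow_eq_zero_iff two_ne_zero |>.1 (by linarith [sq_nonneg (pdx g z), sq_nonneg (pdy g z)])⟩

lemma abs_sub_le_on_disc {W : ℝ × ℝ → ℝ} (hf : ContDiff ℝ 1 f) (hg : ContDiff ℝ 1 g)
    (hW : ∀ ζ, 0 < W ζ)
    (h : ∀ ζ : ℝ × ℝ, ζ.1 ^ 2 + ζ.2 ^ 2 ≤ exp s₀ ^ 2 → IsQuasiconformalPair f g (W ζ) ζ)
    (hM : ∀ θ ∈ Icc 0 (2 * π), |f (logPolar (s₀, θ)) - m| ≤ M) :
    ∀ ζ : ℝ × ℝ, ζ.1 ^ 2 + ζ.2 ^ 2 ≤ exp s₀ ^ 2 → |f ζ - m| ≤ M :=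
  abs_sub_le_on_disc_of_jacobianDet_nonneg hf hg (fun ζ hζ => (h ζ hζ).jacobianDet_nonneg (hW ζ))
    (fun ζ hζ => (h ζ hζ).gradient_eq_zero) hM

-- The pair `(g, -f)` has the same Jacobian determinant as `(f, g)`.
lemma conjugate_abs_sub_le_on_disc {W : ℝ × ℝ → ℝ} (hf : ContDiff ℝ 1 f) (hg : ContDiff ℝ 1 g)
    (hW : ∀ ζ, 0 < W ζ)
    (h : ∀ ζ : ℝ × ℝ, ζ.1 ^ 2 + ζ.2 ^ 2 ≤ exp s₀ ^ 2 → IsQuasiconformalPair f g (W ζ) ζ)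
    (hM : ∀ θ ∈ Icc 0 (2 * π), |g (logPolar (s₀, θ)) - m| ≤ M) :
    ∀ ζ : ℝ × ℝ, ζ.1 ^ 2 + ζ.2 ^ 2 ≤ exp s₀ ^ 2 → |g ζ - m| ≤ M := by
  have hJ (ζ : ℝ × ℝ) : jacobianDet g (fun z => -1 * f z) ζ = jacobianDet f g ζ := by
    have hneg := (hasGrad_of_contDiff hf ζ).const_mul (-1)
    simp only [jacobianDet, hneg.pdx_eq, hneg.pdy_eq]
    ring
  exact abs_sub_le_on_disc_of_jacobianDet_nonneg hg (contDiff_const.mul hf)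
    (fun ζ hζ => hJ ζ ▸ (h ζ hζ).jacobianDet_nonneg (hW ζ))
    (fun ζ hζ h0 => (h ζ hζ).conjugate_gradient_eq_zero (hW ζ) (hJ ζ ▸ h0)) hM

end IsQuasiconformalPair

end DiscMaximum

/-! ### Modulus of continuity in a chart -/

lemma abs_sub_le_of_abs_pdy_le {F : ℝ × ℝ → ℝ} (hF : ContDiff ℝ 1 F) {s a b I : ℝ} {k : ℝ → ℝ}
    (hk : Continuous k) (hFk : ∀ θ ∈ Icc a b, |pdy F (s, θ)| ≤ k θ) (hI : ∫ θ in a..b, k θ ≤ I)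
    {θ₁ θ₂ : ℝ} (h₁ : θ₁ ∈ Icc a b) (h₂ : θ₂ ∈ Icc a b) : |F (s, θ₁) - F (s, θ₂)| ≤ I := by
  wlog hle : θ₂ ≤ θ₁ generalizing θ₁ θ₂
  · rw [abs_sub_comm]
    exact this h₂ h₁ (le_of_not_ge hle)
  have hcont : Continuous fun θ => pdy F (s, θ) := by
    have := continuous_pdy hF
    fun_prop
  rw [← intervalIntegral.integral_eq_sub_of_hasDerivAt
    (fun θ _ => (hasGrad_of_contDiff hF (s, θ)).hasDerivAt_snd) (hcont.intervalIntegrable _ _)]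
  calc |∫ θ in θ₂..θ₁, pdy F (s, θ)| ≤ ∫ θ in θ₂..θ₁, |pdy F (s, θ)| :=
        intervalIntegral.abs_integral_le_integral_abs hle
    _ ≤ ∫ θ in θ₂..θ₁, k θ :=
        intervalIntegral.integral_mono_on hle (hcont.abs.intervalIntegrable _ _)
          (hk.intervalIntegrable _ _) fun θ hθ => hFk θ ⟨h₂.1.trans hθ.1, hθ.2.trans h₁.2⟩
    _ ≤ ∫ θ in a..b, k θ := by
        refine intervalIntegral.integral_mono_interval h₂.1 hle h₁.2 ?_ (hk.intervalIntegrable _ _)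
        filter_upwards [ae_restrict_mem measurableSet_Ioc] with θ hθ
        exact (abs_nonneg _).trans (hFk θ ⟨hθ.1.le, hθ.2⟩)
    _ ≤ I := hI

section CircleOscillation

variable {F₁ F₂ G₁ G₂ : ℝ × ℝ → ℝ} {s σ θ₀ θ : ℝ}

lemma abs_sub_le_on_circle (hF₁ : ContDiff ℝ 1 F₁) (hF₂ : ContDiff ℝ 1 F₂)
    (hint : ∫ θ in (0)..(2 * π), relGradient F₁ F₂ (s, θ) ≤ σ)
    (hmax : IsMaxOn (fun θ => areaElement F₁ F₂ (s, θ)) (Icc 0 (2 * π)) θ₀)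
    (hθ₀ : θ₀ ∈ Icc 0 (2 * π)) (hθ : θ ∈ Icc 0 (2 * π)) :
    |F₁ (s, θ) - F₁ (s, θ₀)| ≤ areaElement F₁ F₂ (s, θ₀) * σ := by
  have hcont := continuous_relGradient hF₁ hF₂
  refine abs_sub_le_of_abs_pdy_le hF₁
    (k := fun θ => areaElement F₁ F₂ (s, θ₀) * relGradient F₁ F₂ (s, θ)) (by fun_prop)
    (fun θ hθ => (abs_pdy_le_sqrt_dirichletDensity F₁ F₂ _).trans ?_) ?_ hθ hθ₀
  · rw [relGradient, ← mul_div_assoc, le_div_iff₀ (areaElement_pos F₁ F₂ _), mul_comm]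
    exact mul_le_mul_of_nonneg_right (hmax hθ) (sqrt_nonneg _)
  · rw [intervalIntegral.integral_const_mul]
    exact mul_le_mul_of_nonneg_left hint (areaElement_pos F₁ F₂ _).le

lemma areaElement_le_two_mul_on_circle (hF₁ : ContDiff ℝ 1 F₁) (hF₂ : ContDiff ℝ 1 F₂)
    (hσ : σ ≤ 1 / 8) (hint : ∫ θ in (0)..(2 * π), relGradient F₁ F₂ (s, θ) ≤ σ)
    (hmax : IsMaxOn (fun θ => areaElement F₁ F₂ (s, θ)) (Icc 0 (2 * π)) θ₀)
    (hθ₀ : θ₀ ∈ Icc 0 (2 * π)) (hθ : θ ∈ Icc 0 (2 * π)) :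
    areaElement F₁ F₂ (s, θ₀) ≤ 2 * areaElement F₁ F₂ (s, θ) := by
  have h₁ := abs_sub_le_on_circle hF₁ hF₂ hint hmax hθ₀ hθ
  rw [relGradient_comm] at hint
  rw [areaElement_comm] at hmax
  have h₂ := abs_sub_le_on_circle hF₂ hF₁ hint hmax hθ₀ hθ
  rw [abs_sub_comm] at h₁ h₂
  rw [areaElement_comm] at h₂
  have hσ' := mul_le_mul_of_nonneg_left hσ (areaElement_pos F₁ F₂ (s, θ₀)).le
  linarith [areaElement_le_add F₁ F₂ (s, θ₀) (s, θ), areaElement_pos F₁ F₂ (s, θ)]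

lemma IsQuasiconformalSystem.abs_pdy_le {f₁ f₂ g₁ g₂ : ℝ × ℝ → ℝ} {z : ℝ × ℝ} {W₀ : ℝ}
    (h : IsQuasiconformalSystem f₁ f₂ g₁ g₂ z) (hW₀ : 0 < W₀)
    (hW : W₀ ≤ 2 * areaElement f₁ f₂ z) : |pdy g₁ z| ≤ 16 / W₀ * relGradient f₁ f₂ z := by
  have hWpos := areaElement_pos f₁ f₂ z
  have hD := dirichletDensity_nonneg f₁ f₂ z
  have hg := h.fst.conjugate_gradient_sq_le
  rw [relGradient]
  set W := areaElement f₁ f₂ z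
  have hdensity : W ^ 2 * |pdy g₁ z| ≤ 8 * √(dirichletDensity f₁ f₂ z) := by
    refine abs_le_of_sq_le_sq ?_ (by positivity) |> (le_abs_self _).trans
    rw [mul_pow, mul_pow, sq_abs, sq_sqrt hD]
    have : 0 ≤ W ^ 4 * pdx g₁ z ^ 2 := by positivity
    unfold dirichletDensity
    linarith [sq_nonneg (pdx f₁ z), sq_nonneg (pdy f₁ z), sq_nonneg (pdx f₂ z),
      sq_nonneg (pdy f₂ z)]
  rw [div_mul_div_comm, le_div_iff₀ (by positivity)]
  calc |pdy g₁ z| * (W₀ * W) ≤ |pdy g₁ z| * (2 * W * W) := by gcongr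
    _ = 2 * (W ^ 2 * |pdy g₁ z|) := by ring
    _ ≤ 2 * (8 * √(dirichletDensity f₁ f₂ z)) := by gcongr
    _ = 16 * √(dirichletDensity f₁ f₂ z) := by ring

lemma conjugate_abs_sub_le_on_circle (hF₁ : ContDiff ℝ 1 F₁) (hF₂ : ContDiff ℝ 1 F₂)
    (hG₁ : ContDiff ℝ 1 G₁) (h : ∀ θ, IsQuasiconformalSystem F₁ F₂ G₁ G₂ (s, θ)) (hσ : σ ≤ 1 / 8)
    (hint : ∫ θ in (0)..(2 * π), relGradient F₁ F₂ (s, θ) ≤ σ)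
    (hmax : IsMaxOn (fun θ => areaElement F₁ F₂ (s, θ)) (Icc 0 (2 * π)) θ₀)
    (hθ₀ : θ₀ ∈ Icc 0 (2 * π)) (hθ : θ ∈ Icc 0 (2 * π)) :
    |G₁ (s, θ) - G₁ (s, θ₀)| ≤ 16 / areaElement F₁ F₂ (s, θ₀) * σ := by
  have hcont := continuous_relGradient hF₁ hF₂
  have hW₀ := areaElement_pos F₁ F₂ (s, θ₀)
  refine abs_sub_le_of_abs_pdy_le hG₁
    (k := fun θ => 16 / areaElement F₁ F₂ (s, θ₀) * relGradient F₁ F₂ (s, θ)) (by fun_prop)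
    (fun θ hθ => (h θ).abs_pdy_le hW₀
      (areaElement_le_two_mul_on_circle hF₁ hF₂ hσ hint hmax hθ₀ hθ)) ?_ hθ hθ₀
  rw [intervalIntegral.integral_const_mul]
  exact mul_le_mul_of_nonneg_left hint (by positivity)

end CircleOscillation

section DiscOscillation

variable {f₁ f₂ g₁ g₂ : ℝ × ℝ → ℝ}

lemma abs_sub_le_on_disc_of_circle {s σ θ₀ : ℝ} (hf₁ : ContDiff ℝ 1 f₁) (hf₂ : ContDiff ℝ 1 f₂)
    (hg₁ : ContDiff ℝ 1 g₁) (hσ : σ ≤ 1 / 8)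
    (h : ∀ ζ : ℝ × ℝ, ζ.1 ^ 2 + ζ.2 ^ 2 ≤ exp s ^ 2 → IsQuasiconformalSystem f₁ f₂ g₁ g₂ ζ)
    (hint : ∫ θ in (0)..(2 * π),
      relGradient (fun z => f₁ (logPolar z)) (fun z => f₂ (logPolar z)) (s, θ) ≤ σ)
    (hθ₀ : θ₀ ∈ Icc 0 (2 * π))
    (hmax : IsMaxOn (fun θ => areaElement f₁ f₂ (logPolar (s, θ))) (Icc 0 (2 * π)) θ₀)
    {ζ : ℝ × ℝ} (hζ : ζ.1 ^ 2 + ζ.2 ^ 2 ≤ exp s ^ 2) :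
    |f₁ ζ - f₁ (logPolar (s, θ₀))| ≤ areaElement f₁ f₂ (logPolar (s, θ₀)) * σ ∧
      |g₁ ζ - g₁ (logPolar (s, θ₀))| ≤ 16 / areaElement f₁ f₂ (logPolar (s, θ₀)) * σ := by
  have hF₁ := hf₁.comp contDiff_logPolar
  have hF₂ := hf₂.comp contDiff_logPolar
  have hG₁ := hg₁.comp contDiff_logPolar
  have hsys (θ : ℝ) := (h _ (logPolar_sq_le le_rfl θ)).comp_logPolar
  exact ⟨IsQuasiconformalPair.abs_sub_le_on_disc hf₁ hg₁ (areaElement_pos f₁ f₂)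
      (fun ζ hζ => (h ζ hζ).fst)
      (fun θ hθ => abs_sub_le_on_circle hF₁ hF₂ hint hmax hθ₀ hθ) ζ hζ,
    IsQuasiconformalPair.conjugate_abs_sub_le_on_disc hf₁ hg₁ (areaElement_pos f₁ f₂)
      (fun ζ hζ => (h ζ hζ).fst)
      (fun θ hθ => conjugate_abs_sub_le_on_circle hF₁ hF₂ hG₁ hsys hσ hint hmax hθ₀ hθ) ζ hζ⟩

lemma exists_abs_sub_le_on_disc (hf₁ : ContDiff ℝ 1 f₁) (hf₂ : ContDiff ℝ 1 f₂)
    (hg₁ : ContDiff ℝ 1 g₁) (hg₂ : ContDiff ℝ 1 g₂)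
    (h : ∀ ζ : ℝ × ℝ, ζ.1 ^ 2 + ζ.2 ^ 2 ≤ 1 → IsQuasiconformalSystem f₁ f₂ g₁ g₂ ζ) {L σ : ℝ}
    (hL : 0 < L) (hLσ : 2000 / L ≤ σ) (hσ : σ ≤ 1 / 8) :
    ∃ ζ₀ : ℝ × ℝ, ∀ ζ : ℝ × ℝ, ζ.1 ^ 2 + ζ.2 ^ 2 ≤ exp (-L) ^ 2 →
      (|f₁ ζ - f₁ ζ₀| ≤ areaElement f₁ f₂ ζ₀ * σ ∧ |g₁ ζ - g₁ ζ₀| ≤ 16 / areaElement f₁ f₂ ζ₀ * σ) ∧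
      |f₂ ζ - f₂ ζ₀| ≤ areaElement f₁ f₂ ζ₀ * σ ∧
        |g₂ ζ - g₂ ζ₀| ≤ 16 / areaElement f₁ f₂ ζ₀ * σ := by
  obtain ⟨s, hs, hint⟩ := exists_integral_relGradient_le (hf₁.comp contDiff_logPolar)
    (hf₂.comp contDiff_logPolar) (hg₁.comp contDiff_logPolar) (hg₂.comp contDiff_logPolar)
    (periodic_comp_logPolar f₁) (periodic_comp_logPolar f₂) (periodic_comp_logPolar g₁)
    (periodic_comp_logPolar g₂) hL fun s hs θ => (h _ (by
      simpa only [exp_zero, one_pow] using logPolar_sq_le hs θ)).comp_logPolar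
  have hdisc {ζ : ℝ × ℝ} (hζ : ζ.1 ^ 2 + ζ.2 ^ 2 ≤ exp s ^ 2) :
      IsQuasiconformalSystem f₁ f₂ g₁ g₂ ζ :=
    h ζ (hζ.trans (pow_le_one₀ (exp_pos s).le (exp_le_one_iff.2 hs.2)))
  have hcont : Continuous fun θ => areaElement f₁ f₂ (logPolar (s, θ)) :=
    (continuous_areaElement hf₁.continuous hf₂.continuous).comp
      (contDiff_logPolar.continuous.comp (by fun_prop))
  obtain ⟨θ₀, hθ₀, hmax⟩ := isCompact_Icc.exists_isMaxOn
    (nonempty_Icc.2 two_pi_pos.le) hcont.continuousOn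
  refine ⟨logPolar (s, θ₀), fun ζ hζ => ?_⟩
  have hζs : ζ.1 ^ 2 + ζ.2 ^ 2 ≤ exp s ^ 2 := hζ.trans (by gcongr; exact hs.1)
  have hint' := hint.trans hLσ
  refine ⟨abs_sub_le_on_disc_of_circle hf₁ hf₂ hg₁ hσ (fun _ => hdisc) hint' hθ₀ hmax hζs, ?_⟩
  rw [areaElement_comm] at hmax ⊢
  exact abs_sub_le_on_disc_of_circle hf₂ hf₁ hg₂ hσ (fun _ hζ => (hdisc hζ).swap)
    (by rwa [relGradient_comm]) hθ₀ hmax hζs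

lemma abs_sub_le_two_mul {x y z k : ℝ} (hx : |x - z| ≤ k) (hy : |y - z| ≤ k) : |x - y| ≤ 2 * k := by
  linarith [abs_sub_le x z y, abs_sub_comm z y]

-- The scale `t` depends on `ε` alone: the modulus of continuity at the centre of the disc is
-- independent of the size of the area element.
lemma exists_uniform_modulus {ε : ℝ} (hε : 0 < ε) : ∃ t > 0, t ≤ 1 ∧
    ∀ f₁ f₂ g₁ g₂ : ℝ × ℝ → ℝ,
      ContDiff ℝ 1 f₁ → ContDiff ℝ 1 f₂ → ContDiff ℝ 1 g₁ → ContDiff ℝ 1 g₂ →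
      (∀ ζ : ℝ × ℝ, ζ.1 ^ 2 + ζ.2 ^ 2 ≤ 1 → IsQuasiconformalSystem f₁ f₂ g₁ g₂ ζ) →
      ∀ ζ : ℝ × ℝ, ζ.1 ^ 2 + ζ.2 ^ 2 ≤ t ^ 2 →
        (|f₁ ζ - f₁ 0| ≤ ε * areaElement f₁ f₂ 0 ∧ |f₂ ζ - f₂ 0| ≤ ε * areaElement f₁ f₂ 0) ∧
        (|g₁ ζ - g₁ 0| ≤ ε / areaElement f₁ f₂ 0 ∧ |g₂ ζ - g₂ 0| ≤ ε / areaElement f₁ f₂ 0) := by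
  set σ := min (1 / 8) (ε / 64)
  have hσ8 : σ ≤ 1 / 8 := min_le_left _ _
  have hσε : 64 * σ ≤ ε := by linarith [min_le_right (1 / 8) (ε / 64)]
  have hσ0 : 0 < σ := by positivity
  refine ⟨exp (-(2000 / σ)), exp_pos _, exp_le_one_iff.2 (neg_nonpos.2 (by positivity)), ?_⟩
  intro f₁ f₂ g₁ g₂ hf₁ hf₂ hg₁ hg₂ h ζ hζ
  obtain ⟨ζ₀, hζ₀⟩ := exists_abs_sub_le_on_disc hf₁ hf₂ hg₁ hg₂ h (σ := σ) (L := 2000 / σ)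
    (by positivity) (div_div_cancel₀ (by norm_num)).le hσ8
  obtain ⟨⟨hf₁ζ, hg₁ζ⟩, hf₂ζ, hg₂ζ⟩ := hζ₀ ζ hζ
  obtain ⟨⟨hf₁0, hg₁0⟩, hf₂0, hg₂0⟩ := hζ₀ 0 (by simpa using sq_nonneg _)
  have hW₀ := areaElement_pos f₁ f₂ ζ₀
  have hW := areaElement_pos f₁ f₂ 0
  have hle := areaElement_le_add f₁ f₂ ζ₀ 0
  have hge := areaElement_le_add f₁ f₂ 0 ζ₀
  rw [abs_sub_comm (f₁ ζ₀), abs_sub_comm (f₂ ζ₀)] at hle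
  set W₀ := areaElement f₁ f₂ ζ₀
  set W := areaElement f₁ f₂ 0
  have hσW : W₀ * σ ≤ W₀ * (1 / 8) := by gcongr
  have hf : 2 * (W₀ * σ) ≤ ε * W := by
    calc 2 * (W₀ * σ) ≤ 2 * (2 * W * σ) := by gcongr; linarith
      _ ≤ 64 * σ * W := by linarith [mul_pos hσ0 hW]
      _ ≤ ε * W := by gcongr
  have hg : 2 * (16 / W₀ * σ) ≤ ε / W := by
    calc 2 * (16 / W₀ * σ) = 64 * σ / (2 * W₀) := by field_simp; norm_num
      _ ≤ ε / W := by gcongr; linarith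
  exact ⟨⟨(abs_sub_le_two_mul hf₁ζ hf₁0).trans hf, (abs_sub_le_two_mul hf₂ζ hf₂0).trans hf⟩,
    (abs_sub_le_two_mul hg₁ζ hg₁0).trans hg, (abs_sub_le_two_mul hg₂ζ hg₂0).trans hg⟩

end DiscOscillation

/-! ### Uniform modulus of continuity of the gradient and the normal in a chart -/

lemma exists_contDiff_eqOn_ball {E : Type*} [NormedAddCommGroup E] [NormedSpace ℝ E]
    [HasContDiffBump E] {n : ℕ∞} {f : E → ℝ} {x : E} {r R : ℝ} (hr : 0 < r) (hrR : r < R)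
    (hf : ContDiffOn ℝ n f (Metric.ball x R)) :
    ∃ F : E → ℝ, ContDiff ℝ n F ∧ EqOn F f (Metric.ball x r) := by
  obtain ⟨r', hr', hr'R⟩ := exists_between hrR
  let χ : ContDiffBump x := ⟨r, r', hr, hr'⟩
  refine ⟨fun z => χ z * f z, contDiff_iff_contDiffAt.2 fun z => ?_, fun z hz => ?_⟩
  · by_cases hz : z ∈ Metric.ball x R
    · exact χ.contDiff.contDiffAt.mul (hf.contDiffAt (Metric.isOpen_ball.mem_nhds hz))
    · have hzero : (fun z => χ z * f z) =ᶠ[nhds z] fun _ => 0 := by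
        have hfar : r' < dist z x := hr'R.trans_le (not_lt.1 hz)
        have hopen : IsOpen {w | r' < dist w x} := isOpen_lt continuous_const (by fun_prop)
        filter_upwards [hopen.mem_nhds hfar] with w hw
        rw [χ.zero_of_le_dist (le_of_lt hw), zero_mul]
      exact contDiffAt_const.congr_of_eventuallyEq hzero
  · simp only [χ.one_of_mem_closedBall (Metric.ball_subset_closedBall hz), one_mul]

lemma IsQuasiconformalPair.comp_smul {f g : ℝ × ℝ → ℝ} {W k : ℝ} {ζ : ℝ × ℝ}
    (h : IsQuasiconformalPair f g W (k • ζ)) :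
    IsQuasiconformalPair (fun ζ => f (k • ζ)) (fun ζ => g (k • ζ)) W ζ :=
  h.comp_conformal (p := k) (q := 0) ((hasFDerivAt_id ζ).const_smul k) (by simp) (by simp)

lemma IsQuasiconformalPair.congr_of_eventuallyEq {f g F G : ℝ × ℝ → ℝ} {W : ℝ} {ζ : ℝ × ℝ}
    (h : IsQuasiconformalPair f g W ζ) (hF : F =ᶠ[nhds ζ] f) (hG : G =ᶠ[nhds ζ] g) :
    IsQuasiconformalPair F G W ζ := by
  obtain ⟨a, b, c, d, hf, hg, h⟩ := h
  exact ⟨a, b, c, d, HasFDerivAt.congr_of_eventuallyEq hf hF,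
    HasFDerivAt.congr_of_eventuallyEq hg hG, h⟩

lemma exists_contDiff_eqOn_comp_smul {f : ℝ × ℝ → ℝ} {ρ : ℝ} (hρ : 0 < ρ)
    (hf : ContDiffOn ℝ 1 f (Metric.ball 0 ρ)) :
    ∃ F : ℝ × ℝ → ℝ, ContDiff ℝ 1 F ∧ EqOn F (fun ζ => f ((ρ / 4) • ζ)) (Metric.ball 0 2) := by
  refine exists_contDiff_eqOn_ball (R := 4) (n := 1) two_pos (by norm_num)
    (hf.comp (by fun_prop) fun ζ hζ => ?_)
  rw [mem_ball_zero_iff] at hζ ⊢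
  rw [norm_smul, norm_of_nonneg (by positivity)]
  linarith [mul_lt_mul_of_pos_left hζ hρ]

lemma exists_uniform_modulus_on_ball {ε : ℝ} (hε : 0 < ε) : ∃ t > 0, t < 1 ∧
    ∀ {ρ : ℝ} {f₁ f₂ g₁ g₂ : ℝ × ℝ → ℝ}, 0 < ρ →
      ContDiffOn ℝ 1 f₁ (Metric.ball 0 ρ) → ContDiffOn ℝ 1 f₂ (Metric.ball 0 ρ) →
      ContDiffOn ℝ 1 g₁ (Metric.ball 0 ρ) → ContDiffOn ℝ 1 g₂ (Metric.ball 0 ρ) →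
      (∀ ζ ∈ Metric.ball 0 ρ, IsQuasiconformalSystem f₁ f₂ g₁ g₂ ζ) →
      ∀ ζ : ℝ × ℝ, ζ.1 ^ 2 + ζ.2 ^ 2 ≤ (t * ρ) ^ 2 →
        (|f₁ ζ - f₁ 0| ≤ ε * areaElement f₁ f₂ 0 ∧ |f₂ ζ - f₂ 0| ≤ ε * areaElement f₁ f₂ 0) ∧
        (|g₁ ζ - g₁ 0| ≤ ε / areaElement f₁ f₂ 0 ∧ |g₂ ζ - g₂ 0| ≤ ε / areaElement f₁ f₂ 0) := by
  obtain ⟨t, ht, ht1, hmod⟩ := exists_uniform_modulus hε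
  refine ⟨t / 4, by positivity, by linarith, fun {ρ f₁ f₂ g₁ g₂} hρ hf₁ hf₂ hg₁ hg₂ h ζ hζ => ?_⟩
  obtain ⟨F₁, hF₁, hFf₁⟩ := exists_contDiff_eqOn_comp_smul hρ hf₁
  obtain ⟨F₂, hF₂, hFf₂⟩ := exists_contDiff_eqOn_comp_smul hρ hf₂
  obtain ⟨G₁, hG₁, hGg₁⟩ := exists_contDiff_eqOn_comp_smul hρ hg₁
  obtain ⟨G₂, hG₂, hGg₂⟩ := exists_contDiff_eqOn_comp_smul hρ hg₂
  have harea {ξ : ℝ × ℝ} (hξ : ξ ∈ Metric.ball 0 2) :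
      areaElement F₁ F₂ ξ = areaElement f₁ f₂ ((ρ / 4) • ξ) := by
    rw [areaElement, areaElement, hFf₁ hξ, hFf₂ hξ]
  have hball {ξ : ℝ × ℝ} (hξ : ξ.1 ^ 2 + ξ.2 ^ 2 ≤ 1) : ξ ∈ Metric.ball 0 2 ∧
      (ρ / 4) • ξ ∈ Metric.ball 0 ρ := by
    have hle : ‖ξ‖ ≤ 1 := norm_le_of_sq_add_sq_le zero_le_one (by simpa using hξ)
    rw [mem_ball_zero_iff, mem_ball_zero_iff, norm_smul, norm_of_nonneg (by positivity)]
    exact ⟨by linarith, by linarith [mul_le_mul_of_nonneg_left hle hρ.le]⟩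
  have hsys (ξ : ℝ × ℝ) (hξ : ξ.1 ^ 2 + ξ.2 ^ 2 ≤ 1) : IsQuasiconformalSystem F₁ F₂ G₁ G₂ ξ := by
    obtain ⟨hξ2, hξρ⟩ := hball hξ
    have hnhds : Metric.ball 0 2 ∈ nhds ξ := Metric.isOpen_ball.mem_nhds hξ2
    constructor <;> rw [harea hξ2]
    · exact (h _ hξρ).fst.comp_smul.congr_of_eventuallyEq (hFf₁.eventuallyEq_of_mem hnhds)
        (hGg₁.eventuallyEq_of_mem hnhds)
    · exact (h _ hξρ).snd.comp_smul.congr_of_eventuallyEq (hFf₂.eventuallyEq_of_mem hnhds)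
        (hGg₂.eventuallyEq_of_mem hnhds)
  have hξ : ((4 / ρ) • ζ).1 ^ 2 + ((4 / ρ) • ζ).2 ^ 2 ≤ t ^ 2 := by
    calc ((4 / ρ) • ζ).1 ^ 2 + ((4 / ρ) • ζ).2 ^ 2 = (4 / ρ) ^ 2 * (ζ.1 ^ 2 + ζ.2 ^ 2) := by
          simp only [Prod.smul_fst, Prod.smul_snd, smul_eq_mul]; ring
      _ ≤ (4 / ρ) ^ 2 * (t / 4 * ρ) ^ 2 := by gcongr
      _ = t ^ 2 := by field_simp
  have hξ2 := (hball (hξ.trans (pow_le_one₀ ht.le ht1))).1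
  have h0 : (0 : ℝ × ℝ) ∈ Metric.ball 0 2 := Metric.mem_ball_self two_pos
  have hscale : (ρ / 4) • (4 / ρ) • ζ = ζ := by
    rw [smul_smul, show ρ / 4 * (4 / ρ) = 1 by field_simp, one_smul]
  simpa only [harea h0, hFf₁ hξ2, hFf₂ hξ2, hGg₁ hξ2, hGg₂ hξ2, hFf₁ h0, hFf₂ h0, hGg₁ h0,
    hGg₂ h0, hscale, smul_zero] using hmod F₁ F₂ G₁ G₂ hF₁ hF₂ hG₁ hG₂ hsys _ hξ

lemma IsCMCSolution.contDiffOn_relFluxX {H : ℝ} {Ω : Set (ℝ × ℝ)} {u : ℝ × ℝ → ℝ}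
    (hu : IsCMCSolution H Ω u) (hΩ : IsOpen Ω) (P : ℝ × ℝ) :
    ContDiffOn ℝ 1 (relFluxX H u P) Ω := by
  unfold relFluxX
  exact ((contDiffOn_pdx hΩ hu.1).div (contDiffOn_Wgraph hΩ hu.1)
    fun x _ => (Wgraph_pos u x).ne').sub (by fun_prop)

lemma IsCMCSolution.contDiffOn_relFluxY {H : ℝ} {Ω : Set (ℝ × ℝ)} {u : ℝ × ℝ → ℝ}
    (hu : IsCMCSolution H Ω u) (hΩ : IsOpen Ω) (P : ℝ × ℝ) :
    ContDiffOn ℝ 1 (relFluxY H u P) Ω := by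
  unfold relFluxY
  exact ((contDiffOn_pdy hΩ hu.1).div (contDiffOn_Wgraph hΩ hu.1)
    fun x _ => (Wgraph_pos u x).ne').sub (by fun_prop)

lemma relFluxX_self (H : ℝ) (u : ℝ × ℝ → ℝ) (P : ℝ × ℝ) :
    relFluxX H u P P = pdx u P / Wgraph u P := by
  simp [relFluxX]

lemma relFluxY_self (H : ℝ) (u : ℝ × ℝ → ℝ) (P : ℝ × ℝ) :
    relFluxY H u P P = pdy u P / Wgraph u P := by
  simp [relFluxY]

/-- At `x`, the gradient and the relative flux of `u` about `P` differ from their values at `P` by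
at most `ε` times their natural scales `Wgraph u P` and `(Wgraph u P)⁻¹`. -/
structure IsGradientClose (H : ℝ) (u : ℝ × ℝ → ℝ) (P : ℝ × ℝ) (ε : ℝ) (x : ℝ × ℝ) : Prop where
  pdx_le : |pdx u x - pdx u P| ≤ ε * Wgraph u P
  pdy_le : |pdy u x - pdy u P| ≤ ε * Wgraph u P
  relFluxX_le : |relFluxX H u P x - pdx u P / Wgraph u P| ≤ ε / Wgraph u P
  relFluxY_le : |relFluxY H u P x - pdy u P / Wgraph u P| ≤ ε / Wgraph u P

section IsGradientClose

variable {H ε : ℝ} {u : ℝ × ℝ → ℝ} {P x : ℝ × ℝ}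

lemma IsGradientClose.Wgraph_le (h : IsGradientClose H u P ε x) :
    Wgraph u x ≤ (1 + 2 * ε) * Wgraph u P := by
  have hle : Wgraph u x ≤ Wgraph u P + |pdx u x - pdx u P| + |pdy u x - pdy u P| :=
    areaElement_le_add (pdx u) (pdy u) x P
  linarith [h.pdx_le, h.pdy_le]

lemma IsGradientClose.le_Wgraph (h : IsGradientClose H u P ε x) :
    (1 - 2 * ε) * Wgraph u P ≤ Wgraph u x := by
  have hle : Wgraph u P ≤ Wgraph u x + |pdx u P - pdx u x| + |pdy u P - pdy u x| :=
    areaElement_le_add (pdx u) (pdy u) P x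
  rw [abs_sub_comm (pdx u P), abs_sub_comm (pdy u P)] at hle
  linarith [h.pdx_le, h.pdy_le]

end IsGradientClose

lemma Chart.exists_isGradientClose {ε : ℝ} (hε : 0 < ε) : ∃ t > 0, t < 1 ∧
    ∀ {H : ℝ} {Ω : Set (ℝ × ℝ)} {u : ℝ × ℝ → ℝ} {P : ℝ × ℝ} {ρ : ℝ} {S : ℝ × ℝ → ℝ × ℝ},
      0 < ρ → IsOpen Ω → IsCMCSolution H Ω u → Chart H Ω u P ρ S →
      ∀ ζ : ℝ × ℝ, ζ.1 ^ 2 + ζ.2 ^ 2 ≤ (t * ρ) ^ 2 → IsGradientClose H u P ε (S ζ) := by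
  obtain ⟨t, ht, ht1, hmod⟩ := exists_uniform_modulus_on_ball hε
  refine ⟨t, ht, ht1, fun {H Ω u P ρ S} hρ hΩ hu hS ζ hζ => ?_⟩
  have harea (ξ : ℝ × ℝ) : areaElement (pdy u ∘ S) (pdx u ∘ S) ξ = Wgraph u (S ξ) :=
    congr_fun (areaElement_comm _ _) ξ
  obtain ⟨⟨hpdy, hpdx⟩, hX, hY⟩ := hmod hρ ((contDiffOn_pdy hΩ hu.1).comp hS.contDiffOn hS.mem)
    ((contDiffOn_pdx hΩ hu.1).comp hS.contDiffOn hS.mem)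
    ((hu.contDiffOn_relFluxX hΩ P).comp hS.contDiffOn hS.mem)
    ((hu.contDiffOn_relFluxY hΩ P).neg.comp hS.contDiffOn hS.mem)
    (fun ξ hξ => ⟨harea ξ ▸ hS.isQuasiconformalPair_pdy_relFluxX hΩ hu hξ,
      harea ξ ▸ hS.isQuasiconformalPair_pdx_neg_relFluxY hΩ hu hξ⟩) ζ hζ
  rw [harea] at hpdy hpdx hX hY
  simp only [Function.comp_apply, hS.zero, relFluxX_self, relFluxY_self, neg_sub_neg]
    at hpdy hpdx hX hY
  exact ⟨hpdx, hpdy, hX, abs_sub_comm (pdy u P / _) _ ▸ hY⟩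

lemma exists_chart_isGradientClose {H r ε : ℝ} (hH : 0 < H) (hr : 0 < r) (hε : 0 < ε) :
    ∃ ρ > 0, ∃ R > 0, R < ρ ∧ ∀ {Ω : Set (ℝ × ℝ)} {u : ℝ × ℝ → ℝ} {P : ℝ × ℝ},
      IsOpen Ω → IsCMCSolution H Ω u → Metric.ball P r ⊆ Ω →
      ∃ S, Chart H Ω u P ρ S ∧
        ∀ ζ : ℝ × ℝ, ζ.1 ^ 2 + ζ.2 ^ 2 ≤ R ^ 2 → IsGradientClose H u P ε (S ζ) := by
  obtain ⟨t, ht, ht1, hclose⟩ := Chart.exists_isGradientClose hε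
  set ρ := min (r / 4) (1 / (16 * H))
  have hρ : 0 < ρ := by positivity
  have hρr : 4 * ρ ≤ r := by linarith [min_le_left (r / 4) (1 / (16 * H))]
  have hρH : 16 * H * ρ ≤ 1 := by
    rw [mul_comm, ← le_div_iff₀ (by positivity)]
    exact min_le_right _ _
  refine ⟨ρ, hρ, t * ρ, by positivity, mul_lt_of_lt_one_left hρ ht1, fun hΩ hu hball => ?_⟩
  obtain ⟨S, hS⟩ := hu.exists_chart hH hΩ hρ hρr hρH hball
  exact ⟨S, hS, hclose hρ hΩ hu hS⟩

/-! ### Planar frames and the flux of a graph -/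

/-- The Euclidean inner product with `e`. -/
def dot (e : ℝ × ℝ) : ℝ × ℝ →L[ℝ] ℝ := linForm e.1 e.2

/-- The square of the Euclidean norm; the norm of `ℝ × ℝ` itself is the sup norm. -/
def sqNorm (v : ℝ × ℝ) : ℝ := v.1 ^ 2 + v.2 ^ 2

/-- The point with coordinates `s`, `y` in the frame at `P` spanned by `e` and `rot e`. -/
def framePt (P e : ℝ × ℝ) (s y : ℝ) : ℝ × ℝ := P + s • e + y • rot e

section PlanarFrame

variable {e v w P x : ℝ × ℝ} {s y A : ℝ}

lemma dot_apply (e v : ℝ × ℝ) : dot e v = e.1 * v.1 + e.2 * v.2 :=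
  linForm_apply e.1 e.2 v

lemma sqNorm_nonneg (v : ℝ × ℝ) : 0 ≤ sqNorm v := by
  rw [sqNorm]; positivity

lemma sqNorm_eq_zero : sqNorm v = 0 ↔ v = 0 := by
  rw [sqNorm, add_eq_zero_iff_of_nonneg (sq_nonneg _) (sq_nonneg _), Prod.ext_iff]
  simp

lemma continuous_sqNorm : Continuous sqNorm := by
  unfold sqNorm
  fun_prop

lemma sqNorm_rot (v : ℝ × ℝ) : sqNorm (rot v) = sqNorm v := by
  simp only [sqNorm, rot]; ring

lemma sqNorm_le_of_norm_le (h : ‖v‖ ≤ A) : sqNorm v ≤ 2 * A ^ 2 :=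
  sq_add_sq_le_of_norm_le h

lemma norm_le_of_sqNorm_le (hA : 0 ≤ A) (h : sqNorm v ≤ A ^ 2) : ‖v‖ ≤ A :=
  norm_le_of_sq_add_sq_le hA h

lemma norm_le_one_of_sqNorm_eq_one (he : sqNorm e = 1) : ‖e‖ ≤ 1 :=
  norm_le_of_sqNorm_le zero_le_one (by rw [he, one_pow])

lemma dot_sq_add_dot_rot_sq (e v : ℝ × ℝ) :
    dot e v ^ 2 + dot (rot e) v ^ 2 = sqNorm e * sqNorm v := by
  simp only [dot_apply, rot, sqNorm]; ring

lemma abs_dot_le (he : ‖e‖ ≤ A) (v : ℝ × ℝ) : |dot e v| ≤ 2 * (A * ‖v‖) := by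
  have h₁ : |e.1 * v.1| ≤ A * ‖v‖ := by
    rw [abs_mul]
    exact mul_le_mul ((norm_fst_le e).trans he) (norm_fst_le v) (abs_nonneg _)
      ((norm_nonneg e).trans he)
  have h₂ : |e.2 * v.2| ≤ A * ‖v‖ := by
    rw [abs_mul]
    exact mul_le_mul ((norm_snd_le e).trans he) (norm_snd_le v) (abs_nonneg _)
      ((norm_nonneg e).trans he)
  rw [dot_apply]
  linarith [abs_add_le (e.1 * v.1) (e.2 * v.2)]

lemma abs_dot_le_of_sqNorm_eq_one (he : sqNorm e = 1) (v : ℝ × ℝ) : |dot e v| ≤ 2 * ‖v‖ := by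
  simpa using abs_dot_le (norm_le_one_of_sqNorm_eq_one he) v

lemma framePt_dot (he : sqNorm e = 1) (P x : ℝ × ℝ) :
    framePt P e (dot e (x - P)) (dot (rot e) (x - P)) = x := by
  simp only [sqNorm] at he
  ext <;> simp only [framePt, rot, dot_apply, Prod.fst_add, Prod.snd_add, Prod.fst_sub,
    Prod.snd_sub, Prod.smul_fst, Prod.smul_snd, smul_eq_mul]
  · linear_combination (x.1 - P.1) * he
  · linear_combination (x.2 - P.2) * he

lemma framePt_sub_framePt (P e : ℝ × ℝ) (s t y : ℝ) :
    framePt P e s y - framePt P e t y = (s - t) • e := by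
  simp only [framePt]; module

lemma norm_framePt_sub_le (he : sqNorm e = 1) (Q P : ℝ × ℝ) (s y : ℝ) :
    ‖framePt Q e s y - P‖ ≤ ‖Q - P‖ + |s| + |y| := by
  have h₁ : ‖s • e‖ ≤ |s| := by
    rw [norm_smul]
    exact mul_le_of_le_one_right (abs_nonneg s) (norm_le_one_of_sqNorm_eq_one he)
  have h₂ : ‖y • rot e‖ ≤ |y| := by
    rw [norm_smul]
    exact mul_le_of_le_one_right (abs_nonneg y)
      (norm_le_one_of_sqNorm_eq_one ((sqNorm_rot e).trans he))
  calc ‖framePt Q e s y - P‖ = ‖(Q - P) + s • e + y • rot e‖ := by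
        rw [framePt]; congr 1; abel
    _ ≤ ‖Q - P‖ + ‖s • e‖ + ‖y • rot e‖ := norm_add₃_le
    _ ≤ ‖Q - P‖ + |s| + |y| := by gcongr

lemma abs_sqNorm_sub_le (hw : ‖w‖ ≤ 1) (hvw : ‖v - w‖ ≤ 1 / 2) :
    |sqNorm v - sqNorm w| ≤ 5 * ‖v - w‖ := by
  have hsum : ‖v + w‖ ≤ 5 / 2 := by
    calc ‖v + w‖ = ‖(v - w) + (w + w)‖ := by congr 1; abel
      _ ≤ ‖v - w‖ + (‖w‖ + ‖w‖) := (norm_add_le _ _).trans (by gcongr; exact norm_add_le _ _)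
      _ ≤ 5 / 2 := by linarith
  have hfactor : sqNorm v - sqNorm w = dot (v + w) (v - w) := by
    simp only [sqNorm, dot_apply, Prod.fst_add, Prod.snd_add, Prod.fst_sub, Prod.snd_sub]; ring
  rw [hfactor]
  linarith [abs_dot_le hsum (v - w)]

-- The witness is `v / |v|`.
lemma exists_unit_near_of_ne_zero {W : ℝ} (hv : v ≠ 0) (hW : 0 < W) (hvW : W ^ 2 = 1 + sqNorm v) :
    ∃ e, sqNorm e = 1 ∧ dot (rot e) v = 0 ∧ ‖W⁻¹ • v - e‖ ≤ 1 / W := by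
  set G := √(sqNorm v)
  have hGsq : G ^ 2 = sqNorm v := Real.sq_sqrt (sqNorm_nonneg v)
  have hG : 0 < G := Real.sqrt_pos.2 ((sqNorm_nonneg v).lt_of_ne' (mt sqNorm_eq_zero.1 hv))
  have hGW : G ≤ W := le_of_sq_le_sq (by linarith) hW.le
  have hWG : W - G ≤ 1 := by nlinarith
  have hunit : sqNorm (G⁻¹ • v) = 1 := by
    have h : sqNorm (G⁻¹ • v) = (G ^ 2)⁻¹ * sqNorm v := by
      simp only [sqNorm, Prod.smul_fst, Prod.smul_snd, smul_eq_mul]; ring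
    rw [h, hGsq, inv_mul_cancel₀ (hGsq ▸ (pow_pos hG 2).ne')]
  refine ⟨G⁻¹ • v, hunit, ?_, ?_⟩
  · simp only [dot_apply, rot, Prod.smul_fst, Prod.smul_snd, smul_eq_mul]; ring
  · have hdiff : W⁻¹ • v - G⁻¹ • v = (-((W - G) / W)) • G⁻¹ • v := by
      rw [smul_smul, ← sub_smul]
      congr 1
      field_simp
      ring
    rw [hdiff, norm_smul, norm_neg, norm_of_nonneg (div_nonneg (by linarith) hW.le)]
    calc (W - G) / W * ‖G⁻¹ • v‖ ≤ 1 / W * 1 := by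
          gcongr
          exact norm_le_one_of_sqNorm_eq_one hunit
      _ = 1 / W := mul_one _

end PlanarFrame

/-- The horizontal part `∇u / W` of the unit normal of the graph of `u` that points downwards. -/
def flux (u : ℝ × ℝ → ℝ) (x : ℝ × ℝ) : ℝ × ℝ := (pdx u x / Wgraph u x, pdy u x / Wgraph u x)

/-- The value at `x` of the affine field with divergence `4 H` taking the value `E` at `P`. On the
circle of radius `1 / (2 H)` with outward unit normal `E` at `P` it is the outward unit normal, and
this circle is the set where `sqNorm (circleNormal H P E x) = 1`. -/
def circleNormal (H : ℝ) (P E x : ℝ × ℝ) : ℝ × ℝ := E + (2 * H) • (x - P)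

section Flux

variable {H : ℝ} {Ω : Set (ℝ × ℝ)} {u : ℝ × ℝ → ℝ} {P Q x E : ℝ × ℝ}

lemma circleNormal_self (H : ℝ) (P E : ℝ × ℝ) : circleNormal H P E P = E := by
  simp [circleNormal]

lemma circleNormal_circleNormal (H : ℝ) (P E Q x : ℝ × ℝ) :
    circleNormal H Q (circleNormal H P E Q) x = circleNormal H P E x := by
  simp only [circleNormal]; module

lemma circleNormal_sub_circleNormal (H : ℝ) (P E F x : ℝ × ℝ) :
    circleNormal H P E x - circleNormal H P F x = E - F := by
  simp only [circleNormal]; abel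

lemma flux_eq_smul (u : ℝ × ℝ → ℝ) (x : ℝ × ℝ) :
    flux u x = (Wgraph u x)⁻¹ • (pdx u x, pdy u x) := by
  ext <;> simp [flux, div_eq_inv_mul]

lemma sqNorm_flux (u : ℝ × ℝ → ℝ) (x : ℝ × ℝ) : sqNorm (flux u x) = 1 - (1 / Wgraph u x) ^ 2 := by
  have hsq := Wgraph_sq u x
  have hpos := Wgraph_pos u x
  rw [flux, sqNorm]
  field_simp
  linarith

lemma norm_flux_le_one (u : ℝ × ℝ → ℝ) (x : ℝ × ℝ) : ‖flux u x‖ ≤ 1 :=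
  norm_le_of_sqNorm_le zero_le_one (by rw [sqNorm_flux]; linarith [sq_nonneg (1 / Wgraph u x)])

lemma IsCMCSolution.continuousOn_flux (hu : IsCMCSolution H Ω u) (hΩ : IsOpen Ω) :
    ContinuousOn (flux u) Ω :=
  have hW := (contDiffOn_Wgraph hΩ hu.1).continuousOn
  ((contDiffOn_pdx hΩ hu.1).continuousOn.div hW fun x _ => (Wgraph_pos u x).ne').prodMk
    ((contDiffOn_pdy hΩ hu.1).continuousOn.div hW fun x _ => (Wgraph_pos u x).ne')

lemma flux_sub_circleNormal (H : ℝ) (u : ℝ × ℝ → ℝ) (P x : ℝ × ℝ) :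
    flux u x - circleNormal H P (flux u P) x =
      (relFluxX H u P x - pdx u P / Wgraph u P, relFluxY H u P x - pdy u P / Wgraph u P) := by
  ext <;> simp only [flux, circleNormal, relFluxX, relFluxY, Prod.fst_sub, Prod.snd_sub,
    Prod.fst_add, Prod.snd_add, Prod.smul_fst, Prod.smul_snd, smul_eq_mul] <;> ring

lemma IsGradientClose.norm_flux_sub_circleNormal_le {ε : ℝ} (h : IsGradientClose H u P ε x) :
    ‖flux u x - circleNormal H P (flux u P) x‖ ≤ ε / Wgraph u P := by
  rw [flux_sub_circleNormal]
  exact max_le h.relFluxX_le h.relFluxY_le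

lemma exists_unit_near_flux (hP : 1 < Wgraph u P) :
    ∃ e, sqNorm e = 1 ∧ dot (rot e) (pdx u P, pdy u P) = 0 ∧ ‖flux u P - e‖ ≤ 1 / Wgraph u P := by
  rw [flux_eq_smul]
  refine exists_unit_near_of_ne_zero (fun h => ?_) (Wgraph_pos u P)
    ((Wgraph_sq u P).trans (add_assoc _ _ _))
  have hsq := Wgraph_sq u P
  rw [Prod.mk_eq_zero] at h
  rw [h.1, h.2] at hsq
  nlinarith

end Flux

/-! ### Steep sheets -/

section Curve

variable {X Y X' Y' : ℝ → ℝ} {k c B : ℝ}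

lemma abs_sub_le_mul_abs_sub_of_abs_deriv_le {s : Set ℝ} (hs : s.OrdConnected)
    (hX : ∀ t ∈ s, HasDerivAt X (X' t) t) (hY : ∀ t ∈ s, HasDerivAt Y (Y' t) t)
    (hY' : ∀ t ∈ s, 0 < Y' t) (hXY : ∀ t ∈ s, |X' t| ≤ k * Y' t) {t₁ t₂ : ℝ} (h₁ : t₁ ∈ s)
    (h₂ : t₂ ∈ s) : |X t₁ - X t₂| ≤ k * |Y t₁ - Y t₂| := by
  wlog hlt : t₁ < t₂ generalizing t₁ t₂
  · rcases (not_lt.1 hlt).eq_or_lt with rfl | hlt'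
    · simp
    · rw [abs_sub_comm, abs_sub_comm (Y t₁)]
      exact this h₂ h₁ hlt'
  have hsub : Icc t₁ t₂ ⊆ s := hs.out h₁ h₂
  have hcont {Z Z' : ℝ → ℝ} (hZ : ∀ t ∈ s, HasDerivAt Z (Z' t) t) : ContinuousOn Z (Icc t₁ t₂) :=
    fun t ht => (hZ t (hsub ht)).continuousAt.continuousWithinAt
  obtain ⟨t, ht, hslope⟩ := exists_ratio_hasDerivAt_eq_ratio_slope X X' hlt (hcont hX)
    (fun t ht => hX t (hsub (Ioo_subset_Icc_self ht))) Y Y' (hcont hY)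
    fun t ht => hY t (hsub (Ioo_subset_Icc_self ht))
  have hts := hsub (Ioo_subset_Icc_self ht)
  rw [abs_sub_comm, abs_sub_comm (Y t₁), ← mul_le_mul_iff_left₀ (hY' t hts)]
  calc |X t₂ - X t₁| * Y' t = |(X t₂ - X t₁) * Y' t| := by rw [abs_mul, abs_of_pos (hY' t hts)]
    _ = |Y t₂ - Y t₁| * |X' t| := by rw [← hslope, abs_mul]
    _ ≤ |Y t₂ - Y t₁| * (k * Y' t) := by gcongr; exact hXY t hts
    _ = k * |Y t₂ - Y t₁| * Y' t := by ring

lemma exists_eq_of_le_deriv (hB : 0 ≤ B) (hY : ∀ t ∈ Icc (-B) B, HasDerivAt Y (Y' t) t)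
    (hY' : ∀ t ∈ Icc (-B) B, c ≤ Y' t) (hY0 : Y 0 = 0) {y : ℝ} (hy : y ∈ Icc (-(c * B)) (c * B)) :
    ∃ t ∈ Icc (-B) B, Y t = y := by
  have hcont : ContinuousOn Y (Icc (-B) B) := fun t ht => (hY t ht).continuousAt.continuousWithinAt
  have h0 : (0 : ℝ) ∈ Icc (-B) B := ⟨by linarith, hB⟩
  have hslope {t₁ t₂ : ℝ} (h₁ : t₁ ∈ Icc (-B) B) (h₂ : t₂ ∈ Icc (-B) B) (h : t₁ ≤ t₂) :
      c * (t₂ - t₁) ≤ Y t₂ - Y t₁ :=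
    (convex_Icc (-B) B).mul_sub_le_image_sub_of_le_deriv hcont
      (fun t ht => (hY t (interior_subset ht)).differentiableAt.differentiableWithinAt)
      (fun t ht => (hY t (interior_subset ht)).deriv ▸ hY' t (interior_subset ht)) t₁ h₁ t₂ h₂ h
  have hleft := hslope (left_mem_Icc.2 (by linarith)) h0 (by linarith)
  have hright := hslope h0 (right_mem_Icc.2 (by linarith)) hB
  exact intermediate_value_Icc (by linarith) hcont ⟨by linarith [hy.1], by linarith [hy.2]⟩

lemma exists_rightInverse_lipschitz (hB : 0 ≤ B) (hc : 0 < c)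
    (hX : ∀ t ∈ Icc (-B) B, HasDerivAt X (X' t) t) (hY : ∀ t ∈ Icc (-B) B, HasDerivAt Y (Y' t) t)
    (hY' : ∀ t ∈ Icc (-B) B, c ≤ Y' t) (hXY : ∀ t ∈ Icc (-B) B, |X' t| ≤ k * Y' t)
    (hX0 : X 0 = 0) (hY0 : Y 0 = 0) :
    ∃ σ : ℝ → ℝ, ContinuousOn (X ∘ σ) (Icc (-(c * B)) (c * B)) ∧
      ∀ y ∈ Icc (-(c * B)) (c * B), σ y ∈ Icc (-B) B ∧ Y (σ y) = y ∧ |X (σ y)| ≤ k * |y| := by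
  choose! σ hσ hσY using fun y hy => exists_eq_of_le_deriv (y := y) hB hY hY' hY0 hy
  have hlip {t₁ t₂ : ℝ} (h₁ : t₁ ∈ Icc (-B) B) (h₂ : t₂ ∈ Icc (-B) B) :
      |X t₁ - X t₂| ≤ k * |Y t₁ - Y t₂| :=
    abs_sub_le_mul_abs_sub_of_abs_deriv_le ordConnected_Icc hX hY
      (fun t ht => hc.trans_le (hY' t ht)) hXY h₁ h₂
  refine ⟨σ, LipschitzOnWith.continuousOn (K := k.toNNReal) ?_, fun y hy =>
    ⟨hσ y hy, hσY y hy, ?_⟩⟩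
  · refine LipschitzOnWith.of_dist_le_mul fun y hy z hz => ?_
    rw [Real.dist_eq, Real.dist_eq]
    have h := hlip (hσ y hy) (hσ z hz)
    rw [hσY y hy, hσY z hz] at h
    exact h.trans (by gcongr; exact Real.le_coe_toNNReal k)
  · have h := hlip (hσ y hy) ⟨by linarith, hB⟩
    rwa [hσY y hy, hX0, hY0, sub_zero, sub_zero] at h

end Curve

section Tangent

variable {a p q W : ℝ} {e : ℝ × ℝ}

lemma adaptedMatInv_eq_smul (hW : W ^ 2 = 1 + p ^ 2 + q ^ 2) (hW0 : 0 < W) (ha : 0 < a)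
    (w : ℝ × ℝ) : adaptedMatInv a p q W w =
      (a + 1 / W)⁻¹ • (w - (dot w (p, q) / (W * (a + W))) • (p, q)) := by
  rw [adaptedMatInv_eq hW hW0 ha]
  ext <;> simp only [dot_apply, Prod.fst_sub, Prod.snd_sub, Prod.smul_fst, Prod.smul_snd,
    smul_eq_mul] <;> ring

-- The coefficient is that of the gradient in `adaptedMatInv_eq_smul`.
lemma abs_correction_le {d : ℝ} (hW0 : 0 < W) (ha : 0 ≤ a) (hd : |d| ≤ 1 / 20 * W) :
    |d / (W * (a + W))| ≤ 1 / 20 / W := by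
  have hW2 : |d| / (W * W) ≤ 1 / 20 / W := by
    rw [div_le_div_iff₀ (mul_pos hW0 hW0) hW0, ← mul_assoc]
    gcongr
  rw [abs_div, abs_of_pos (mul_pos hW0 (by linarith))]
  exact le_trans (by gcongr; linarith) hW2

lemma abs_dot_grad_le (hW : W ^ 2 = 1 + p ^ 2 + q ^ 2) (hW0 : 0 ≤ W) (he : sqNorm e = 1) :
    |dot e (p, q)| ≤ W := by
  have hpyth := dot_sq_add_dot_rot_sq e (p, q)
  rw [he, sqNorm] at hpyth
  exact abs_le_of_sq_le_sq (by nlinarith [sq_nonneg (dot (rot e) (p, q))]) hW0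

-- A direction almost orthogonal to the gradient is almost an eigenvector of the inverse matrix.
lemma adaptedMatInv_rot_mem_cone (hW : W ^ 2 = 1 + p ^ 2 + q ^ 2) (hW1 : 1 ≤ W)
    (ha : |a - 1| ≤ 1 / 4) (he : sqNorm e = 1) (hd : |dot (rot e) (p, q)| ≤ 1 / 20 * W) :
    2 / 5 ≤ dot (rot e) (adaptedMatInv a p q W (rot e)) ∧
      |dot e (adaptedMatInv a p q W (rot e))|
        ≤ 1 / 4 * dot (rot e) (adaptedMatInv a p q W (rot e)) := by
  have ha0 := three_quarters_le_of_abs_sub_one_le ha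
  have hW0 : 0 < W := by linarith
  have hα : 0 < a + 1 / W := by positivity
  have hα_le : a + 1 / W ≤ 9 / 4 := by
    linarith [(div_le_one hW0).2 hW1, (abs_le.1 ha).2]
  have hrot : dot (rot e) (rot e) = 1 := by rw [← he, dot_apply, sqNorm, rot]; ring
  have horth : dot e (rot e) = 0 := by rw [dot_apply, rot]; ring
  rw [adaptedMatInv_eq_smul hW hW0 (by linarith), map_smul, map_smul, map_sub, map_sub, map_smul,
    map_smul, hrot, horth, zero_sub]
  set d := dot (rot e) (p, q)
  set c := d / (W * (a + W))
  have hc : |c| ≤ 1 / 20 / W := abs_correction_le hW0 (by linarith) hd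
  have hcd : |c * d| ≤ 1 / 400 := by
    calc |c * d| ≤ (1 / 20 / W) * (1 / 20 * W) := by rw [abs_mul]; gcongr
      _ = 1 / 400 := by field_simp; norm_num
  have hck : |c * dot e (p, q)| ≤ 1 / 20 := by
    calc |c * dot e (p, q)| ≤ (1 / 20 / W) * W := by
          rw [abs_mul]; gcongr; exact abs_dot_grad_le hW hW0.le he
      _ = 1 / 20 := by field_simp
  simp only [smul_eq_mul]
  rw [mul_neg, abs_neg, abs_mul, abs_of_pos (inv_pos.2 hα), mul_left_comm (1 / 4),
    mul_le_mul_iff_right₀ (inv_pos.2 hα), inv_mul_eq_div, le_div_iff₀ hα]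
  constructor <;> linarith [(abs_le.1 hcd).2]

end Tangent

section Chart

variable {H ρ r : ℝ} {Ω : Set (ℝ × ℝ)} {u : ℝ × ℝ → ℝ} {P e w ζ : ℝ × ℝ} {S : ℝ × ℝ → ℝ × ℝ}

lemma Chart.hasDerivAt_comp_smul (hS : Chart H Ω u P ρ S) {t : ℝ}
    (ht : t • w ∈ Metric.ball (0 : ℝ × ℝ) ρ) :
    HasDerivAt (fun t : ℝ => S (t • w)) (adaptedJacInv H u P (S (t • w)) w) t := by
  have h := (hS.hasFDerivAt _ ht).comp_hasDerivAt t ((hasDerivAt_id t).smul_const w)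
  rwa [one_smul] at h

lemma Chart.adaptedJacInv_rot_mem_cone (hS : Chart H Ω u P ρ S)
    (hζ : ζ ∈ Metric.ball (0 : ℝ × ℝ) ρ) (hclose : IsGradientClose H u P (1 / 100) (S ζ))
    (he : sqNorm e = 1) (hperp : dot (rot e) (pdx u P, pdy u P) = 0) :
    2 / 5 ≤ dot (rot e) (adaptedJacInv H u P (S ζ) (rot e)) ∧
      |dot e (adaptedJacInv H u P (S ζ) (rot e))|
        ≤ 1 / 4 * dot (rot e) (adaptedJacInv H u P (S ζ) (rot e)) := by
  refine adaptedMatInv_rot_mem_cone (Wgraph_sq u _) (one_le_Wgraph u _) (hS.abs_le ζ hζ) he ?_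
  have hdiff : ‖(pdx u (S ζ), pdy u (S ζ)) - (pdx u P, pdy u P)‖ ≤ 1 / 100 * Wgraph u P :=
    max_le hclose.pdx_le hclose.pdy_le
  have hdot := abs_dot_le_of_sqNorm_eq_one ((sqNorm_rot e).trans he)
    ((pdx u (S ζ), pdy u (S ζ)) - (pdx u P, pdy u P))
  rw [map_sub, hperp, sub_zero] at hdot
  linarith [hclose.le_Wgraph, Wgraph_pos u P]

/-- A steep sheet of the graph of `u` through `P`: a curve of points close to `P`, written as a
graph of slope at most `1 / 4` over the line through `P` orthogonal to the unit vector `e`, along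
which the gradient stays large and the flux follows the normal of a circle of radius `1 / (2 H)`. -/
structure IsSheet (H b η : ℝ) (u : ℝ × ℝ → ℝ) (P e : ℝ × ℝ) (g : ℝ → ℝ) : Prop where
  sqNorm_eq : sqNorm e = 1
  norm_flux_sub : ‖flux u P - e‖ ≤ η
  continuousOn : ContinuousOn g (Icc (-b) b)
  abs_apply_le : ∀ y ∈ Icc (-b) b, |g y| ≤ 1 / 4 * |y|
  le_Wgraph : ∀ y ∈ Icc (-b) b, 1 / (2 * η) ≤ Wgraph u (framePt P e (g y) y)
  norm_flux_sub_circleNormal : ∀ y ∈ Icc (-b) b, ‖flux u (framePt P e (g y) y) -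
    circleNormal H P (flux u P) (framePt P e (g y) y)‖ ≤ η

lemma IsSheet.mono {b b' η : ℝ} {g : ℝ → ℝ} (h : IsSheet H b η u P e g) (hb : b' ≤ b) :
    IsSheet H b' η u P e g :=
  have hsub : Icc (-b') b' ⊆ Icc (-b) b := Icc_subset_Icc (neg_le_neg hb) hb
  ⟨h.sqNorm_eq, h.norm_flux_sub, h.continuousOn.mono hsub, fun y hy => h.abs_apply_le y (hsub hy),
    fun y hy => h.le_Wgraph y (hsub hy), fun y hy => h.norm_flux_sub_circleNormal y (hsub hy)⟩

-- The graph is the image under the chart of the line through `0` in the direction `rot e`.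
lemma Chart.exists_graph_isGradientClose (hS : Chart H Ω u P ρ S) {R : ℝ} (hR : 0 ≤ R)
    (hRρ : R < ρ)
    (hclose : ∀ ζ : ℝ × ℝ, ζ.1 ^ 2 + ζ.2 ^ 2 ≤ R ^ 2 → IsGradientClose H u P (1 / 100) (S ζ))
    (he : sqNorm e = 1) (hperp : dot (rot e) (pdx u P, pdy u P) = 0) :
    ∃ g : ℝ → ℝ, ContinuousOn g (Icc (-(2 / 5 * R)) (2 / 5 * R)) ∧
      ∀ y ∈ Icc (-(2 / 5 * R)) (2 / 5 * R), |g y| ≤ 1 / 4 * |y| ∧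
        IsGradientClose H u P (1 / 100) (framePt P e (g y) y) := by
  have hsq {t : ℝ} (ht : t ∈ Icc (-R) R) : (t • rot e).1 ^ 2 + (t • rot e).2 ^ 2 ≤ R ^ 2 := by
    calc (t • rot e).1 ^ 2 + (t • rot e).2 ^ 2 = t ^ 2 * sqNorm (rot e) := by
          simp only [sqNorm, Prod.smul_fst, Prod.smul_snd, smul_eq_mul]; ring
      _ ≤ R ^ 2 := by rw [sqNorm_rot, he, mul_one]; exact sq_le_sq' ht.1 ht.2
  have hball {t : ℝ} (ht : t ∈ Icc (-R) R) : t • rot e ∈ Metric.ball (0 : ℝ × ℝ) ρ :=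
    mem_ball_zero_iff.2 ((norm_le_of_sq_add_sq_le hR (hsq ht)).trans_lt hRρ)
  have hderiv (v : ℝ × ℝ) {t : ℝ} (ht : t ∈ Icc (-R) R) :
      HasDerivAt (fun t : ℝ => dot v (S (t • rot e) - P))
        (dot v (adaptedJacInv H u P (S (t • rot e)) (rot e))) t :=
    (dot v).hasFDerivAt.comp_hasDerivAt t ((hS.hasDerivAt_comp_smul (hball ht)).sub_const P)
  have hcone {t : ℝ} (ht : t ∈ Icc (-R) R) :=
    hS.adaptedJacInv_rot_mem_cone (hball ht) (hclose _ (hsq ht)) he hperp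
  have hzero (v : ℝ × ℝ) : dot v (S ((0 : ℝ) • rot e) - P) = 0 := by
    rw [zero_smul, hS.zero, sub_self, map_zero]
  obtain ⟨σ, hcont, hσ⟩ := exists_rightInverse_lipschitz hR (by norm_num)
    (fun t ht => hderiv e ht) (fun t ht => hderiv (rot e) ht) (fun t ht => (hcone ht).1)
    (fun t ht => (hcone ht).2) (hzero e) (hzero (rot e))
  refine ⟨_, hcont, fun y hy => ⟨(hσ y hy).2.2, ?_⟩⟩
  have hpt : framePt P e (dot e (S (σ y • rot e) - P)) y = S (σ y • rot e) := by
    nth_rw 2 [← (hσ y hy).2.1]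
    exact framePt_dot he P _
  rw [Function.comp_apply, hpt]
  exact hclose _ (hsq (hσ y hy).1)

lemma Chart.exists_isSheet (hS : Chart H Ω u P ρ S) {R η : ℝ} (hR : 0 ≤ R) (hRρ : R < ρ)
    (hclose : ∀ ζ : ℝ × ℝ, ζ.1 ^ 2 + ζ.2 ^ 2 ≤ R ^ 2 → IsGradientClose H u P (1 / 100) (S ζ))
    (hη : 0 < η) (hη1 : η < 1) (hW : 1 / η ≤ Wgraph u P) :
    ∃ e g, IsSheet H (2 / 5 * R) η u P e g := by
  have hWη : 1 / Wgraph u P ≤ η := by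
    rwa [one_div_le (Wgraph_pos u P) hη]
  obtain ⟨e, he, hperp, hflux⟩ := exists_unit_near_flux ((one_lt_one_div hη hη1).trans_le hW)
  obtain ⟨g, hcont, hg⟩ := hS.exists_graph_isGradientClose hR hRρ hclose he hperp
  refine ⟨e, g, he, hflux.trans hWη, hcont, fun y hy => (hg y hy).1, fun y hy => ?_,
    fun y hy => (hg y hy).2.norm_flux_sub_circleNormal_le.trans (le_trans ?_ hWη)⟩
  · have h2η : 1 / (2 * η) = 1 / 2 * (1 / η) := by rw [one_div_mul_one_div]
    linarith [(hg y hy).2.le_Wgraph, Wgraph_pos u P]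
  · gcongr
    · exact (Wgraph_pos u P).le
    · norm_num

lemma exists_isSheet (hH : 0 < H) (hr : 0 < r) : ∃ b > 0, b ≤ 1 / (16 * H) ∧
    ∀ {Ω : Set (ℝ × ℝ)} {u : ℝ × ℝ → ℝ} {P : ℝ × ℝ} {η : ℝ}, IsOpen Ω → IsCMCSolution H Ω u →
      Metric.ball P r ⊆ Ω → 0 < η → η < 1 → 1 / η ≤ Wgraph u P →
      ∃ e g, IsSheet H b η u P e g := by
  obtain ⟨ρ, -, R, hR, hRρ, hchart⟩ :=
    exists_chart_isGradientClose hH hr (by norm_num : (0 : ℝ) < 1 / 100)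
  refine ⟨min (2 / 5 * R) (1 / (16 * H)), by positivity, min_le_right _ _,
    fun hΩ hu hball hη hη1 hW => ?_⟩
  obtain ⟨S, hS, hclose⟩ := hchart hΩ hu hball
  obtain ⟨e, g, h⟩ := hS.exists_isSheet hR.le hRρ hclose hη hη1 hW
  exact ⟨e, g, h.mono (min_le_left _ _)⟩

end Chart

section IsSheet

variable {H b η : ℝ} {u : ℝ × ℝ → ℝ} {P e E : ℝ × ℝ} {g : ℝ → ℝ} {y : ℝ}

lemma IsSheet.norm_flux_sub_circleNormal_le (h : IsSheet H b η u P e g) (hE : ‖flux u P - E‖ ≤ η)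
    (hy : y ∈ Icc (-b) b) : ‖flux u (framePt P e (g y) y) -
      circleNormal H P E (framePt P e (g y) y)‖ ≤ 2 * η := by
  rw [← sub_add_sub_cancel _ (circleNormal H P (flux u P) (framePt P e (g y) y)),
    circleNormal_sub_circleNormal]
  linarith [norm_add_le_of_le (h.norm_flux_sub_circleNormal y hy) hE]

lemma IsSheet.abs_sqNorm_circleNormal_sub_one_le (h : IsSheet H b η u P e g) (hη : 0 < η)
    (hη1 : η ≤ 1 / 4) (hE : ‖flux u P - E‖ ≤ η) (hy : y ∈ Icc (-b) b) :
    |sqNorm (circleNormal H P E (framePt P e (g y) y)) - 1| ≤ 16 * η := by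
  set x := framePt P e (g y) y
  have hnear := h.norm_flux_sub_circleNormal_le hE hy
  rw [norm_sub_rev] at hnear
  have hinv : 1 / Wgraph u x ≤ 2 * η := (one_div_le (Wgraph_pos u x) (by positivity)).2
    (h.le_Wgraph y hy)
  have hinv0 : 0 ≤ 1 / Wgraph u x := (one_div_pos.2 (Wgraph_pos u x)).le
  have hsq := abs_sqNorm_sub_le (norm_flux_le_one u x) (hnear.trans (by linarith))
  rw [sqNorm_flux] at hsq
  have hinvsq : (1 / Wgraph u x) ^ 2 ≤ η := by nlinarith
  rw [abs_le] at hsq ⊢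
  constructor <;> linarith [sq_nonneg (1 / Wgraph u x)]

end IsSheet

/-! ### Local boundedness of the gradient -/

lemma norm_linForm_apply_le (a b : ℝ) (v : ℝ × ℝ) : ‖linForm a b v‖ ≤ (|a| + |b|) * ‖v‖ := by
  rw [linForm_apply, Real.norm_eq_abs, add_mul]
  refine (abs_add_le _ _).trans ?_
  rw [abs_mul, abs_mul]
  gcongr
  exacts [norm_fst_le v, norm_snd_le v]

lemma norm_adaptedMat_apply_le {a p q W : ℝ} (hW : W ^ 2 = 1 + p ^ 2 + q ^ 2) (hW0 : 0 < W)
    (ha : |a| ≤ 2) (v : ℝ × ℝ) : ‖adaptedMat a p q W v‖ ≤ (2 + 2 * W) * ‖v‖ := by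
  have hdiag : ∀ {s t : ℝ}, W ^ 2 = 1 + s ^ 2 + t ^ 2 → |a + (1 + s ^ 2) / W| ≤ 2 + W := by
    intro s t hst
    refine (abs_add_le _ _).trans (add_le_add ha ?_)
    rw [abs_of_nonneg (by positivity), div_le_iff₀ hW0]
    nlinarith [sq_nonneg t]
  have hoff : |p * q / W| ≤ W := by
    rw [abs_div, abs_of_pos hW0, div_le_iff₀ hW0]
    exact abs_le.2 ⟨by nlinarith [sq_nonneg (p + q)], by nlinarith [sq_nonneg (p - q)]⟩
  have hp := hdiag hW
  have hq := hdiag (s := q) (t := p) (by linarith)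
  exact max_le
    ((norm_linForm_apply_le _ _ v).trans (mul_le_mul_of_nonneg_right (by linarith) (norm_nonneg v)))
    ((norm_linForm_apply_le _ _ v).trans (mul_le_mul_of_nonneg_right (by linarith) (norm_nonneg v)))

namespace Chart

variable {H ρ R A : ℝ} {Ω : Set (ℝ × ℝ)} {u : ℝ × ℝ → ℝ} {Q v : ℝ × ℝ} {S : ℝ × ℝ → ℝ × ℝ}
  {γ : ℝ → ℝ × ℝ}

lemma contDiffOn_adaptedJac (hS : Chart H Ω u Q ρ S) (hΩ : IsOpen Ω) (hu : IsCMCSolution H Ω u) :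
    ContDiffOn ℝ 1 (fun ζ => adaptedJac H u Q (S ζ)) (Metric.ball 0 ρ) :=
  contDiffOn_adaptedMat ((hu.contDiffOn_heightCoeff Q).comp hS.contDiffOn hS.mem)
    ((contDiffOn_pdx hΩ hu.1).comp hS.contDiffOn hS.mem)
    ((contDiffOn_pdy hΩ hu.1).comp hS.contDiffOn hS.mem)
    ((contDiffOn_Wgraph hΩ hu.1).comp hS.contDiffOn hS.mem) fun _ _ => Wgraph_pos u _

lemma apply_flowLine_eq (hS : Chart H Ω u Q ρ S) (hR : R < ρ)
    (hγ : IsFlowLine (fun ζ => adaptedJac H u Q (S ζ) v) 0 R γ) : S (γ 1) = Q + v := by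
  have hmem : ∀ t ∈ Icc (0 : ℝ) 1, γ t ∈ Metric.ball 0 ρ := fun t ht =>
    Metric.closedBall_subset_ball hR (hγ.mem t ht)
  have hderiv : ∀ t ∈ Icc (0 : ℝ) 1,
      HasDerivWithinAt (fun t => S (γ t) - t • v) 0 (Icc 0 1) t := fun t ht =>
    (((hS.hasFDerivAt _ (hmem t ht)).comp_hasDerivWithinAt t (hγ.deriv t ht)).sub
      ((hasDerivWithinAt_id t _).smul_const v)).congr_deriv
      (by rw [adaptedJacInv_adaptedJac (hS.abs_le _ (hmem t ht)), one_smul, sub_self])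
  have hconst := norm_image_sub_le_of_norm_deriv_le_segment' hderiv (C := 0)
    (fun t _ => norm_zero.le) 1 (by simp)
  simp only [zero_mul, norm_le_zero_iff, hγ.init, hS.zero, one_smul, zero_smul, sub_zero] at hconst
  linear_combination (exp := 1) hconst

-- The segment from `Q` to `Q + v` lifts through the chart to a flow line of `m v`.
lemma exists_apply_eq (hS : Chart H Ω u Q ρ S) (hΩ : IsOpen Ω) (hu : IsCMCSolution H Ω u)
    (hR : 0 ≤ R) (hRρ : R < ρ) (hW : ∀ ζ ∈ Metric.closedBall 0 R, Wgraph u (S ζ) ≤ A)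
    (hv : (2 + 2 * A) * ‖v‖ ≤ R) : ∃ ζ ∈ Metric.closedBall 0 R, S ζ = Q + v := by
  have hsub : Metric.closedBall (0 : ℝ × ℝ) R ⊆ Metric.ball 0 ρ :=
    Metric.closedBall_subset_ball hRρ
  have hV : ContDiffOn ℝ 1 (fun ζ => adaptedJac H u Q (S ζ) v) (Metric.closedBall 0 R) :=
    ((hS.contDiffOn_adaptedJac hΩ hu).mono hsub).clm_apply contDiffOn_const
  obtain ⟨K, hK⟩ := hV.exists_lipschitzOnWith one_ne_zero (convex_closedBall 0 R)
    (isCompact_closedBall 0 R)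
  obtain ⟨γ, hγ⟩ := exists_isFlowLine hR hK fun ζ hζ => by
    have ha : |heightCoeff H u Q (S ζ)| ≤ 2 := by
      obtain ⟨hlo, hhi⟩ := _root_.abs_le.1 (hS.abs_le ζ (hsub hζ))
      exact _root_.abs_le.2 ⟨by linarith, by linarith⟩
    refine (norm_adaptedMat_apply_le (Wgraph_sq u _) (Wgraph_pos u _) ha v).trans
      (le_trans ?_ hv)
    gcongr
    exact hW ζ hζ
  exact ⟨γ 1, hγ.mem 1 (by simp), hS.apply_flowLine_eq hRρ hγ⟩

end Chart

lemma exists_Wgraph_le_of_Wgraph_le {H r m : ℝ} (hH : 0 < H) (hr : 0 < r) (hm : 0 ≤ m) :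
    ∃ r' > 0, ∀ {Ω : Set (ℝ × ℝ)} {u : ℝ × ℝ → ℝ} {Q x : ℝ × ℝ}, IsOpen Ω →
      IsCMCSolution H Ω u → Metric.ball Q r ⊆ Ω → Wgraph u Q ≤ m → ‖x - Q‖ ≤ r' →
        Wgraph u x ≤ 2 * m := by
  obtain ⟨ρ, -, R, hR, hRρ, hchart⟩ := exists_chart_isGradientClose hH hr one_half_pos
  refine ⟨R / 2 / (2 + 2 * (2 * m)), by positivity, fun {Ω u Q x} hΩ hu hball hWQ hx => ?_⟩
  obtain ⟨S, hS, hclose⟩ := hchart hΩ hu hball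
  have hW : ∀ ζ ∈ Metric.closedBall 0 (R / 2), Wgraph u (S ζ) ≤ 2 * m := fun ζ hζ => by
    have hsq := sq_add_sq_le_of_norm_le (mem_closedBall_zero_iff.1 hζ)
    linarith [(hclose ζ (by nlinarith)).Wgraph_le]
  obtain ⟨ζ, hζ, hSζ⟩ := hS.exists_apply_eq hΩ hu (by positivity) (by linarith) hW
    (v := x - Q) (by rwa [le_div_iff₀' (by positivity)] at hx)
  rw [← add_sub_cancel Q x, ← hSζ]
  exact hW ζ hζ

/-! ### Crossing sheets -/

section UnitVectors

variable {e N X : ℝ × ℝ} {δ : ℝ}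

lemma sqNorm_sub_eq_of_unit (hN : sqNorm N = 1) (he : sqNorm e = 1) :
    sqNorm (N - e) = 2 * (1 - dot e N) := by
  simp only [sqNorm, dot_apply, Prod.fst_sub, Prod.snd_sub] at *
  linear_combination hN + he

lemma three_quarters_le_dot (hN : sqNorm N = 1) (he : sqNorm e = 1) (h : ‖N - e‖ ≤ 1 / 4) :
    3 / 4 ≤ dot e N := by
  linarith [sqNorm_sub_eq_of_unit hN he, sqNorm_le_of_norm_le h]

lemma sqNorm_sub_mem_Icc (hδ : 0 ≤ δ) (hX : sqNorm (X - N) = δ ^ 2) (he : ‖X - e‖ ≤ δ / 8) :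
    sqNorm (N - e) ∈ Icc (δ ^ 2 / 2) (2 * δ ^ 2) := by
  have hexpand : sqNorm (N - e) = sqNorm (X - N) + sqNorm (X - e) - 2 * dot (X - N) (X - e) := by
    simp only [sqNorm, dot_apply, Prod.fst_sub, Prod.snd_sub]; ring
  have hdot : |dot (X - N) (X - e)| ≤ 2 * (δ * (δ / 8)) :=
    (abs_dot_le (norm_le_of_sqNorm_le hδ hX.le) _).trans (by gcongr)
  have hsq := sqNorm_le_of_norm_le he
  have hsq0 := sqNorm_nonneg (X - e)
  rw [abs_le] at hdot
  rw [hexpand, hX]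
  constructor <;> nlinarith

lemma half_le_abs_dot_rot (hN : sqNorm N = 1) (he : sqNorm e = 1) (hδ : 0 ≤ δ) (hδ1 : δ ≤ 1)
    (h : sqNorm (N - e) ∈ Icc (δ ^ 2 / 2) (2 * δ ^ 2)) : δ / 2 ≤ |dot (rot e) N| := by
  rw [sqNorm_sub_eq_of_unit hN he] at h
  obtain ⟨hlo, hhi⟩ := h
  have hsq := dot_sq_add_dot_rot_sq e N
  rw [he, hN] at hsq
  refine le_trans (le_abs_self _) (sq_le_sq.1 ?_)
  have hdot : 0 ≤ dot e N := by nlinarith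
  have hdot1 : 0 ≤ 1 - dot e N := by nlinarith
  nlinarith [mul_nonneg hdot hdot1]

lemma sqNorm_circleNormal_framePt_sub (he : sqNorm e = 1) (H : ℝ) (P N : ℝ × ℝ) (s t y : ℝ) :
    sqNorm (circleNormal H P N (framePt P e s y)) - sqNorm (circleNormal H P N (framePt P e t y))
      = 4 * H * (dot e N + H * (s + t)) * (s - t) := by
  simp only [sqNorm, circleNormal, framePt, rot, dot_apply, Prod.fst_add, Prod.snd_add,
    Prod.fst_sub, Prod.snd_sub, Prod.smul_fst, Prod.smul_snd, smul_eq_mul] at *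
  linear_combination 4 * H ^ 2 * (s ^ 2 - t ^ 2) * he

lemma sqNorm_circleNormal_framePt_sub_of_unit (hN : sqNorm N = 1) (he : sqNorm e = 1) (H : ℝ)
    (Q : ℝ × ℝ) (s y : ℝ) :
    sqNorm (circleNormal H Q N (framePt Q e s y)) - sqNorm (circleNormal H Q e (framePt Q e s y))
      = 4 * H * (y * dot (rot e) N - (1 - dot e N) * s) := by
  simp only [sqNorm, circleNormal, framePt, rot, dot_apply, Prod.fst_add, Prod.snd_add,
    Prod.fst_sub, Prod.snd_sub, Prod.smul_fst, Prod.smul_snd, smul_eq_mul] at *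
  linear_combination hN - (1 + 4 * H * s) * he

end UnitVectors

lemma pos_of_abs_sub_mul_lt {a κ t : ℝ} (hκ : 0 ≤ κ) (h : |a - κ * t| < a) : 0 < t :=
  pos_of_mul_pos_right (by linarith [(abs_lt.1 h).2]) hκ

lemma exists_eq_zero_of_abs_sub_mul_lt {f : ℝ → ℝ} {τ K κ κ' : ℝ}
    (hf : ContinuousOn f (Icc (-τ) τ)) (hτ : 0 ≤ τ) (hκ : 0 ≤ κ) (hκ' : 0 ≤ κ')
    (hr : |τ * K - κ * f τ| < τ * |K|) (hl : |-τ * K - κ' * f (-τ)| < τ * |K|) :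
    ∃ y ∈ Icc (-τ) τ, f y = 0 := by
  have hle : -τ ≤ τ := by linarith
  rcases le_total 0 K with hK | hK
  · rw [abs_of_nonneg hK] at hr hl
    have hpos := pos_of_abs_sub_mul_lt hκ hr
    have hneg : 0 < -f (-τ) := pos_of_abs_sub_mul_lt hκ' (by
      rwa [← abs_neg, show -(τ * K - κ' * -f (-τ)) = -τ * K - κ' * f (-τ) by ring])
    exact intermediate_value_Icc hle hf ⟨by linarith, hpos.le⟩
  · rw [abs_of_nonpos hK] at hr hl
    have hpos := pos_of_abs_sub_mul_lt hκ' (a := τ * -K) (by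
      rwa [show τ * -K - κ' * f (-τ) = -τ * K - κ' * f (-τ) by ring])
    have hneg : 0 < -f τ := pos_of_abs_sub_mul_lt hκ (by
      rwa [← abs_neg, show -(τ * -K - κ * -f τ) = τ * K - κ * f τ by ring])
    exact intermediate_value_Icc' hle hf ⟨by linarith, hpos.le⟩

/-- The height of `x` above the curve `y ↦ framePt P e (g y) y`, measured in the direction `e`. -/
def sheetHeight (P e : ℝ × ℝ) (g : ℝ → ℝ) (x : ℝ × ℝ) : ℝ :=
  dot e (x - P) - g (dot (rot e) (x - P))

namespace IsSheet

variable {H b η η' δ : ℝ} {u : ℝ × ℝ → ℝ} {P Q e e' E x : ℝ × ℝ} {g g' : ℝ → ℝ}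

lemma abs_dot_rot_le (h : IsSheet H b η u P e g) (hx : ‖x - P‖ ≤ b / 2) :
    dot (rot e) (x - P) ∈ Icc (-b) b :=
  abs_le.1 (by
    linarith [abs_dot_le_of_sqNorm_eq_one ((sqNorm_rot e).trans h.sqNorm_eq) (x - P)])

lemma exists_abs_defect_sub_le (h : IsSheet H b η u P e g) (hH : 0 < H) (hb : b ≤ 1 / (16 * H))
    (hη : 0 < η) (hη1 : η ≤ 1 / 8) (hE : sqNorm E = 1) (hEflux : ‖flux u P - E‖ ≤ η)
    (hx : ‖x - P‖ ≤ b / 2) :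
    ∃ κ ≥ 2 * H,
      |sqNorm (circleNormal H P E x) - 1 - κ * sheetHeight P e g x| ≤ 16 * η := by
  have hy := h.abs_dot_rot_le hx
  have hs := abs_dot_le_of_sqNorm_eq_one h.sqNorm_eq (x - P)
  have hdefect := h.abs_sqNorm_circleNormal_sub_one_le hη (by linarith) hEflux hy
  have hbase := sqNorm_circleNormal_framePt_sub h.sqNorm_eq H P E (dot e (x - P))
    (g (dot (rot e) (x - P))) (dot (rot e) (x - P))
  rw [framePt_dot h.sqNorm_eq] at hbase
  have hg := h.abs_apply_le _ hy
  set s := dot e (x - P)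
  set y := dot (rot e) (x - P)
  refine ⟨4 * H * (dot e E + H * (s + g y)), ?_, ?_⟩
  · have hEe : ‖E - e‖ ≤ 1 / 4 := by
      rw [← sub_sub_sub_cancel_left e E (flux u P)]
      linarith [norm_sub_le_of_le h.norm_flux_sub hEflux]
    have hsg : H * -(2 * b) ≤ H * (s + g y) := by
      have hyb := abs_le.2 hy
      gcongr
      linarith [(abs_le.1 hs).1, (abs_le.1 hg).1, abs_nonneg y]
    have hHb : b * (16 * H) ≤ 1 := (le_div_iff₀ (by positivity)).1 hb
    nlinarith [three_quarters_le_dot hE h.sqNorm_eq hEe]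
  · rwa [sheetHeight, ← hbase, show ∀ a c : ℝ, a - 1 - (a - c) = c - 1 by intros; ring]

-- A point of the limit circle lies within `O(η)` of the sheet, where the graph is steep.
lemma exists_le_Wgraph_near (h : IsSheet H b η u P e g) (hH : 0 < H) (hb : b ≤ 1 / (16 * H))
    (hη : 0 < η) (hη1 : η ≤ 1 / 8) (hE : sqNorm E = 1) (hEflux : ‖flux u P - E‖ ≤ η)
    (hQ : sqNorm (circleNormal H P E Q) = 1) (hQP : ‖Q - P‖ ≤ b / 2) :
    ∃ x, ‖x - Q‖ ≤ 8 * η / H ∧ 1 / (2 * η) ≤ Wgraph u x := by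
  obtain ⟨κ, hκ, hdefect⟩ := h.exists_abs_defect_sub_le hH hb hη hη1 hE hEflux hQP
  have hheight : |sheetHeight P e g Q| ≤ 8 * η / H := by
    rw [hQ, sub_self, zero_sub, abs_neg, abs_mul, abs_of_nonneg (by linarith)] at hdefect
    rw [le_div_iff₀ hH]
    nlinarith [abs_nonneg (sheetHeight P e g Q)]
  refine ⟨_, ?_, h.le_Wgraph _ (h.abs_dot_rot_le hQP)⟩
  nth_rw 3 [← framePt_dot h.sqNorm_eq P Q]
  rw [norm_sub_rev, framePt_sub_framePt, ← sheetHeight, norm_smul]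
  exact (mul_le_of_le_one_right (abs_nonneg _) (norm_le_one_of_sqNorm_eq_one h.sqNorm_eq)).trans
    hheight

lemma norm_framePt_sub_le (h' : IsSheet H b η' u Q e' g') (hQP : ‖Q - P‖ ≤ b / 8) {y : ℝ}
    (hy : |y| ≤ b / 8) : ‖framePt Q e' (g' y) y - P‖ ≤ b / 2 := by
  have hg := h'.abs_apply_le y (abs_le.1 (by linarith [abs_nonneg y]))
  linarith [_root_.norm_framePt_sub_le h'.sqNorm_eq Q P (g' y) y, abs_nonneg y]

lemma continuousOn_sheetHeight (h : IsSheet H b η u P e g) (h' : IsSheet H b η' u Q e' g')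
    (hb : 0 ≤ b) (hQP : ‖Q - P‖ ≤ b / 8) :
    ContinuousOn (fun y => sheetHeight P e g (framePt Q e' (g' y) y)) (Icc (-(b / 8)) (b / 8)) := by
  have hg' := h'.continuousOn.mono (Icc_subset_Icc (by linarith) (by linarith) :
    Icc (-(b / 8)) (b / 8) ⊆ Icc (-b) b)
  have hpt : ContinuousOn (fun y => framePt Q e' (g' y) y) (Icc (-(b / 8)) (b / 8)) := by
    unfold framePt
    fun_prop
  refine ContinuousOn.sub (by fun_prop) (h.continuousOn.comp (by fun_prop) fun y hy => ?_)
  exact h.abs_dot_rot_le (h'.norm_framePt_sub_le hQP (abs_le.2 hy))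

-- The defect of a point of the second sheet from the limit circle, computed in both frames.
lemma exists_abs_sub_mul_sheetHeight_le (h : IsSheet H b η u P e g)
    (h' : IsSheet H b η' u Q e' g') (hH : 0 < H) (hb : b ≤ 1 / (16 * H)) (hη : 0 < η)
    (hη1 : η ≤ 1 / 8) (hη' : 0 < η') (hη1' : η' ≤ 1 / 8) (hE : sqNorm E = 1)
    (hEflux : ‖flux u P - E‖ ≤ η) (hQ : sqNorm (circleNormal H P E Q) = 1)
    (hQP : ‖Q - P‖ ≤ b / 8) {y : ℝ} (hy : |y| ≤ b / 8) :
    ∃ κ ≥ 2 * H,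
      |4 * H * (y * dot (rot e') (circleNormal H P E Q) -
          (1 - dot e' (circleNormal H P E Q)) * g' y) -
        κ * sheetHeight P e g (framePt Q e' (g' y) y)| ≤ 16 * η + 16 * η' := by
  obtain ⟨κ, hκ, hdefect⟩ := h.exists_abs_defect_sub_le hH hb hη hη1 hE hEflux
    (h'.norm_framePt_sub_le hQP hy)
  have hdefect' := h'.abs_sqNorm_circleNormal_sub_one_le hη' (by linarith) h'.norm_flux_sub
    (abs_le.1 (by linarith [abs_nonneg y]) : y ∈ Icc (-b) b)
  refine ⟨κ, hκ, ?_⟩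
  rw [← circleNormal_circleNormal H P E Q] at hdefect
  rw [← sqNorm_circleNormal_framePt_sub_of_unit hQ h'.sqNorm_eq]
  rw [abs_le] at hdefect hdefect' ⊢
  constructor <;> linarith

lemma exists_abs_sub_mul_sheetHeight_lt (h : IsSheet H b η u P e g)
    (h' : IsSheet H b η' u Q e' g') (hH : 0 < H) (hb0 : 0 < b) (hb : b ≤ 1 / (16 * H))
    (hη : 0 < η) (hηη' : η ≤ η') (hη' : η' ≤ δ / 8) (hη'H : η' ≤ H * δ * (b / 8) / 32)
    (hδ1 : δ ≤ 1 / 10) (hE : sqNorm E = 1) (hEflux : ‖flux u P - E‖ ≤ η)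
    (hQ : sqNorm (circleNormal H P E Q) = 1) (hQP : ‖Q - P‖ ≤ b / 8)
    (hδ : sqNorm (flux u Q - circleNormal H P E Q) = δ ^ 2) {y : ℝ} (hy : |y| ≤ b / 8) :
    ∃ κ ≥ 0, |y * (4 * H * dot (rot e') (circleNormal H P E Q)) -
        κ * sheetHeight P e g (framePt Q e' (g' y) y)|
      < b / 8 * |4 * H * dot (rot e') (circleNormal H P E Q)| := by
  have hη'0 : 0 < η' := hη.trans_le hηη'
  have hδ0 : 0 < δ := by linarith
  obtain ⟨κ, hκ, hest⟩ := h.exists_abs_sub_mul_sheetHeight_le h' hH hb hη (by linarith) hη'0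
    (by linarith) hE hEflux hQ hQP hy
  set N := circleNormal H P E Q
  set K := dot (rot e') N
  have hdist := sqNorm_sub_mem_Icc hδ0.le hδ (h'.norm_flux_sub.trans hη')
  have hK : δ / 2 ≤ |K| := half_le_abs_dot_rot hQ h'.sqNorm_eq hδ0.le (by linarith) hdist
  rw [sqNorm_sub_eq_of_unit hQ h'.sqNorm_eq] at hdist
  have hg' := h'.abs_apply_le y (abs_le.1 (by linarith))
  have hcorr : |(1 - dot e' N) * g' y| ≤ δ / 10 * (b / 32) := by
    rw [abs_mul, abs_of_nonneg (by nlinarith [hdist.1])]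
    gcongr
    · nlinarith [hdist.2]
    · linarith
  have : 0 < H * δ * b := by positivity
  have hmain : 2 * H * δ * (b / 8) ≤ b / 8 * |4 * H * K| := by
    rw [abs_mul, abs_of_pos (by positivity)]
    nlinarith [mul_le_mul_of_nonneg_left hK (mul_pos hH hb0).le]
  refine ⟨κ, by linarith, ?_⟩
  calc |y * (4 * H * K) - κ * sheetHeight P e g (framePt Q e' (g' y) y)|
      = |(4 * H * (y * K - (1 - dot e' N) * g' y) -
          κ * sheetHeight P e g (framePt Q e' (g' y) y)) +
          4 * H * ((1 - dot e' N) * g' y)| := by ring_nf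
    _ ≤ 16 * η + 16 * η' + 4 * H * (δ / 10 * (b / 32)) := by
        refine (abs_add_le _ _).trans (add_le_add hest ?_)
        rw [abs_mul, abs_of_pos (by positivity)]
        gcongr
    _ < b / 8 * |4 * H * K| := by linarith

-- Along the sheet through `Q` the height above the sheet through `P` changes sign.
lemma exists_framePt_eq_framePt (h : IsSheet H b η u P e g) (h' : IsSheet H b η' u Q e' g')
    (hH : 0 < H) (hb0 : 0 < b) (hb : b ≤ 1 / (16 * H)) (hη : 0 < η) (hηη' : η ≤ η')
    (hη' : η' ≤ δ / 8) (hη'H : η' ≤ H * δ * (b / 8) / 32) (hδ1 : δ ≤ 1 / 10)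
    (hE : sqNorm E = 1) (hEflux : ‖flux u P - E‖ ≤ η)
    (hQ : sqNorm (circleNormal H P E Q) = 1) (hQP : ‖Q - P‖ ≤ b / 8)
    (hδ : sqNorm (flux u Q - circleNormal H P E Q) = δ ^ 2) :
    ∃ y ∈ Icc (-b) b, ∃ y' ∈ Icc (-b) b, framePt P e (g y) y = framePt Q e' (g' y') y' := by
  have hτ : |b / 8| = b / 8 := abs_of_pos (by positivity)
  have hsign := fun {y : ℝ} => h.exists_abs_sub_mul_sheetHeight_lt (y := y) h' hH hb0 hb hη hηη'
    hη' hη'H hδ1 hE hEflux hQ hQP hδ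
  obtain ⟨κ, hκ, hr⟩ := hsign hτ.le
  obtain ⟨κ', hκ', hl⟩ := hsign ((abs_neg _).trans hτ).le
  obtain ⟨y', hy', hzero⟩ := exists_eq_zero_of_abs_sub_mul_lt
    (h.continuousOn_sheetHeight h' hb0.le hQP) (by positivity) hκ hκ' hr hl
  have hnear := h'.norm_framePt_sub_le hQP (abs_le.2 hy')
  refine ⟨_, h.abs_dot_rot_le hnear, y', Icc_subset_Icc (by linarith) (by linarith) hy', ?_⟩
  rw [← sub_eq_zero.1 hzero, framePt_dot h.sqNorm_eq]

lemma norm_flux_sub_circleNormal_le_of_framePt_eq (h : IsSheet H b η u P e g)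
    (h' : IsSheet H b η' u Q e' g') (hEflux : ‖flux u P - E‖ ≤ η) {y y' : ℝ}
    (hy : y ∈ Icc (-b) b) (hy' : y' ∈ Icc (-b) b)
    (heq : framePt P e (g y) y = framePt Q e' (g' y') y') :
    ‖flux u Q - circleNormal H P E Q‖ ≤ 2 * η + η' := by
  have hP := h.norm_flux_sub_circleNormal_le hEflux hy
  have hQ := h'.norm_flux_sub_circleNormal y' hy'
  rw [heq, ← circleNormal_circleNormal H P E Q] at hP
  rw [← circleNormal_sub_circleNormal H Q _ _ (framePt Q e' (g' y') y'),
    ← sub_sub_sub_cancel_left _ _ (flux u (framePt Q e' (g' y') y'))]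
  exact norm_sub_le_of_le hP hQ

end IsSheet

lemma exists_sqNorm_flux_sub_circleNormal_ne {H r : ℝ} (hH : 0 < H) (hr : 0 < r) :
    ∃ d > 0, ∀ δ, 0 < δ → δ ≤ 1 / 10 → ∃ η > 0,
      ∀ {Ω : Set (ℝ × ℝ)} {u : ℝ × ℝ → ℝ} {P Q E : ℝ × ℝ}, IsOpen Ω → IsCMCSolution H Ω u →
        Metric.ball P r ⊆ Ω → Metric.ball Q r ⊆ Ω → sqNorm E = 1 →
        sqNorm (circleNormal H P E Q) = 1 → ‖Q - P‖ ≤ d → 1 / η ≤ Wgraph u P →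
        ‖flux u P - E‖ ≤ η → sqNorm (flux u Q - circleNormal H P E Q) ≠ δ ^ 2 := by
  obtain ⟨b, hb0, hb, hsheet⟩ := exists_isSheet hH hr
  refine ⟨b / 8, by positivity, fun δ hδ hδ1 => ?_⟩
  obtain ⟨η', hη'0, hη'⟩ : ∃ η' > 0, η' ≤ min (δ / 8) (H * δ * (b / 8) / 32) :=
    ⟨_, by positivity, le_rfl⟩
  obtain ⟨hη'δ, hη'H⟩ := le_min_iff.1 hη'
  obtain ⟨r', hr', hbounded⟩ := exists_Wgraph_le_of_Wgraph_le hH hr (one_div_pos.2 hη'0).le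
  obtain ⟨η, hη0, hη⟩ : ∃ η > 0, η ≤ min (η' / 8) (H * r' / 8) := ⟨_, by positivity, le_rfl⟩
  obtain ⟨hηη', hηr⟩ := le_min_iff.1 hη
  refine ⟨η, hη0, fun {Ω u P Q E} hΩ hu hBP hBQ hE hQ hQP hWP hEflux heq => ?_⟩
  obtain ⟨e, g, h⟩ := hsheet hΩ hu hBP hη0 (by linarith) hWP
  have hWQ : 1 / η' ≤ Wgraph u Q := by
    by_contra! hlt
    obtain ⟨x, hx, hWx⟩ := h.exists_le_Wgraph_near hH hb hη0 (by linarith) hE hEflux hQ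
      (by linarith)
    have hle := hbounded hΩ hu hBQ hlt.le (hx.trans ((div_le_iff₀ hH).2 (by linarith)))
    have hgap : 4 * (1 / η') ≤ 1 / (2 * η) := by
      rw [mul_one_div, div_le_div_iff₀ hη'0 (by positivity)]
      linarith
    linarith [one_div_pos.2 hη'0]
  obtain ⟨e', g', h'⟩ := hsheet hΩ hu hBQ hη'0 (by linarith) hWQ
  obtain ⟨y, hy, y', hy', hcross⟩ := h.exists_framePt_eq_framePt h' hH hb0 hb hη0 (by linarith)
    hη'δ hη'H hδ1 hE hEflux hQ hQP heq
  have hclose := sqNorm_le_of_norm_le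
    (h.norm_flux_sub_circleNormal_le_of_framePt_eq h' hEflux hy hy' hcross)
  nlinarith

/-! ### Propagation along the limit circle -/

/-- The circle of radius `1 / (2 H)` with outward unit normal `E` at `P`, parametrized by the angle
of rotation from `P`. -/
def arcPt (H : ℝ) (P E : ℝ × ℝ) (θ : ℝ) : ℝ × ℝ :=
  P + (1 / (2 * H)) • (cos θ • E + sin θ • rot E - E)

section Arc

variable {H θ θ' : ℝ} {P E Q : ℝ × ℝ}

lemma arcPt_zero (H : ℝ) (P E : ℝ × ℝ) : arcPt H P E 0 = P := by
  simp [arcPt]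

lemma continuous_arcPt (H : ℝ) (P E : ℝ × ℝ) : Continuous (arcPt H P E) := by
  unfold arcPt
  fun_prop

lemma continuous_circleNormal (H : ℝ) (P E : ℝ × ℝ) : Continuous (circleNormal H P E) := by
  unfold circleNormal
  fun_prop

lemma circleNormal_injective (hH : H ≠ 0) (P E : ℝ × ℝ) :
    Function.Injective (circleNormal H P E) := fun x y h => by
  simpa [circleNormal, hH] using h

lemma circleNormal_arcPt (hH : H ≠ 0) (P E : ℝ × ℝ) (θ : ℝ) :
    circleNormal H P E (arcPt H P E θ) = cos θ • E + sin θ • rot E := by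
  rw [circleNormal, arcPt, add_sub_cancel_left, smul_smul, mul_one_div_cancel (by simpa using hH),
    one_smul, add_sub_cancel]

lemma sqNorm_circleNormal_arcPt (hH : H ≠ 0) (hE : sqNorm E = 1) (P : ℝ × ℝ) (θ : ℝ) :
    sqNorm (circleNormal H P E (arcPt H P E θ)) = 1 := by
  rw [circleNormal_arcPt hH]
  simp only [sqNorm, rot, Prod.fst_add, Prod.snd_add, Prod.smul_fst, Prod.smul_snd,
    smul_eq_mul] at hE ⊢
  linear_combination (cos θ ^ 2 + sin θ ^ 2) * hE + sin_sq_add_cos_sq θ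

lemma sqNorm_arcPt_sub (hE : sqNorm E = 1) (P : ℝ × ℝ) (θ : ℝ) :
    sqNorm (arcPt H P E θ - P) = (1 / (2 * H)) ^ 2 * (2 - 2 * cos θ) := by
  rw [arcPt, add_sub_cancel_left]
  simp only [sqNorm, rot, Prod.fst_add, Prod.snd_add, Prod.fst_sub, Prod.snd_sub, Prod.smul_fst,
    Prod.smul_snd, smul_eq_mul] at hE ⊢
  linear_combination (1 / (2 * H)) ^ 2 *
    ((cos θ ^ 2 + sin θ ^ 2 + 1 - 2 * cos θ) * hE + sin_sq_add_cos_sq θ)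

lemma exists_cos_smul_add_sin_smul_rot {v : ℝ × ℝ} (hE : sqNorm E = 1) (hv : sqNorm v = 1) :
    ∃ θ, |θ| ≤ π ∧ cos θ • E + sin θ • rot E = v := by
  let z : ℂ := ⟨dot E v, dot (rot E) v⟩
  have hz : ‖z‖ = 1 := by
    rw [Complex.norm_def, Complex.normSq_mk, ← sq, ← sq, dot_sq_add_dot_rot_sq, hE, hv, one_mul,
      Real.sqrt_one]
  have hcos : cos z.arg = dot E v := by
    rw [Complex.cos_arg (norm_pos_iff.1 (hz ▸ one_pos)), hz, div_one]
  have hsin : sin z.arg = dot (rot E) v := by rw [Complex.sin_arg, hz, div_one]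
  refine ⟨z.arg, Complex.abs_arg_le_pi z, ?_⟩
  simpa [framePt, hcos, hsin] using framePt_dot hE 0 v

lemma exists_arcPt_eq (hH : H ≠ 0) (hE : sqNorm E = 1) (hQ : sqNorm (circleNormal H P E Q) = 1) :
    ∃ θ, |θ| ≤ π ∧ arcPt H P E θ = Q := by
  obtain ⟨θ, hθ, heq⟩ := exists_cos_smul_add_sin_smul_rot hE hQ
  exact ⟨θ, hθ, circleNormal_injective hH P E ((circleNormal_arcPt hH P E θ).trans heq)⟩

lemma norm_arcPt_sub_le (hE : sqNorm E = 1) (h : |θ| ≤ |θ'|) (h' : |θ'| ≤ π) :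
    ‖arcPt H P E θ - P‖ ≤ 2 * ‖arcPt H P E θ' - P‖ := by
  have hcos : cos θ' ≤ cos θ := by
    rw [← cos_abs θ, ← cos_abs θ']
    exact cos_le_cos_of_nonneg_of_le_pi (abs_nonneg _) h' h
  refine norm_le_of_sqNorm_le (by positivity) ?_
  calc sqNorm (arcPt H P E θ - P) ≤ sqNorm (arcPt H P E θ' - P) := by
        rw [sqNorm_arcPt_sub hE, sqNorm_arcPt_sub hE]
        gcongr
    _ ≤ 2 * ‖arcPt H P E θ' - P‖ ^ 2 := sqNorm_le_of_norm_le le_rfl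
    _ ≤ (2 * ‖arcPt H P E θ' - P‖) ^ 2 := by linarith [sq_nonneg ‖arcPt H P E θ' - P‖]

end Arc

section Propagation

variable {H r : ℝ} {Ω : Set (ℝ × ℝ)} {P Q E : ℝ × ℝ} {u : ℕ → ℝ × ℝ → ℝ}

lemma tendsto_inv_Wgraph (hE : sqNorm E = 1)
    (h : Tendsto (fun n => flux (u n) P) atTop (nhds E)) :
    Tendsto (fun n => 1 / Wgraph (u n) P) atTop (nhds 0) := by
  have hlim : Tendsto (fun n => √(1 - sqNorm (flux (u n) P))) atTop (nhds √(1 - sqNorm E)) :=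
    (tendsto_const_nhds.sub ((continuous_sqNorm.tendsto E).comp h)).sqrt
  rw [hE, sub_self, Real.sqrt_zero] at hlim
  refine hlim.congr fun n => ?_
  rw [sqNorm_flux, sub_sub_cancel, Real.sqrt_sq (one_div_pos.2 (Wgraph_pos _ _)).le]

lemma tendsto_atTop_of_forall_eventually_sqNorm_lt {f : ℕ → ℝ × ℝ}
    (h : ∀ δ, 0 < δ → δ ≤ 1 / 10 → ∀ᶠ n in atTop, sqNorm (f n - E) < δ ^ 2) :
    Tendsto f atTop (nhds E) := by
  refine Metric.tendsto_nhds.2 fun ε hε => ?_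
  have hδ : 0 < min (ε / 2) (1 / 10) := by positivity
  filter_upwards [h _ hδ (min_le_right _ _)] with n hn
  rw [dist_eq_norm]
  linarith [norm_le_of_sqNorm_le hδ.le hn.le, min_le_left (ε / 2) (1 / 10)]

lemma sqNorm_flux_arcPt_sub_lt {v : ℝ × ℝ → ℝ} {δ θ : ℝ} (hv : ContinuousOn (flux v) Ω)
    (harc : ∀ t, |t| ≤ |θ| → arcPt H P E t ∈ Ω)
    (hne : ∀ t, |t| ≤ |θ| →
      sqNorm (flux v (arcPt H P E t) - circleNormal H P E (arcPt H P E t)) ≠ δ ^ 2)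
    (h0 : sqNorm (flux v P - E) < δ ^ 2) :
    sqNorm (flux v (arcPt H P E θ) - circleNormal H P E (arcPt H P E θ)) < δ ^ 2 := by
  have hcont : ContinuousOn
      (fun t => sqNorm (flux v (arcPt H P E t) - circleNormal H P E (arcPt H P E t)))
      (Icc (-|θ|) |θ|) :=
    continuous_sqNorm.comp_continuousOn ((hv.comp (continuous_arcPt H P E).continuousOn
      fun t ht => harc t (abs_le.2 ht)).sub
        ((continuous_circleNormal H P E).comp (continuous_arcPt H P E)).continuousOn)
  by_contra! hge
  obtain ⟨t, ht, heq⟩ := isPreconnected_Icc.intermediate_value₂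
    (abs_le.1 (by simp : |(0 : ℝ)| ≤ |θ|)) (abs_le.1 le_rfl) hcont continuousOn_const
    (by rw [arcPt_zero, circleNormal_self]; exact h0.le) hge
  exact hne t (abs_le.2 ht) heq

lemma exists_tendsto_flux_circleNormal (hH : 0 < H) (hr : 0 < r) : ∃ d > 0,
    ∀ {Ω : Set (ℝ × ℝ)} {u : ℕ → ℝ × ℝ → ℝ} {P Q E : ℝ × ℝ}, IsOpen Ω →
      (∀ n, IsCMCSolution H Ω (u n)) → Metric.ball P (2 * r) ⊆ Ω → sqNorm E = 1 →
      sqNorm (circleNormal H P E Q) = 1 → ‖Q - P‖ ≤ d →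
      Tendsto (fun n => flux (u n) P) atTop (nhds E) →
      Tendsto (fun n => flux (u n) Q) atTop (nhds (circleNormal H P E Q)) := by
  obtain ⟨d, hd, hne⟩ := exists_sqNorm_flux_sub_circleNormal_ne hH hr
  obtain ⟨d', hd', hmin⟩ : ∃ d' > 0, d' ≤ min d r / 2 := ⟨_, by positivity, le_rfl⟩
  refine ⟨d' / 2, by positivity, fun {Ω u P Q E} hΩ hu hball hE hQ hQP hlim => ?_⟩
  obtain ⟨θ, hθ, rfl⟩ := exists_arcPt_eq hH.ne' hE hQ
  have hnear : ∀ t, |t| ≤ |θ| → ‖arcPt H P E t - P‖ ≤ d' := fun t ht => by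
    linarith [norm_arcPt_sub_le (H := H) (P := P) hE ht hθ]
  have hballs : ∀ t, |t| ≤ |θ| → Metric.ball (arcPt H P E t) r ⊆ Ω := fun t ht => by
    refine (Metric.ball_subset_ball' ?_).trans hball
    rw [dist_eq_norm]
    linarith [hnear t ht, min_le_right d r]
  refine tendsto_atTop_of_forall_eventually_sqNorm_lt fun δ hδ hδ1 => ?_
  obtain ⟨η, hη, hne⟩ := hne δ hδ hδ1
  obtain ⟨ε, hε, hεmin⟩ : ∃ ε > 0, ε ≤ min η (δ / 2) := ⟨_, by positivity, le_rfl⟩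
  obtain ⟨hεη, hεδ⟩ := le_min_iff.1 hεmin
  filter_upwards [Metric.tendsto_nhds.1 hlim ε hε,
    (tendsto_inv_Wgraph hE hlim).eventually_le_const hη] with n hn hW
  rw [dist_eq_norm] at hn
  refine sqNorm_flux_arcPt_sub_lt ((hu n).continuousOn_flux hΩ)
    (fun t ht => hballs t ht (Metric.mem_ball_self hr)) (fun t ht => ?_) ?_
  · exact hne hΩ (hu n) ((Metric.ball_subset_ball (by linarith)).trans hball) (hballs t ht) hE
      (sqNorm_circleNormal_arcPt hH.ne' hE P t) (by linarith [hnear t ht, min_le_left d r])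
      ((one_div_le hη (Wgraph_pos _ _)).2 hW) (hn.le.trans hεη)
  · nlinarith [sqNorm_le_of_norm_le (hn.le.trans hεδ)]

lemma exists_subseq_tendsto_flux (h : ¬ ∃ M : ℝ, ∀ n, Wgraph (u n) P ≤ M) :
    ∃ φ : ℕ → ℕ, StrictMono φ ∧
      ∃ E, sqNorm E = 1 ∧ Tendsto (fun n => flux (u (φ n)) P) atTop (nhds E) := by
  have hfreq : ∀ n : ℕ, ∃ᶠ k in atTop, (n : ℝ) ≤ Wgraph (u k) P := fun n hn => by
    have hbdd : IsBoundedUnder (· ≤ ·) atTop fun k => Wgraph (u k) P :=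
      ⟨n, eventually_map.2 (hn.mono fun k hk => (not_le.1 hk).le)⟩
    obtain ⟨M, hM⟩ := hbdd.bddAbove_range
    exact h ⟨M, fun k => hM ⟨k, rfl⟩⟩
  obtain ⟨φ, hφ, hW⟩ := extraction_forall_of_frequently hfreq
  have hWlim : Tendsto (fun n => Wgraph (u (φ n)) P) atTop atTop :=
    tendsto_atTop_mono hW tendsto_natCast_atTop_atTop
  obtain ⟨E, -, ψ, hψ, hlim⟩ := (isCompact_closedBall (0 : ℝ × ℝ) 1).tendsto_subseq
    fun n => mem_closedBall_zero_iff.2 (norm_flux_le_one (u (φ n)) P)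
  refine ⟨φ ∘ ψ, hφ.comp hψ, E, tendsto_nhds_unique ((continuous_sqNorm.tendsto E).comp hlim) ?_,
    hlim⟩
  have hinv := ((tendsto_inv_atTop_zero.comp hWlim).comp hψ.tendsto_atTop).pow 2
  simpa [Function.comp_def, sqNorm_flux] using hinv.const_sub 1

end Propagation

section DivergenceLine

variable {H : ℝ} {Ω K : Set (ℝ × ℝ)} {P Q E : ℝ × ℝ} {u : ℕ → ℝ × ℝ → ℝ}

lemma enorm2_eq_sqrt_sqNorm (v : ℝ × ℝ) : enorm2 v = √(sqNorm v) := rfl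

lemma enorm2_sub_center_eq_iff (hH : 0 < H) (P E Q : ℝ × ℝ) :
    enorm2 (Q - (P + (1 / (2 * H)) • -E)) = 1 / (2 * H) ↔ sqNorm (circleNormal H P E Q) = 1 := by
  have hscale : sqNorm (circleNormal H P E Q) =
      (2 * H) ^ 2 * sqNorm (Q - (P + (1 / (2 * H)) • -E)) := by
    simp only [sqNorm, circleNormal, Prod.fst_sub, Prod.snd_sub, Prod.fst_add, Prod.snd_add,
      Prod.smul_fst, Prod.smul_snd, Prod.fst_neg, Prod.snd_neg, smul_eq_mul]
    field_simp
    ring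
  rw [enorm2_eq_sqrt_sqNorm, Real.sqrt_eq_iff_eq_sq (sqNorm_nonneg _) (by positivity), hscale,
    div_pow, one_pow, eq_div_iff (by positivity), mul_comm]

lemma nontrivial_connectedComponentIn_circle (hH : H ≠ 0) (hE : sqNorm E = 1) (hΩ : IsOpen Ω)
    (hP : P ∈ Ω) :
    (connectedComponentIn ({Q | sqNorm (circleNormal H P E Q) = 1} ∩ Ω) P).Nontrivial := by
  have harc := continuous_arcPt H P E
  obtain ⟨ε, hε, hball⟩ := Metric.isOpen_iff.1 (hΩ.preimage harc) 0
    (mem_preimage.2 ((arcPt_zero H P E).symm ▸ hP))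
  obtain ⟨θ, hθ0, hθ⟩ := exists_between (lt_min hε pi_pos)
  obtain ⟨hθε, hθπ⟩ := lt_min_iff.1 hθ
  have h0 : (0 : ℝ) ∈ Icc 0 θ := left_mem_Icc.2 hθ0.le
  have himage : arcPt H P E '' Icc 0 θ ⊆
      connectedComponentIn ({Q | sqNorm (circleNormal H P E Q) = 1} ∩ Ω) P := by
    refine (isPreconnected_Icc.image _ harc.continuousOn).subset_connectedComponentIn
      ⟨0, h0, arcPt_zero H P E⟩ (image_subset_iff.2 fun t ht => ?_)
    refine ⟨sqNorm_circleNormal_arcPt hH hE P t, hball ?_⟩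
    rw [mem_ball_zero_iff, Real.norm_of_nonneg ht.1]
    exact ht.2.trans_lt hθε
  refine ⟨P, himage ⟨0, h0, arcPt_zero H P E⟩, arcPt H P E θ,
    himage (mem_image_of_mem _ (right_mem_Icc.2 hθ0.le)), fun heq => ?_⟩
  have hdist := sqNorm_arcPt_sub (H := H) hE P θ
  rw [← heq, sub_self, sqNorm_eq_zero.2 rfl, zero_eq_mul, or_iff_right (by positivity)] at hdist
  have hcos := cos_lt_cos_of_nonneg_of_le_pi le_rfl hθπ.le hθ0
  rw [cos_zero] at hcos
  linarith

lemma tendsto_flux_of_mem_connectedComponentIn (hH : 0 < H) (hΩ : IsOpen Ω)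
    (hu : ∀ n, IsCMCSolution H Ω (u n)) (hKΩ : K ⊆ Ω)
    (hK : ∀ Q ∈ K, sqNorm (circleNormal H P E Q) = 1)
    (hP : Tendsto (fun n => flux (u n) P) atTop (nhds E)) (hQ : Q ∈ connectedComponentIn K P) :
    Tendsto (fun n => flux (u n) Q) atTop (nhds (circleNormal H P E Q)) := by
  let Converges : ℝ × ℝ → Prop := fun x =>
    Tendsto (fun n => flux (u n) x) atTop (nhds (circleNormal H P E x))
  have hCK := connectedComponentIn_subset K P
  have hloc : ∀ x ∈ connectedComponentIn K P,
      ∀ᶠ y in nhdsWithin x (connectedComponentIn K P), Converges x ↔ Converges y := by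
    intro x hx
    obtain ⟨ε, hε, hball⟩ := Metric.isOpen_iff.1 hΩ x (hKΩ (hCK hx))
    obtain ⟨d, hd, hprop⟩ := exists_tendsto_flux_circleNormal hH (by positivity : 0 < ε / 4)
    have hstep : ∀ p ∈ K, ∀ q ∈ K, Metric.ball p (2 * (ε / 4)) ⊆ Ω → ‖q - p‖ ≤ d →
        Converges p → Converges q := fun p hp q hq hb hqp hlim => by
      have hpq := circleNormal_circleNormal H P E p q
      have := hprop hΩ hu hb (hK p hp) (hpq.symm ▸ hK q hq) hqp hlim
      rwa [hpq] at this
    filter_upwards [self_mem_nhdsWithin, mem_nhdsWithin_of_mem_nhds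
      (Metric.ball_mem_nhds x (by positivity : 0 < min d (ε / 4)))] with y hyC hy
    obtain ⟨hyd, hyε⟩ := lt_min_iff.1 (Metric.mem_ball.1 hy)
    refine ⟨hstep x (hCK hx) y (hCK hyC) ((Metric.ball_subset_ball (by linarith)).trans hball)
      (dist_eq_norm y x ▸ hyd.le), hstep y (hCK hyC) x (hCK hx)
      ((Metric.ball_subset_ball' (by linarith)).trans hball)
      (dist_eq_norm x y ▸ dist_comm y x ▸ hyd.le)⟩
  have hPK : P ∈ K := by
    by_contra h
    rw [connectedComponentIn_eq_empty h] at hQ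
    exact hQ
  exact (isPreconnected_connectedComponentIn.induction₂ (fun x y => Converges x ↔ Converges y) hloc
    (fun _ _ _ _ _ _ => Iff.trans) (fun _ _ _ _ => Iff.symm) (mem_connectedComponentIn hPK) hQ).1
      (by simpa only [Converges, circleNormal_self] using hP)

lemma tendsto_normalVec_of_tendsto_flux (hH : H ≠ 0) (hQ : sqNorm (circleNormal H P E Q) = 1)
    (h : Tendsto (fun n => flux (u n) Q) atTop (nhds (circleNormal H P E Q))) :
    Tendsto (fun n => normalVec (u n) Q) atTop
      (nhds (2 * H * ((P + (1 / (2 * H)) • -E).1 - Q.1),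
        2 * H * ((P + (1 / (2 * H)) • -E).2 - Q.2), 0)) := by
  have hnormal : (fun n => normalVec (u n) Q) =
      fun n => (-(flux (u n) Q).1, -(flux (u n) Q).2, 1 / Wgraph (u n) Q) := by
    simp only [normalVec, flux, neg_div]
  have hcenter : (2 * H) • (P + (1 / (2 * H)) • -E - Q) = -circleNormal H P E Q := by
    rw [circleNormal, smul_sub, smul_add, smul_smul, mul_one_div_cancel (by simpa using hH)]
    module
  obtain ⟨hfst, hsnd⟩ := Prod.ext_iff.1 hcenter
  rw [hnormal]
  convert h.fst_nhds.neg.prodMk_nhds (h.snd_nhds.neg.prodMk_nhds (tendsto_inv_Wgraph hQ h)) using 3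
  exacts [hfst, Prod.mk_inj.2 ⟨hsnd, rfl⟩]

end DivergenceLine

theorem stmt_7_general {H : ℝ} (hH : 0 < H) {Ω : Set (ℝ × ℝ)} (hΩ : IsOpen Ω)
    {u : ℕ → ℝ × ℝ → ℝ} (hu : ∀ n, IsCMCSolution H Ω (u n)) {P : ℝ × ℝ} (hP : P ∈ Ω)
    (hPdiv : ¬ ∃ M : ℝ, ∀ n, Wgraph (u n) P ≤ M) :
    ∃ N : ℝ × ℝ, enorm2 N = 1 ∧
      IsDivergenceLine H Ω u
        (connectedComponentIn
          ({q : ℝ × ℝ | enorm2 (q - (P + (1 / (2 * H)) • N)) = 1 / (2 * H)} ∩ Ω) P) := by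
  obtain ⟨φ, hφ, E, hE, hlim⟩ := exists_subseq_tendsto_flux hPdiv
  have hcircle : {q : ℝ × ℝ | enorm2 (q - (P + (1 / (2 * H)) • -E)) = 1 / (2 * H)} =
      {Q | sqNorm (circleNormal H P E Q) = 1} := Set.ext (enorm2_sub_center_eq_iff hH P E)
  refine ⟨-E, by simpa [enorm2, sqNorm] using hE, ?_⟩
  have hsub := connectedComponentIn_subset ({Q | sqNorm (circleNormal H P E Q) = 1} ∩ Ω) P
  have hP' : P ∈ {Q | sqNorm (circleNormal H P E Q) = 1} ∩ Ω :=
    ⟨(congrArg sqNorm (circleNormal_self H P E)).trans hE, hP⟩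
  rw [hcircle]
  refine ⟨P + (1 / (2 * H)) • -E, hsub.trans inter_subset_right,
    fun q hq => (enorm2_sub_center_eq_iff hH P E q).2 (hsub hq).1,
    isConnected_connectedComponentIn_iff.2 hP',
    nontrivial_connectedComponentIn_circle hH.ne' hE hΩ hP, φ, hφ, fun Q hQ => ?_⟩
  exact tendsto_normalVec_of_tendsto_flux hH.ne' (hsub hQ).1
    (tendsto_flux_of_mem_connectedComponentIn hH hΩ (fun n => hu (φ n)) inter_subset_right
      (fun _ hq => hq.1) hlim hQ)

/-- every point of `Ω` outside the convergence domain lies on a divergence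
line: an arc of circle of radius `1/(2H)` contained in `Ω` through `P`. -/
theorem stmt_7 (H : ℝ) (hH : 0 < H) (Ω : Set (ℝ × ℝ)) (hΩ : IsOpen Ω)
    (hΩconn : IsConnected Ω) (u : ℕ → ℝ × ℝ → ℝ)
    (hu : ∀ n, IsCMCSolution H Ω (u n))
    (P : ℝ × ℝ) (hP : P ∈ Ω) (hPdiv : ¬ ∃ M : ℝ, ∀ n, Wgraph (u n) P ≤ M) :
    ∃ N : ℝ × ℝ, enorm2 N = 1 ∧
      IsDivergenceLine H Ω u
        (connectedComponentIn
          ({q : ℝ × ℝ | enorm2 (q - (P + (1 / (2 * H)) • N)) = 1 / (2 * H)} ∩ Ω) P) :=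
  stmt_7_general hH hΩ hu hP hPdiv
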